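/- Sharp fractional Sobolev inequality on ℝⁿ: Let n ≥ 1 be an integer, s ∈ (0, n) and q⋆ = 2n/(n−s). For every real-valued Schwartz function f on ℝⁿ, ( ∫_{ℝⁿ} |f|^{q⋆} dx )^{2/q⋆} ≤ S_{n,s} · ‖f‖²_{Ḣ^{s/2}} where S_{n,s} = (Γ((n−s)/2)/Γ((n+s)/2)) · |Sⁿ|^{−s/n}. Moreover S_{n,s} is optimal: for every S < S_{n,s} there is a Schwartz function f for which the inequality with S in place of S_{n,s} fails. -/

import Mathlib

open MeasureTheory Real SchwartzMap
open scoped FourierTransform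

/-- The homogeneous Sobolev seminorm squared `‖f‖²_{Ḣ^{s/2}}` of a Schwartz function
`f` on `ℝⁿ`, written via the Fourier transform. -/
noncomputable def homogSobolevNormSq (n : ℕ) (s : ℝ)
    (f : SchwartzMap (EuclideanSpace ℝ (Fin n)) ℝ) : ℝ :=
  ∫ ξ : EuclideanSpace ℝ (Fin n),
    (2 * π * ‖ξ‖) ^ s * ‖𝓕 (fun x => (f x : ℂ)) ξ‖ ^ 2

/-!
The inequality is dual to the Hardy–Littlewood–Sobolev inequality for the Riesz kernel
`‖x - y‖ ^ (-(n - s))`, and stereographic projection turns the latter into an inequality on the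
sphere, between the energy `∬ u(x) u(y) k(x, y)` and the `p`-norm of `u`, `p = 2n / (n + s)`, in
which constants should be optimal. On the sphere, every inversion of `ℝⁿ` acts as a conformal
reflection, and polarizing a density along it preserves the `p`-norm and a uniform bound on the
density, and decreases neither the energy nor the mass `∫ u`. Given a bounded density `g`, weak-*
compactness yields a density `u` of largest mass among those with the bounds of `g` and at least
the energy of `g`. Polarization cannot increase the mass of `u`, so `u` dominates its reflections
under all inversions that contract the sphere at the given point; letting these approach isometries
shows that `u` is constant, and for a constant the energy is explicit.

Optimality is tested on the extremals `(1 + ‖x‖ ^ 2) ^ (-(n - s) / 2)`, made Schwartz by the factor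
`exp (-e ‖x‖ ^ 2)`, as `e → 0`. These functions and the Riesz kernel are superpositions of
Gaussians, which reduces all Fourier computations to Gaussian ones.
-/

namespace SharpSobolev

open Filter Topology EuclideanGeometry
open scoped ENNReal

/-! ### Polarization along a conformal reflection -/

section Polarization

variable {X : Type*} [MeasurableSpace X]

/-- The energy `∬ u(x) u(y) k(x, y) dμ(x) dμ(y)` of a density `u` with respect to a kernel `k`. -/
noncomputable def energy (μ : Measure X) (k : X → X → ℝ≥0∞) (u : X → ℝ≥0∞) : ℝ≥0∞ :=
  ∫⁻ x, ∫⁻ y, u x * u y * k x y ∂μ ∂μ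

/-- An involution `map` of `X` that is conformal with factor `factor`: it transforms `μ` with
Jacobian `factor ^ (α + β)` and the kernel `k` with weight `factor ^ β` in each variable. It
separates `{factor < 1}` from `{1 < factor}`, and `k` is larger between points of one side than
between a point and the reflection of the other. The pointwise laws are imposed on a conull set
`domain`. -/
structure ConformalReflection (μ : Measure X) (k : X → X → ℝ≥0∞) (α β : ℝ) where
  map : X → X
  factor : X → ℝ≥0∞
  domain : Set X
  alpha_pos : 0 < α
  beta_pos : 0 < β
  measurable_map : Measurable map
  measurable_factor : Measurable factor
  ae_mem_domain : ∀ᵐ x ∂μ, x ∈ domain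
  map_mem_domain : ∀ x ∈ domain, map x ∈ domain
  involutive_map : Function.Involutive map
  factor_mul_factor_map : ∀ x ∈ domain, factor x * factor (map x) = 1
  factor_ne_one : ∀ x ∈ domain, factor x ≠ 1
  lintegral_comp_map : ∀ g : X → ℝ≥0∞, Measurable g →
    ∫⁻ x, g (map x) * factor x ^ (α + β) ∂μ = ∫⁻ x, g x ∂μ
  kernel_map_map : ∀ x ∈ domain, ∀ y ∈ domain,
    k (map x) (map y) * factor x ^ β * factor y ^ β = k x y
  kernel_map_le : ∀ x ∈ domain, ∀ y ∈ domain, (factor x < 1 ↔ factor y < 1) →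
    k (map x) y * factor x ^ β ≤ k x y
  le_kernel_map : ∀ x ∈ domain, ∀ y ∈ domain, ¬(factor x < 1 ↔ factor y < 1) →
    k x y ≤ k (map x) y * factor x ^ β

/-- The contribution to the energy of a pair of points and their mirror images: `a`, `a'` and
`b`, `b'` are the values of the density, `c` the kernel on the same side, `c'` across. -/
noncomputable def twoPointEnergy (a a' b b' c c' : ℝ≥0∞) : ℝ≥0∞ :=
  (a * b + a' * b') * c + (a' * b + a * b') * c'

lemma twoPointEnergy_swap_left (a a' b b' c c' : ℝ≥0∞) :
    twoPointEnergy a a' b b' c c' = twoPointEnergy a' a b b' c' c :=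
  add_comm _ _

lemma twoPointEnergy_swap_right (a a' b b' c c' : ℝ≥0∞) :
    twoPointEnergy a a' b b' c c' = twoPointEnergy a a' b' b c' c := by
  unfold twoPointEnergy; ring

lemma mul_add_mul_le_mul_add_mul_of_le {a a' b b' : ℝ≥0∞} (ha : a ≤ a') (hb : b ≤ b') :
    a * b' + a' * b ≤ a' * b' + a * b := by
  obtain ⟨d, rfl⟩ := exists_add_of_le ha
  obtain ⟨e, rfl⟩ := exists_add_of_le hb
  calc a * (b + e) + (a + d) * b ≤ a * (b + e) + (a + d) * b + d * e := le_self_add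
    _ = (a + d) * (b + e) + a * b := by ring

lemma mul_add_mul_le_max_mul_max_add_min_mul_min (a a' b b' : ℝ≥0∞) :
    a * b + a' * b' ≤ max a a' * max b b' + min a a' * min b b' := by
  rcases le_total a a' with ha | ha <;> rcases le_total b b' with hb | hb <;>
    simp only [ha, hb, max_eq_left, max_eq_right, min_eq_left, min_eq_right]
  · rw [add_comm]
  · exact mul_add_mul_le_mul_add_mul_of_le ha hb
  · rw [add_comm]; exact mul_add_mul_le_mul_add_mul_of_le ha hb
  · rfl

lemma twoPointEnergy_le_max_min {c c' : ℝ≥0∞} (hc : c' ≤ c) (a a' b b' : ℝ≥0∞) :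
    twoPointEnergy a a' b b' c c' ≤
      twoPointEnergy (max a a') (min a a') (max b b') (min b b') c c' := by
  obtain ⟨d, rfl⟩ := exists_add_of_le hc
  have expand (a a' b b' : ℝ≥0∞) : twoPointEnergy a a' b b' (c' + d) c' =
      (a + a') * (b + b') * c' + (a * b + a' * b') * d := by unfold twoPointEnergy; ring
  rw [expand, expand, max_add_min, max_add_min]
  exact add_le_add le_rfl
    (mul_le_mul_left (mul_add_mul_le_max_mul_max_add_min_mul_min a a' b b') d)

lemma add_mul_le_max_add_min_mul {t : ℝ≥0∞} (ht : t ≤ 1) (a b : ℝ≥0∞) :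
    a + b * t ≤ max a b + min a b * t := by
  simpa only [mul_one, max_eq_left ht, min_eq_right ht] using
    mul_add_mul_le_max_mul_max_add_min_mul_min a b 1 t

lemma add_mul_le_min_add_max_mul {t : ℝ≥0∞} (ht : 1 ≤ t) (a b : ℝ≥0∞) :
    a + b * t ≤ min a b + max a b * t := by
  simpa only [mul_one, max_eq_right ht, min_eq_left ht, add_comm (max a b * t)] using
    mul_add_mul_le_max_mul_max_add_min_mul_min a b 1 t

lemma measurable_lintegral_mul_kernel {μ : Measure X} [SFinite μ] {k : X → X → ℝ≥0∞}
    {u v : X → ℝ≥0∞} (hk : Measurable (Function.uncurry k)) (hu : Measurable u)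
    (hv : Measurable v) : Measurable fun x => ∫⁻ y, u x * v y * k x y ∂μ :=
  Measurable.lintegral_prod_right' (f := fun q : X × X => u q.1 * v q.2 * k q.1 q.2)
    (((hu.comp measurable_fst).mul (hv.comp measurable_snd)).mul hk)

namespace ConformalReflection

variable {μ : Measure X} {k : X → X → ℝ≥0∞} {α β : ℝ} (R : ConformalReflection μ k α β)

/-- The action of a conformal reflection on densities, weighted so as to preserve the
`(α + β) / α`-norm. -/
noncomputable def reflect (u : X → ℝ≥0∞) (x : X) : ℝ≥0∞ :=
  u (R.map x) * R.factor x ^ α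

open scoped Classical in
/-- The polarization of a density: the larger of the density and its reflection is placed on the
side `{factor < 1}`. -/
noncomputable def polarize (u : X → ℝ≥0∞) (x : X) : ℝ≥0∞ :=
  if R.factor x < 1 then max (u x) (R.reflect u x) else min (u x) (R.reflect u x)

/-- The kernel between the mirror image of the first point and the second point. -/
noncomputable def mirrorKernel (x y : X) : ℝ≥0∞ :=
  k (R.map x) y * R.factor x ^ β

variable {u : X → ℝ≥0∞} {x : X}

lemma measurable_reflect (hu : Measurable u) : Measurable (R.reflect u) :=
  (hu.comp R.measurable_map).mul (R.measurable_factor.pow_const α)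

lemma measurable_polarize (hu : Measurable u) : Measurable (R.polarize u) := by
  classical
  exact Measurable.ite (measurableSet_lt R.measurable_factor measurable_const)
    (hu.max (R.measurable_reflect hu)) (hu.min (R.measurable_reflect hu))

lemma measurable_mirrorKernel (hk : Measurable (Function.uncurry k)) :
    Measurable (Function.uncurry R.mirrorKernel) :=
  (hk.comp ((R.measurable_map.comp measurable_fst).prodMk measurable_snd)).mul
    ((R.measurable_factor.comp measurable_fst).pow_const β)

lemma factor_ne_top (hx : x ∈ R.domain) : R.factor x ≠ ∞ := by
  rw [ENNReal.eq_inv_of_mul_eq_one_left (R.factor_mul_factor_map x hx), ENNReal.inv_ne_top]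
  exact right_ne_zero_of_mul_eq_one (R.factor_mul_factor_map x hx)

lemma factor_map_lt_one_iff (hx : x ∈ R.domain) : R.factor (R.map x) < 1 ↔ 1 < R.factor x := by
  rw [ENNReal.eq_inv_of_mul_eq_one_left (R.factor_mul_factor_map x hx), ENNReal.one_lt_inv]

lemma factor_rpow_mul_factor_map_rpow (hx : x ∈ R.domain) {γ : ℝ} (hγ : 0 < γ) :
    R.factor x ^ γ * R.factor (R.map x) ^ γ = 1 := by
  rw [← ENNReal.mul_rpow_of_nonneg _ _ hγ.le, R.factor_mul_factor_map x hx, ENNReal.one_rpow]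

lemma reflect_reflect (hx : x ∈ R.domain) : R.reflect (R.reflect u) x = u x := by
  rw [reflect, reflect, R.involutive_map x, mul_assoc, mul_comm (R.factor _ ^ α),
    R.factor_rpow_mul_factor_map_rpow hx R.alpha_pos, mul_one]

open scoped Classical in
lemma reflect_polarize (hx : x ∈ R.domain) :
    R.reflect (R.polarize u) x =
      if R.factor x < 1 then min (u x) (R.reflect u x) else max (u x) (R.reflect u x) := by
  have hmono : Monotone (· * R.factor x ^ α) := fun _ _ h => mul_le_mul_left h _
  have hside : R.factor (R.map x) < 1 ↔ ¬ R.factor x < 1 := by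
    rw [R.factor_map_lt_one_iff hx, not_lt,
      (R.factor_ne_one x hx).symm.le_iff_lt]
  have hinv : R.reflect u (R.map x) * R.factor x ^ α = u x := R.reflect_reflect hx
  rw [reflect, polarize]
  by_cases hlt : R.factor x < 1
  · rw [if_neg (by tauto), if_pos hlt, min_comm (u x), ← hinv]
    exact hmono.map_min
  · rw [if_pos (by tauto), if_neg hlt, max_comm (u x), ← hinv]
    exact hmono.map_max

lemma lintegral_reflect_mul (hu : Measurable u) :
    ∫⁻ x, R.reflect u x * R.factor x ^ β ∂μ = ∫⁻ x, u x ∂μ := by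
  simp_rw [← R.lintegral_comp_map u hu, reflect, mul_assoc,
    ENNReal.rpow_add_of_nonneg _ _ R.alpha_pos.le R.beta_pos.le]

lemma kernel_map_right {y : X} (hx : x ∈ R.domain) (hy : y ∈ R.domain) :
    k x (R.map y) * R.factor y ^ β = R.mirrorKernel x y := by
  have h := R.kernel_map_map x hx (R.map y) (R.map_mem_domain y hy)
  rw [R.involutive_map y] at h
  rw [← h, mul_assoc, mul_comm (R.factor (R.map y) ^ β),
    R.factor_rpow_mul_factor_map_rpow hy R.beta_pos, mul_one, mirrorKernel]

section Energy

lemma energy_eq_lintegral_mul_reflect (hk : Measurable (Function.uncurry k)) (hu : Measurable u) :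
    energy μ k u = ∫⁻ x, ∫⁻ y, u x * R.reflect u y * R.mirrorKernel x y ∂μ ∂μ := by
  refine lintegral_congr_ae ?_
  filter_upwards [R.ae_mem_domain] with x hx
  have hkx : Measurable (k x) := hk.comp measurable_prodMk_left
  rw [← R.lintegral_comp_map _ (by fun_prop)]
  refine lintegral_congr_ae ?_
  filter_upwards [R.ae_mem_domain] with y hy
  rw [← R.kernel_map_right hx hy, reflect,
    ENNReal.rpow_add_of_nonneg _ _ R.alpha_pos.le R.beta_pos.le]
  ring

variable [SFinite μ]

lemma energy_eq_lintegral_reflect_mul (hk : Measurable (Function.uncurry k)) (hu : Measurable u) :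
    energy μ k u = ∫⁻ x, ∫⁻ y, R.reflect u x * u y * R.mirrorKernel x y ∂μ ∂μ := by
  rw [energy, ← R.lintegral_comp_map _ (measurable_lintegral_mul_kernel hk hu hu)]
  refine lintegral_congr fun x => ?_
  have hkx : Measurable (k (R.map x)) := hk.comp measurable_prodMk_left
  rw [← lintegral_mul_const _ (by fun_prop)]
  refine lintegral_congr fun y => ?_
  rw [reflect, mirrorKernel, ENNReal.rpow_add_of_nonneg _ _ R.alpha_pos.le R.beta_pos.le]
  ring

lemma energy_reflect (hk : Measurable (Function.uncurry k)) (hu : Measurable u) :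
    energy μ k (R.reflect u) = energy μ k u := by
  rw [R.energy_eq_lintegral_mul_reflect hk (R.measurable_reflect hu),
    R.energy_eq_lintegral_reflect_mul hk hu]
  refine lintegral_congr fun x => lintegral_congr_ae ?_
  filter_upwards [R.ae_mem_domain] with y hy
  rw [R.reflect_reflect hy]

lemma four_mul_energy (hk : Measurable (Function.uncurry k)) (hu : Measurable u) :
    4 * energy μ k u = ∫⁻ x, ∫⁻ y, twoPointEnergy (u x) (R.reflect u x) (u y) (R.reflect u y)
      (k x y) (R.mirrorKernel x y) ∂μ ∂μ := by
  have hru := R.measurable_reflect hu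
  have hmk := R.measurable_mirrorKernel hk
  have split (x : X) : ∫⁻ y, twoPointEnergy (u x) (R.reflect u x) (u y) (R.reflect u y)
      (k x y) (R.mirrorKernel x y) ∂μ =
      ((∫⁻ y, u x * u y * k x y ∂μ) + ∫⁻ y, R.reflect u x * R.reflect u y * k x y ∂μ) +
      ((∫⁻ y, R.reflect u x * u y * R.mirrorKernel x y ∂μ) +
        ∫⁻ y, u x * R.reflect u y * R.mirrorKernel x y ∂μ) := by
    have hkx : Measurable (k x) := hk.comp measurable_prodMk_left
    have hmkx : Measurable (R.mirrorKernel x) := hmk.comp measurable_prodMk_left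
    simp only [twoPointEnergy, add_mul]
    rw [lintegral_add_left (by fun_prop), lintegral_add_left (by fun_prop),
      lintegral_add_left (by fun_prop)]
  have m₁ := measurable_lintegral_mul_kernel (μ := μ) hk hu hu
  have m₂ := measurable_lintegral_mul_kernel (μ := μ) hk hru hru
  simp only [split]
  have m₁₂ : Measurable fun x => (∫⁻ y, u x * u y * k x y ∂μ) +
      ∫⁻ y, R.reflect u x * R.reflect u y * k x y ∂μ := m₁.add m₂
  rw [lintegral_add_left m₁₂, lintegral_add_left m₁,
    lintegral_add_left (measurable_lintegral_mul_kernel hmk hru hu),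
    ← R.energy_eq_lintegral_reflect_mul hk hu, ← R.energy_eq_lintegral_mul_reflect hk hu,
    ← energy, ← energy, R.energy_reflect hk hu]
  ring

theorem energy_le_energy_polarize (hk : Measurable (Function.uncurry k)) (hu : Measurable u) :
    energy μ k u ≤ energy μ k (R.polarize u) := by
  rw [← ENNReal.mul_le_mul_iff_right four_ne_zero ENNReal.ofNat_ne_top,
    R.four_mul_energy hk hu, R.four_mul_energy hk (R.measurable_polarize hu)]
  refine lintegral_mono_ae ?_
  filter_upwards [R.ae_mem_domain] with x hx
  refine lintegral_mono_ae ?_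
  filter_upwards [R.ae_mem_domain] with y hy
  rw [R.reflect_polarize hx, R.reflect_polarize hy]
  unfold polarize
  by_cases hx1 : R.factor x < 1 <;> by_cases hy1 : R.factor y < 1 <;>
    simp only [hx1, hy1, if_true, if_false]
  · exact twoPointEnergy_le_max_min (R.kernel_map_le x hx y hy (by tauto)) _ _ _ _
  · rw [twoPointEnergy_swap_right, twoPointEnergy_swap_right (max _ _), min_comm (u y),
      max_comm (u y)]
    exact twoPointEnergy_le_max_min (R.le_kernel_map x hx y hy (by tauto)) _ _ _ _
  · rw [twoPointEnergy_swap_left, twoPointEnergy_swap_left (min _ _), min_comm (u x),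
      max_comm (u x)]
    exact twoPointEnergy_le_max_min (R.le_kernel_map x hx y hy (by tauto)) _ _ _ _
  · rw [twoPointEnergy_swap_left (min _ _), twoPointEnergy_swap_right (max _ _)]
    exact twoPointEnergy_le_max_min (R.kernel_map_le x hx y hy (by tauto)) _ _ _ _

end Energy

lemma polarize_le {C : ℝ≥0∞} (hC : ∀ x, u x ≤ C) (x : X) : R.polarize u x ≤ C := by
  unfold polarize
  split_ifs with hlt
  · refine max_le (hC x) ?_
    calc R.reflect u x ≤ C * 1 :=
          mul_le_mul' (hC _) (ENNReal.rpow_le_one hlt.le R.alpha_pos.le)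
      _ = C := mul_one C
  · exact (min_le_left _ _).trans (hC x)

lemma lintegral_reflect_rpow (hu : Measurable u) :
    ∫⁻ x, R.reflect u x ^ ((α + β) / α) ∂μ = ∫⁻ x, u x ^ ((α + β) / α) ∂μ := by
  have hα := R.alpha_pos
  have hp : 0 ≤ (α + β) / α := by have := R.beta_pos; positivity
  rw [← R.lintegral_comp_map (fun x => u x ^ ((α + β) / α)) (by fun_prop)]
  refine lintegral_congr fun x => ?_
  rw [reflect, ENNReal.mul_rpow_of_nonneg _ _ hp, ← ENNReal.rpow_mul, mul_div_cancel₀ _ hα.ne']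

lemma lintegral_polarize_rpow (hu : Measurable u) :
    ∫⁻ x, R.polarize u x ^ ((α + β) / α) ∂μ = ∫⁻ x, u x ^ ((α + β) / α) ∂μ := by
  have double {u : X → ℝ≥0∞} (hu : Measurable u) : 2 * ∫⁻ x, u x ^ ((α + β) / α) ∂μ =
      ∫⁻ x, (u x ^ ((α + β) / α) + R.reflect u x ^ ((α + β) / α)) ∂μ := by
    rw [lintegral_add_left (by fun_prop), R.lintegral_reflect_rpow hu, two_mul]
  rw [← ENNReal.mul_right_inj two_ne_zero ENNReal.ofNat_ne_top, double hu,
    double (R.measurable_polarize hu)]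
  refine lintegral_congr_ae ?_
  filter_upwards [R.ae_mem_domain] with x hx
  rw [R.reflect_polarize hx, polarize]
  split_ifs <;> rcases le_total (u x) (R.reflect u x) with h | h <;> simp [h, add_comm]

lemma two_mul_lintegral (hu : Measurable u) :
    2 * ∫⁻ x, u x ∂μ = ∫⁻ x, (u x + R.reflect u x * R.factor x ^ β) ∂μ := by
  rw [lintegral_add_left hu, R.lintegral_reflect_mul hu, two_mul]

lemma add_reflect_mul_le_polarize (hx : x ∈ R.domain) :
    u x + R.reflect u x * R.factor x ^ β ≤
      R.polarize u x + R.reflect (R.polarize u) x * R.factor x ^ β := by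
  rw [R.reflect_polarize hx, polarize]
  split_ifs with hlt
  · exact add_mul_le_max_add_min_mul (ENNReal.rpow_le_one hlt.le R.beta_pos.le) _ _
  · exact add_mul_le_min_add_max_mul (ENNReal.one_le_rpow (not_lt.1 hlt) R.beta_pos) _ _

/-- The strict form of `add_reflect_mul_le_polarize`, contraposed. -/
lemma reflect_le_of_add_reflect_mul_eq (hx : x ∈ R.domain) (hlt : R.factor x < 1)
    (hu : ∀ y, u y ≠ ∞) (heq : u x + R.reflect u x * R.factor x ^ β =
      R.polarize u x + R.reflect (R.polarize u) x * R.factor x ^ β) :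
    R.reflect u x ≤ u x := by
  by_contra! hux
  have htop : R.reflect u x ≠ ∞ := ENNReal.mul_ne_top (hu _)
    (ENNReal.rpow_ne_top_of_nonneg R.alpha_pos.le (R.factor_ne_top hx))
  have ht : R.factor x ^ β < 1 := ENNReal.rpow_lt_one hlt R.beta_pos
  rw [R.reflect_polarize hx, polarize, if_pos hlt, if_pos hlt, max_eq_right hux.le,
    min_eq_left hux.le] at heq
  lift u x to NNReal using hu x with a
  lift R.reflect u x to NNReal using htop with b
  lift R.factor x ^ β to NNReal using ht.ne_top with t
  norm_cast at heq hux ht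
  have := NNReal.coe_inj.2 heq
  push_cast at this
  have hab : (a : ℝ) < b := hux
  have ht1 : (t : ℝ) < 1 := ht
  nlinarith [hab, ht1]

theorem ae_reflect_le_of_lintegral_polarize_le (hu : Measurable u) (hu_top : ∀ x, u x ≠ ∞)
    (hu_fin : ∫⁻ x, u x ∂μ ≠ ∞) (hmax : ∫⁻ x, R.polarize u x ∂μ ≤ ∫⁻ x, u x ∂μ) :
    ∀ᵐ x ∂μ, R.factor x < 1 → R.reflect u x ≤ u x := by
  have hpol := R.measurable_polarize hu
  have hrpol := R.measurable_reflect hpol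
  have hfac := R.measurable_factor
  have heq := ae_eq_of_ae_le_of_lintegral_le (μ := μ)
    (f := fun x => u x + R.reflect u x * R.factor x ^ β)
    (g := fun x => R.polarize u x + R.reflect (R.polarize u) x * R.factor x ^ β)
    (R.ae_mem_domain.mono fun x hx => R.add_reflect_mul_le_polarize hx)
    (by rw [← R.two_mul_lintegral hu]; finiteness) (by fun_prop)
    (by rw [← R.two_mul_lintegral hu, ← R.two_mul_lintegral hpol]; gcongr)
  filter_upwards [heq, R.ae_mem_domain] with x hx hxd hlt
  exact R.reflect_le_of_add_reflect_mul_eq hxd hlt hu_top hx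

end ConformalReflection

end Polarization

/-! ### Weak-* sequential compactness of bounded densities -/

section WeakStar

variable {X : Type*} [MeasurableSpace X] {μ : Measure X} {C : ℝ}

/-- Convergence against every integrable test function: weak-* convergence in `L^∞`, the dual
of `L¹`. -/
def WeakStarTendsto (μ : Measure X) (f : ℕ → X → ℝ) (F : X → ℝ) : Prop :=
  ∀ g : X → ℝ, Integrable g μ →
    Tendsto (fun k => ∫ x, f k x * g x ∂μ) atTop (𝓝 (∫ x, F x * g x ∂μ))

lemma exists_subseq_tendsto_inner {H : Type*} [NormedAddCommGroup H] [InnerProductSpace ℝ H]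
    [CompleteSpace H] [TopologicalSpace.SeparableSpace H] {u : ℕ → H} (hu : ∀ k, ‖u k‖ ≤ C) :
    ∃ v : H, ∃ φ : ℕ → ℕ, StrictMono φ ∧
      ∀ w, Tendsto (fun k => inner ℝ (u (φ k)) w) atTop (𝓝 (inner ℝ v w)) := by
  let T := InnerProductSpace.toDual ℝ H
  have hmem (k : ℕ) : StrongDual.toWeakDual (T (u k)) ∈
      WeakDual.toStrongDual ⁻¹' Metric.closedBall (0 : StrongDual ℝ H) C :=
    mem_closedBall_zero_iff.2 ((T.norm_map (u k)).trans_le (hu k))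
  obtain ⟨L, -, φ, hφ, hL⟩ := WeakDual.isSeqCompact_closedBall ℝ H 0 C hmem
  refine ⟨T.symm (WeakDual.toStrongDual L), φ, hφ, fun w => ?_⟩
  rw [InnerProductSpace.toDual_symm_apply]
  exact ((WeakDual.eval_continuous w).tendsto L).comp hL

lemma memLp_of_mem_Icc [IsFiniteMeasure μ] {u : X → ℝ} (hu : Measurable u)
    (huC : ∀ x, u x ∈ Set.Icc 0 C) (p : ℝ≥0∞) : MemLp u p μ :=
  MemLp.of_bound hu.aestronglyMeasurable C (.of_forall fun x => by
    rw [norm_of_nonneg (huC x).1]; exact (huC x).2)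

lemma exists_subseq_tendsto_setIntegral [IsFiniteMeasure μ] [IsSeparable μ] {f : ℕ → X → ℝ}
    (hf : ∀ k, Measurable (f k)) (hfC : ∀ k x, f k x ∈ Set.Icc 0 C) :
    ∃ F : X → ℝ, Integrable F μ ∧ ∃ φ : ℕ → ℕ, StrictMono φ ∧ ∀ s, MeasurableSet s →
      Tendsto (fun k => ∫ x in s, f (φ k) x ∂μ) atTop (𝓝 (∫ x in s, F x ∂μ)) := by
  have : Fact ((2 : ℝ≥0∞) ≠ ∞) := ⟨by simp⟩
  have hf2 (k : ℕ) : MemLp (f k) 2 μ := memLp_of_mem_Icc (hf k) (hfC k) 2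
  have hbound (k : ℕ) : ‖(hf2 k).toLp‖ ≤ ‖(memLp_const C : MemLp (fun _ => C) 2 μ).toLp‖ := by
    refine Lp.norm_le_norm_of_ae_le ?_
    filter_upwards [(hf2 k).coeFn_toLp, (memLp_const C : MemLp (fun _ => C) 2 μ).coeFn_toLp]
      with x hx hCx
    rw [hx, hCx, norm_of_nonneg (hfC k x).1]
    exact (hfC k x).2.trans (le_abs_self C)
  obtain ⟨F, φ, hφ, hF⟩ := exists_subseq_tendsto_inner hbound
  refine ⟨F, (Lp.memLp F).integrable (by simp), φ, hφ, fun s hs => ?_⟩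
  have h := hF (indicatorConstLp 2 hs (measure_ne_top μ s) (1 : ℝ))
  simp only [real_inner_comm (indicatorConstLp 2 hs (measure_ne_top μ s) (1 : ℝ)),
    L2.inner_indicatorConstLp_one] at h
  exact h.congr fun k => setIntegral_congr_ae hs ((hf2 (φ k)).coeFn_toLp.mono fun x hx _ => hx)

lemma integrable_mul_of_mem_Icc {u g : X → ℝ} (hu : Measurable u)
    (huC : ∀ x, u x ∈ Set.Icc 0 C) (hg : Integrable g μ) : Integrable (fun x => u x * g x) μ :=
  hg.bdd_mul hu.aestronglyMeasurable (.of_forall fun x => by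
    rw [norm_of_nonneg (huC x).1]; exact (huC x).2)

lemma lipschitzWith_integral_mul {u : X → ℝ} (hu : Measurable u)
    (huC : ∀ x, u x ∈ Set.Icc 0 C) :
    LipschitzWith C.toNNReal fun g : X →₁[μ] ℝ => ∫ x, u x * g x ∂μ := by
  refine LipschitzWith.of_dist_le' fun g h => ?_
  have hg := L1.integrable_coeFn g
  have hh := L1.integrable_coeFn h
  calc dist (∫ x, u x * g x ∂μ) (∫ x, u x * h x ∂μ)
      = ‖∫ x, u x * (g x - h x) ∂μ‖ := by
        simp only [dist_eq_norm, mul_sub]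
        rw [integral_sub (integrable_mul_of_mem_Icc hu huC hg)
          (integrable_mul_of_mem_Icc hu huC hh)]
    _ ≤ ∫ x, C * ‖g x - h x‖ ∂μ :=
        norm_integral_le_of_norm_le ((hg.sub hh).norm.const_mul C) (.of_forall fun x => by
          rw [norm_mul, norm_of_nonneg (huC x).1]; gcongr; exact (huC x).2)
    _ = C * dist g h := by
        rw [integral_const_mul, dist_eq_norm, L1.norm_eq_integral_norm]
        congr 1
        exact integral_congr_ae ((Lp.coeFn_sub g h).mono fun x hx => by
          simp only [hx, Pi.sub_apply])

lemma WeakStarTendsto.of_tendsto_setIntegral {f : ℕ → X → ℝ} {F : X → ℝ}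
    (hf : ∀ k, Measurable (f k)) (hfC : ∀ k x, f k x ∈ Set.Icc 0 C) (hF : Measurable F)
    (hFC : ∀ x, F x ∈ Set.Icc 0 C)
    (h : ∀ s, MeasurableSet s →
      Tendsto (fun k => ∫ x in s, f k x ∂μ) atTop (𝓝 (∫ x in s, F x ∂μ))) :
    WeakStarTendsto μ f F := by
  refine fun g hg => Integrable.induction (fun g : X → ℝ =>
    Tendsto (fun k => ∫ x, f k x * g x ∂μ) atTop (𝓝 (∫ x, F x * g x ∂μ))) ?_ ?_ ?_ ?_ hg
  · intro c s hs _
    have hmul (u : X → ℝ) :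
        ∫ x, u x * s.indicator (fun _ => c) x ∂μ = (∫ x in s, u x ∂μ) * c := by
      rw [← integral_mul_const, ← integral_indicator hs]
      simp only [Set.indicator_mul_right s u]
    simpa only [hmul] using (h s hs).mul_const c
  · intro g₁ g₂ _ hg₁ hg₂ h₁ h₂
    have hadd {u : X → ℝ} (hu : Measurable u) (huC : ∀ x, u x ∈ Set.Icc 0 C) :
        ∫ x, u x * (g₁ + g₂) x ∂μ = ∫ x, u x * g₁ x ∂μ + ∫ x, u x * g₂ x ∂μ := by
      simp only [Pi.add_apply, mul_add]
      exact integral_add (integrable_mul_of_mem_Icc hu huC hg₁)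
        (integrable_mul_of_mem_Icc hu huC hg₂)
    simpa only [hadd hF hFC, hadd (hf _) (hfC _)] using h₁.add h₂
  · exact (LipschitzWith.uniformEquicontinuous _ _ fun k =>
      lipschitzWith_integral_mul (hf k) (hfC k)).equicontinuous.isClosed_setOfPred_tendsto
        (lipschitzWith_integral_mul hF hFC).continuous
  · intro g₁ g₂ hg _ h₁
    have hcongr (u : X → ℝ) : ∫ x, u x * g₁ x ∂μ = ∫ x, u x * g₂ x ∂μ :=
      integral_congr_ae (hg.mono fun x hx => by simp only [hx])
    simpa only [hcongr] using h₁

theorem exists_subseq_weakStarTendsto [IsFiniteMeasure μ] [IsSeparable μ] {f : ℕ → X → ℝ}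
    (hC : 0 ≤ C) (hf : ∀ k, Measurable (f k)) (hfC : ∀ k x, f k x ∈ Set.Icc 0 C) :
    ∃ F : X → ℝ, Measurable F ∧ (∀ x, F x ∈ Set.Icc 0 C) ∧
      ∃ φ : ℕ → ℕ, StrictMono φ ∧ WeakStarTendsto μ (fun k => f (φ k)) F := by
  obtain ⟨F, hFi, φ, hφ, hF⟩ := exists_subseq_tendsto_setIntegral (μ := μ) hf hfC
  have hfi (k : ℕ) : Integrable (f k) μ := (memLp_of_mem_Icc (hf k) (hfC k) 1).integrable le_rfl
  have hnonneg : 0 ≤ᵐ[μ] F := ae_nonneg_of_forall_setIntegral_nonneg hFi fun s hs _ =>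
    ge_of_tendsto' (hF s hs) fun k => integral_nonneg fun x => (hfC _ x).1
  have hle : F ≤ᵐ[μ] fun _ => C :=
    ae_le_of_forall_setIntegral_le hFi (integrable_const C) fun s hs _ =>
      le_of_tendsto' (hF s hs) fun k => setIntegral_mono (hfi _).integrableOn
        (integrable_const C).integrableOn fun x => (hfC _ x).2
  obtain ⟨F', hF', hFF'⟩ := hFi.aemeasurable
  let G (x : X) : ℝ := max 0 (min C (F' x))
  have hG : Measurable G := by fun_prop
  have hGC (x : X) : G x ∈ Set.Icc 0 C := ⟨le_max_left _ _, max_le hC (min_le_left _ _)⟩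
  have hFG : F =ᵐ[μ] G := by
    filter_upwards [hnonneg, hle, hFF'] with x h₀ h₁ hx
    simp only [G, ← hx, min_eq_right h₁]
    exact (max_eq_right h₀).symm
  refine ⟨G, hG, hGC, φ, hφ, .of_tendsto_setIntegral (fun k => hf _) (fun k => hfC _) hG hGC
    fun s hs => ?_⟩
  rw [← integral_congr_ae (ae_restrict_of_ae hFG)]
  exact hF s hs

end WeakStar

/-! ### Maximizing the mass under bounds on the density, its norm and its energy -/

section Maximizer

variable {X : Type*} [MeasurableSpace X] {μ : Measure X} {k : X → X → ℝ≥0∞} {C : ℝ}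

/-- The potential of a real density with respect to a kernel that may be infinite on a null set,
where `ENNReal.toReal` replaces `∞` by `0`. -/
noncomputable def potential (μ : Measure X) (k : X → X → ℝ≥0∞) (f : X → ℝ) (x : X) : ℝ :=
  ∫ y, f y * (k x y).toReal ∂μ

lemma potential_nonneg {f : X → ℝ} (hf : ∀ x, 0 ≤ f x) (x : X) : 0 ≤ potential μ k f x :=
  integral_nonneg fun y => mul_nonneg (hf y) ENNReal.toReal_nonneg

lemma integrable_toReal_kernel (hk : Measurable (Function.uncurry k)) {x : X}
    (hx : ∫⁻ y, k x y ∂μ ≠ ∞) : Integrable (fun y => (k x y).toReal) μ :=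
  integrable_toReal_of_lintegral_ne_top (hk.comp measurable_prodMk_left).aemeasurable hx

lemma potential_le (hk : Measurable (Function.uncurry k)) {f : X → ℝ} (hf : Measurable f)
    (hfC : ∀ x, f x ∈ Set.Icc 0 C) {x : X} (hx : ∫⁻ y, k x y ∂μ ≠ ∞) :
    potential μ k f x ≤ C * (∫⁻ y, k x y ∂μ).toReal := by
  have hkx : Measurable (k x) := hk.comp measurable_prodMk_left
  have hki := integrable_toReal_kernel hk hx
  rw [← integral_toReal hkx.aemeasurable (ae_lt_top hkx hx), ← integral_const_mul]
  exact integral_mono (integrable_mul_of_mem_Icc hf hfC hki) (hki.const_mul C)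
    fun y => mul_le_mul_of_nonneg_right (hfC y).2 ENNReal.toReal_nonneg

lemma lintegral_ofReal_mul_kernel (hk : Measurable (Function.uncurry k)) {f : X → ℝ}
    (hf : Measurable f) (hfC : ∀ x, f x ∈ Set.Icc 0 C) {x : X} (hx : ∫⁻ y, k x y ∂μ ≠ ∞) :
    ∫⁻ y, ENNReal.ofReal (f y) * k x y ∂μ = ENNReal.ofReal (potential μ k f x) := by
  rw [potential, ofReal_integral_eq_lintegral_ofReal
    (integrable_mul_of_mem_Icc hf hfC (integrable_toReal_kernel hk hx))
    (.of_forall fun y => mul_nonneg (hfC y).1 ENNReal.toReal_nonneg)]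
  refine lintegral_congr_ae ?_
  have hkx : Measurable (k x) := hk.comp measurable_prodMk_left
  filter_upwards [ae_lt_top hkx hx] with y hy
  rw [ENNReal.ofReal_mul (hfC y).1, ENNReal.ofReal_toReal hy.ne]

section SFinite

variable [SFinite μ]

lemma ae_lintegral_kernel_ne_top (hk : Measurable (Function.uncurry k))
    (hfin : ∫⁻ x, ∫⁻ y, k x y ∂μ ∂μ ≠ ∞) : ∀ᵐ x ∂μ, ∫⁻ y, k x y ∂μ ≠ ∞ :=
  (ae_lt_top hk.lintegral_prod_right' hfin).mono fun _ => ne_of_lt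

lemma integrable_toReal_lintegral_kernel (hk : Measurable (Function.uncurry k))
    (hfin : ∫⁻ x, ∫⁻ y, k x y ∂μ ∂μ ≠ ∞) : Integrable (fun x => (∫⁻ y, k x y ∂μ).toReal) μ :=
  integrable_toReal_of_lintegral_ne_top hk.lintegral_prod_right'.aemeasurable hfin

lemma aestronglyMeasurable_potential (hk : Measurable (Function.uncurry k)) {f : X → ℝ}
    (hf : Measurable f) : AEStronglyMeasurable (potential μ k f) μ :=
  (StronglyMeasurable.integral_prod_right' (f := fun q : X × X => f q.2 * (k q.1 q.2).toReal)
    ((hf.comp measurable_snd).mul hk.ennreal_toReal).stronglyMeasurable).aestronglyMeasurable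

lemma ae_norm_potential_le (hk : Measurable (Function.uncurry k))
    (hfin : ∫⁻ x, ∫⁻ y, k x y ∂μ ∂μ ≠ ∞) {f : X → ℝ} (hf : Measurable f)
    (hfC : ∀ x, f x ∈ Set.Icc 0 C) :
    ∀ᵐ x ∂μ, ‖potential μ k f x‖ ≤ C * (∫⁻ y, k x y ∂μ).toReal := by
  filter_upwards [ae_lintegral_kernel_ne_top hk hfin] with x hx
  rw [norm_of_nonneg (potential_nonneg (fun y => (hfC y).1) x)]
  exact potential_le hk hf hfC hx

lemma energy_ofReal (hk : Measurable (Function.uncurry k))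
    (hfin : ∫⁻ x, ∫⁻ y, k x y ∂μ ∂μ ≠ ∞) {f : X → ℝ} (hf : Measurable f)
    (hfC : ∀ x, f x ∈ Set.Icc 0 C) :
    energy μ k (fun x => ENNReal.ofReal (f x)) =
      ENNReal.ofReal (∫ x, f x * potential μ k f x ∂μ) := by
  have hpot : Integrable (potential μ k f) μ :=
    ((integrable_toReal_lintegral_kernel hk hfin).const_mul C).mono'
      (aestronglyMeasurable_potential hk hf) (ae_norm_potential_le hk hfin hf hfC)
  rw [ofReal_integral_eq_lintegral_ofReal (integrable_mul_of_mem_Icc hf hfC hpot)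
    (.of_forall fun x => mul_nonneg (hfC x).1 (potential_nonneg (fun y => (hfC y).1) x)), energy]
  refine lintegral_congr_ae ?_
  filter_upwards [ae_lintegral_kernel_ne_top hk hfin] with x hx
  have hkx : Measurable (k x) := hk.comp measurable_prodMk_left
  rw [ENNReal.ofReal_mul (hfC x).1, ← lintegral_ofReal_mul_kernel hk hf hfC hx,
    ← lintegral_const_mul _ (by fun_prop)]
  simp only [mul_assoc]

end SFinite

lemma WeakStarTendsto.tendsto_integral_mul {f v : ℕ → X → ℝ} {F V B : X → ℝ}
    (h : WeakStarTendsto μ f F) (hf : ∀ j, Measurable (f j))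
    (hfC : ∀ j x, f j x ∈ Set.Icc 0 C) (hv : ∀ j, AEStronglyMeasurable (v j) μ)
    (hB : Integrable B μ) (hvB : ∀ j, ∀ᵐ x ∂μ, ‖v j x‖ ≤ B x)
    (hvV : ∀ᵐ x ∂μ, Tendsto (fun j => v j x) atTop (𝓝 (V x))) :
    Tendsto (fun j => ∫ x, f j x * v j x ∂μ) atTop (𝓝 (∫ x, F x * V x ∂μ)) := by
  have hVB : ∀ᵐ x ∂μ, ‖V x‖ ≤ B x := by
    filter_upwards [hvV, ae_all_iff.2 hvB] with x hx hxB
    exact le_of_tendsto' hx.norm hxB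
  have hV : Integrable V μ := hB.mono' (aestronglyMeasurable_of_tendsto_ae atTop hv hvV) hVB
  have hvi (j : ℕ) : Integrable (v j) μ := hB.mono' (hv j) (hvB j)
  have hdiff : Tendsto (fun j => ∫ x, f j x * (v j x - V x) ∂μ) atTop (𝓝 (∫ _, 0 ∂μ)) := by
    refine tendsto_integral_of_dominated_convergence (fun x => C * (B x + B x))
      (fun j => (hf j).aestronglyMeasurable.mul ((hv j).sub hV.1)) ((hB.add hB).const_mul C)
      (fun j => ?_) ?_
    · filter_upwards [hvB j, hVB] with x hx hxV
      rw [norm_mul, norm_of_nonneg (hfC j x).1]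
      exact mul_le_mul (hfC j x).2 ((norm_sub_le _ _).trans (add_le_add hx hxV)) (norm_nonneg _)
        ((hfC j x).1.trans (hfC j x).2)
    · filter_upwards [hvV] with x hx
      refine squeeze_zero_norm (a := fun j => C * ‖v j x - V x‖) (fun j => ?_) ?_
      · rw [norm_mul, norm_of_nonneg (hfC j x).1]
        gcongr
        exact (hfC j x).2
      · simpa only [sub_self, norm_zero, mul_zero] using (hx.sub_const (V x)).norm.const_mul C
  have hadd (j : ℕ) : ∫ x, f j x * (v j x - V x) ∂μ + ∫ x, f j x * V x ∂μ =
      ∫ x, f j x * v j x ∂μ := by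
    simp only [mul_sub]
    rw [integral_sub (integrable_mul_of_mem_Icc (hf j) (hfC j) (hvi j))
      (integrable_mul_of_mem_Icc (hf j) (hfC j) hV), sub_add_cancel]
  simpa only [hadd, integral_zero, zero_add] using hdiff.add (h V hV)

theorem WeakStarTendsto.tendsto_energy [SFinite μ] (hk : Measurable (Function.uncurry k))
    (hfin : ∫⁻ x, ∫⁻ y, k x y ∂μ ∂μ ≠ ∞) {f : ℕ → X → ℝ} {F : X → ℝ}
    (h : WeakStarTendsto μ f F) (hf : ∀ j, Measurable (f j))
    (hfC : ∀ j x, f j x ∈ Set.Icc 0 C) (hF : Measurable F) (hFC : ∀ x, F x ∈ Set.Icc 0 C) :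
    Tendsto (fun j => energy μ k fun x => ENNReal.ofReal (f j x)) atTop
      (𝓝 (energy μ k fun x => ENNReal.ofReal (F x))) := by
  simp only [energy_ofReal hk hfin (hf _) (hfC _), energy_ofReal hk hfin hF hFC]
  refine ENNReal.tendsto_ofReal (h.tendsto_integral_mul hf hfC
    (fun j => aestronglyMeasurable_potential hk (hf j))
    ((integrable_toReal_lintegral_kernel hk hfin).const_mul C)
    (fun j => ae_norm_potential_le hk hfin (hf j) (hfC j)) ?_)
  filter_upwards [ae_lintegral_kernel_ne_top hk hfin] with x hx
  exact h _ (integrable_toReal_kernel hk hx)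

section FiniteMeasure

variable [IsFiniteMeasure μ]

lemma integrable_rpow_of_mem_Icc {f : X → ℝ} (hf : Measurable f)
    (hfC : ∀ x, f x ∈ Set.Icc 0 C) {r : ℝ} (hr : 0 ≤ r) : Integrable (fun x => f x ^ r) μ :=
  (memLp_of_mem_Icc (C := C ^ r) (by fun_prop) (fun x => ⟨rpow_nonneg (hfC x).1 r,
    rpow_le_rpow (hfC x).1 (hfC x).2 hr⟩) 1).integrable le_rfl

lemma lintegral_ofReal_rpow {f : X → ℝ} (hf : Measurable f) (hfC : ∀ x, f x ∈ Set.Icc 0 C)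
    {r : ℝ} (hr : 0 ≤ r) :
    ∫⁻ x, ENNReal.ofReal (f x) ^ r ∂μ = ENNReal.ofReal (∫ x, f x ^ r ∂μ) := by
  rw [ofReal_integral_eq_lintegral_ofReal (integrable_rpow_of_mem_Icc hf hfC hr)
    (.of_forall fun x => rpow_nonneg (hfC x).1 r)]
  exact lintegral_congr fun x => ENNReal.ofReal_rpow_of_nonneg (hfC x).1 hr

/-- Young's inequality with the exponents `p` and `p' = p / (p - 1)`, tested on `F ^ (p - 1)`. -/
lemma integral_mul_rpow_sub_one_le {p : ℝ} (hp : 1 < p) {f F : X → ℝ} (hf : Measurable f)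
    (hfC : ∀ x, f x ∈ Set.Icc 0 C) (hF : Measurable F) (hFC : ∀ x, F x ∈ Set.Icc 0 C) :
    ∫ x, f x * F x ^ (p - 1) ∂μ ≤
      (∫ x, f x ^ p ∂μ) / p + (1 - p⁻¹) * ∫ x, F x ^ p ∂μ := by
  have hpq := Real.HolderConjugate.conjExponent hp
  have hfp := integrable_rpow_of_mem_Icc (μ := μ) hf hfC hpq.nonneg
  have hFp := integrable_rpow_of_mem_Icc (μ := μ) hF hFC hpq.nonneg
  rw [← integral_div, ← integral_const_mul, ← integral_add (hfp.div_const p) (hFp.const_mul _)]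
  refine integral_mono (integrable_mul_of_mem_Icc hf hfC
    (integrable_rpow_of_mem_Icc hF hFC (sub_pos.2 hp).le))
    ((hfp.div_const p).add (hFp.const_mul _)) fun x => ?_
  have hyoung := Real.young_inequality_of_nonneg (hfC x).1 (rpow_nonneg (hFC x).1 (p - 1)) hpq
  rwa [← rpow_mul (hFC x).1, hpq.sub_one_mul_conj, div_eq_inv_mul (F x ^ p),
    ← hpq.one_sub_inv] at hyoung

theorem WeakStarTendsto.integral_rpow_le {p N : ℝ} (hp : 1 < p) {f : ℕ → X → ℝ} {F : X → ℝ}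
    (h : WeakStarTendsto μ f F) (hf : ∀ j, Measurable (f j))
    (hfC : ∀ j x, f j x ∈ Set.Icc 0 C) (hF : Measurable F) (hFC : ∀ x, F x ∈ Set.Icc 0 C)
    (hN : ∀ j, ∫ x, f j x ^ p ∂μ ≤ N) : ∫ x, F x ^ p ∂μ ≤ N := by
  have hp0 : 0 < p := one_pos.trans hp
  have hlim := h _ (integrable_rpow_of_mem_Icc hF hFC (sub_pos.2 hp).le)
  have hpow (x : X) : F x * F x ^ (p - 1) = F x ^ p := by
    rw [mul_comm, ← rpow_add_one' (hFC x).1 (by simpa using hp0.ne'), sub_add_cancel]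
  simp only [hpow] at hlim
  have hle : ∫ x, F x ^ p ∂μ ≤ N / p + (1 - p⁻¹) * ∫ x, F x ^ p ∂μ :=
    le_of_tendsto' hlim fun j =>
      (integral_mul_rpow_sub_one_le hp (hf j) (hfC j) hF hFC).trans (by gcongr; exact hN j)
  have hdiv : (∫ x, F x ^ p ∂μ) / p ≤ N / p := by
    rw [div_eq_mul_inv (∫ x, F x ^ p ∂μ)]; linarith
  exact (div_le_div_iff_of_pos_right hp0).1 hdiv

end FiniteMeasure

/-- `u` is bounded by `C`, and is at least as good as `g` in the inequality comparing the energy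
with the `p`-norm. -/
structure IsCompetitor (μ : Measure X) (k : X → X → ℝ≥0∞) (p : ℝ) (C : NNReal)
    (g u : X → ℝ≥0∞) : Prop where
  measurable : Measurable u
  le_bound (x : X) : u x ≤ C
  lintegral_rpow_le : ∫⁻ x, u x ^ p ∂μ ≤ ∫⁻ x, g x ^ p ∂μ
  energy_le : energy μ k g ≤ energy μ k u

lemma IsCompetitor.refl {p : ℝ} {C : NNReal} {g : X → ℝ≥0∞} (hg : Measurable g)
    (hgC : ∀ x, g x ≤ C) : IsCompetitor μ k p C g g :=
  ⟨hg, hgC, le_rfl, le_rfl⟩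

lemma IsCompetitor.ofReal_of_weakStarTendsto [IsFiniteMeasure μ]
    (hk : Measurable (Function.uncurry k)) (hfin : ∫⁻ x, ∫⁻ y, k x y ∂μ ∂μ ≠ ∞) {p : ℝ}
    (hp : 1 < p) {C : NNReal} {g : X → ℝ≥0∞} (hgC : ∀ x, g x ≤ C) {f : ℕ → X → ℝ} {F : X → ℝ}
    (hf : ∀ j, Measurable (f j)) (hfC : ∀ j x, f j x ∈ Set.Icc 0 (C : ℝ))
    (hfg : ∀ j, IsCompetitor μ k p C g fun x => ENNReal.ofReal (f j x)) (hF : Measurable F)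
    (hFC : ∀ x, F x ∈ Set.Icc 0 (C : ℝ)) (h : WeakStarTendsto μ f F) :
    IsCompetitor μ k p C g fun x => ENNReal.ofReal (F x) where
  measurable := by fun_prop
  le_bound x := ENNReal.ofReal_le_of_le_toReal (hFC x).2
  lintegral_rpow_le := by
    have hp0 : 0 ≤ p := (one_pos.trans hp).le
    have hgp : ∫⁻ x, g x ^ p ∂μ ≠ ∞ :=
      ((lintegral_mono fun x => ENNReal.rpow_le_rpow (hgC x) hp0).trans_lt
        (by rw [lintegral_const]; finiteness)).ne
    rw [lintegral_ofReal_rpow hF hFC hp0]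
    refine ENNReal.ofReal_le_of_le_toReal (h.integral_rpow_le hp hf hfC hF hFC fun j => ?_)
    rw [← ENNReal.ofReal_le_iff_le_toReal hgp, ← lintegral_ofReal_rpow (hf j) (hfC j) hp0]
    exact (hfg j).lintegral_rpow_le
  energy_le := ge_of_tendsto' (h.tendsto_energy hk hfin hf hfC hF hFC) fun j => (hfg j).energy_le

theorem exists_isCompetitor_maximal_lintegral [IsFiniteMeasure μ] [IsSeparable μ]
    (hk : Measurable (Function.uncurry k)) (hfin : ∫⁻ x, ∫⁻ y, k x y ∂μ ∂μ ≠ ∞) {p : ℝ}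
    (hp : 1 < p) {C : NNReal} {g : X → ℝ≥0∞} (hg : Measurable g) (hgC : ∀ x, g x ≤ C) :
    ∃ u, IsCompetitor μ k p C g u ∧
      ∀ v, IsCompetitor μ k p C g v → ∫⁻ x, v x ∂μ ≤ ∫⁻ x, u x ∂μ := by
  let masses : Set ℝ≥0∞ := {m | ∃ u, IsCompetitor μ k p C g u ∧ ∫⁻ x, u x ∂μ = m}
  obtain ⟨m, -, hm, hmasses⟩ := exists_seq_tendsto_sSup (S := masses)
    ⟨_, g, .refl hg hgC, rfl⟩ (OrderTop.bddAbove _)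
  choose u hu hum using hmasses
  have hofReal (j : ℕ) (x : X) : ENNReal.ofReal (u j x).toReal = u j x :=
    ENNReal.ofReal_toReal (ne_top_of_le_ne_top ENNReal.coe_ne_top ((hu j).le_bound x))
  have hmeas (j : ℕ) : Measurable fun x => (u j x).toReal := (hu j).measurable.ennreal_toReal
  have hbound (j : ℕ) (x : X) : (u j x).toReal ∈ Set.Icc 0 (C : ℝ) :=
    ⟨ENNReal.toReal_nonneg, ENNReal.toReal_mono ENNReal.coe_ne_top ((hu j).le_bound x)⟩
  obtain ⟨F, hF, hFC, φ, hφ, hlim⟩ :=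
    exists_subseq_weakStarTendsto (μ := μ) C.coe_nonneg hmeas hbound
  refine ⟨fun x => ENNReal.ofReal (F x), .ofReal_of_weakStarTendsto hk hfin hp hgC
    (fun j => hmeas _) (fun j => hbound _) (fun j => ?_) hF hFC hlim, fun v hv => ?_⟩
  · simpa only [hofReal] using hu (φ j)
  · have hint {f : X → ℝ} (hf : Measurable f) (hfC : ∀ x, f x ∈ Set.Icc 0 (C : ℝ)) :
        ∫⁻ x, ENNReal.ofReal (f x) ∂μ = ENNReal.ofReal (∫ x, f x ∂μ) := by
      simpa only [ENNReal.rpow_one, rpow_one] using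
        lintegral_ofReal_rpow (μ := μ) hf hfC zero_le_one
    have hmass : Tendsto (fun j => m (φ j)) atTop (𝓝 (∫⁻ x, ENNReal.ofReal (F x) ∂μ)) := by
      have hone := ENNReal.tendsto_ofReal (hlim (fun _ => 1) (integrable_const 1))
      simpa only [mul_one, ← hint (hmeas _) (hbound _), ← hint hF hFC, hofReal, hum] using hone
    rw [tendsto_nhds_unique hmass (hm.comp hφ.tendsto_atTop)]
    exact le_sSup ⟨v, hv, rfl⟩

end Maximizer

/-! ### Inversions are conformal reflections -/

section Inversion

variable {V : Type*} [NormedAddCommGroup V]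

/-- The square of the Japanese bracket `⟨x⟩`. -/
noncomputable def bracketSq (x : V) : ℝ := 1 + ‖x‖ ^ 2

lemma bracketSq_pos (x : V) : 0 < bracketSq x := by unfold bracketSq; positivity

lemma one_le_bracketSq (x : V) : 1 ≤ bracketSq x := le_add_of_nonneg_right (sq_nonneg _)

@[fun_prop]
lemma continuous_bracketSq : Continuous (bracketSq : V → ℝ) := by unfold bracketSq; fun_prop

@[fun_prop]
lemma measurable_bracketSq [MeasurableSpace V] [BorelSpace V] :
    Measurable (bracketSq : V → ℝ) := by unfold bracketSq; fun_prop

/-- A quarter of the squared chordal distance between the preimages of two points under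
stereographic projection. -/
noncomputable def chordalDistSq (x y : V) : ℝ := ‖x - y‖ ^ 2 / (bracketSq x * bracketSq y)

lemma continuous_chordalDistSq : Continuous (Function.uncurry (chordalDistSq : V → V → ℝ)) := by
  unfold chordalDistSq Function.uncurry
  exact Continuous.div (by fun_prop) (by fun_prop) fun p =>
    (mul_pos (bracketSq_pos p.1) (bracketSq_pos p.2)).ne'

/-- The kernel `|ξ - η|^{-l}` on the sphere in stereographic coordinates, up to a factor `2 ^ l`;
it is infinite on the diagonal for `0 < l`. -/
noncomputable def chordalKernel (l : ℝ) (x y : V) : ℝ≥0∞ :=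
  (ENNReal.ofReal (chordalDistSq x y))⁻¹ ^ (l / 2)

@[fun_prop]
lemma measurable_chordalKernel [MeasurableSpace V] [BorelSpace V] [SecondCountableTopology V]
    (l : ℝ) : Measurable (Function.uncurry (chordalKernel l : V → V → ℝ≥0∞)) :=
  (continuous_chordalDistSq.measurable.ennreal_ofReal.inv).pow_const (l / 2)

lemma inv_ofReal_rpow_mul {d q c : ℝ} (hq : 0 < q) (hc : 0 ≤ c) :
    (ENNReal.ofReal d)⁻¹ ^ c * ENNReal.ofReal q ^ c = (ENNReal.ofReal (d / q))⁻¹ ^ c := by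
  rw [← ENNReal.mul_rpow_of_nonneg _ _ hc, ENNReal.ofReal_div_of_pos hq,
    ENNReal.inv_div (by simp) (by simp [hq]), div_eq_mul_inv, mul_comm]

variable [InnerProductSpace ℝ V] {a x y : V} {r : ℝ}

/-- The conformal factor of an inversion with respect to the spherical metric in stereographic
coordinates; junk at the center `a`. -/
noncomputable def inversionFactor (a : V) (r : ℝ) (x : V) : ℝ :=
  r ^ 2 * bracketSq x / (dist x a ^ 2 * bracketSq (inversion a r x))

lemma inversionFactor_pos (hr : 0 < r) (hx : x ≠ a) : 0 < inversionFactor a r x :=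
  div_pos (mul_pos (pow_pos hr 2) (bracketSq_pos x))
    (mul_pos (pow_pos (dist_pos.2 hx) 2) (bracketSq_pos _))

@[fun_prop]
lemma measurable_inversion [MeasurableSpace V] [BorelSpace V] [SecondCountableTopology V]
    (a : V) (r : ℝ) : Measurable (inversion a r) := by
  have h : inversion a r = fun x => (r / dist x a) ^ 2 • (x - a) + a := rfl
  rw [h]
  fun_prop

@[fun_prop]
lemma measurable_inversionFactor [MeasurableSpace V] [BorelSpace V] [SecondCountableTopology V]
    (a : V) (r : ℝ) : Measurable (inversionFactor a r) := by
  unfold inversionFactor; fun_prop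

lemma norm_inversion_sub_sq_mul_sub (hx : x ≠ a) (y : V) :
    ‖inversion a r x - y‖ ^ 2 * dist x a ^ 2 - r ^ 2 * ‖x - y‖ ^ 2 =
      (r ^ 2 - dist x a ^ 2) * (r ^ 2 - dist y a ^ 2) := by
  obtain ⟨x, rfl⟩ : ∃ v, x = v + a := ⟨x - a, (sub_add_cancel x a).symm⟩
  obtain ⟨y, rfl⟩ : ∃ w, y = w + a := ⟨y - a, (sub_add_cancel y a).symm⟩
  have hx0 : ‖x‖ ≠ 0 := by simpa using hx
  have hinv : inversion a r (x + a) - (y + a) = (r / ‖x‖) ^ 2 • x - y := by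
    simp [inversion, dist_eq_norm]
  rw [hinv, add_sub_add_right_eq_sub, dist_eq_norm, dist_eq_norm, add_sub_cancel_right,
    add_sub_cancel_right, norm_sub_sq_real, norm_sub_sq_real, norm_smul, real_inner_smul_left,
    norm_of_nonneg (sq_nonneg _)]
  field_simp
  ring

lemma dist_sq_mul_bracketSq_inversion_sub (hx : x ≠ a) :
    dist x a ^ 2 * bracketSq (inversion a r x) - r ^ 2 * bracketSq x =
      (r ^ 2 - dist x a ^ 2) * (r ^ 2 - bracketSq a) := by
  have h := norm_inversion_sub_sq_mul_sub (r := r) hx 0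
  simp only [sub_zero, dist_zero_left] at h
  unfold bracketSq
  linear_combination h

lemma dist_inversion_ne (hr : 0 < r) (hx : x ≠ a) (hxr : dist x a ≠ r) :
    dist (inversion a r x) a ≠ r := by
  have hd : 0 < dist x a := dist_pos.2 hx
  rw [dist_inversion_center, Ne, div_eq_iff hd.ne', sq, mul_right_inj' hr.ne']
  exact hxr.symm

lemma inversionFactor_mul_inversionFactor_inversion (hr : 0 < r) (hx : x ≠ a) :
    inversionFactor a r x * inversionFactor a r (inversion a r x) = 1 := by
  have hbx := bracketSq_pos x
  have hbi := bracketSq_pos (inversion a r x)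
  have hd : 0 < dist x a := dist_pos.2 hx
  unfold inversionFactor
  rw [inversion_inversion a hr.ne', dist_inversion_center]
  field_simp

lemma inversionFactor_lt_one_iff (hx : x ≠ a) :
    inversionFactor a r x < 1 ↔ 0 < (r ^ 2 - dist x a ^ 2) * (r ^ 2 - bracketSq a) := by
  rw [← dist_sq_mul_bracketSq_inversion_sub hx, sub_pos, inversionFactor,
    div_lt_one (mul_pos (pow_pos (dist_pos.2 hx) 2) (bracketSq_pos _))]

lemma inversionFactor_eq_one_iff (hx : x ≠ a) :
    inversionFactor a r x = 1 ↔ (r ^ 2 - dist x a ^ 2) * (r ^ 2 - bracketSq a) = 0 := by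
  rw [← dist_sq_mul_bracketSq_inversion_sub hx, sub_eq_zero, inversionFactor,
    div_eq_one_iff_eq (mul_pos (pow_pos (dist_pos.2 hx) 2) (bracketSq_pos _)).ne', eq_comm]

lemma chordalDistSq_inversion_div_sub (hr : 0 < r) (hx : x ≠ a) (y : V) :
    chordalDistSq (inversion a r x) y / inversionFactor a r x - chordalDistSq x y =
      (r ^ 2 - dist x a ^ 2) * (r ^ 2 - dist y a ^ 2) /
        (r ^ 2 * (bracketSq x * bracketSq y)) := by
  have hbx := bracketSq_pos x
  have hby := bracketSq_pos y
  have hbi := bracketSq_pos (inversion a r x)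
  have := dist_ne_zero.2 hx
  rw [← norm_inversion_sub_sq_mul_sub hx]
  unfold chordalDistSq inversionFactor
  field_simp

lemma chordalDistSq_inversion_inversion_div (hr : 0 < r) (hx : x ≠ a) (hy : y ≠ a) :
    chordalDistSq (inversion a r x) (inversion a r y) / inversionFactor a r x /
      inversionFactor a r y = chordalDistSq x y := by
  have hbx := bracketSq_pos x
  have hby := bracketSq_pos y
  have hbix := bracketSq_pos (inversion a r x)
  have hbiy := bracketSq_pos (inversion a r y)
  have hdx : 0 < dist x a := dist_pos.2 hx
  have hdy : 0 < dist y a := dist_pos.2 hy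
  unfold chordalDistSq inversionFactor
  rw [← dist_eq_norm, dist_inversion_inversion hx hy, ← dist_eq_norm]
  field_simp

variable {l : ℝ}

lemma chordalKernel_inversion_inversion (hl : 0 ≤ l) (hr : 0 < r) (hx : x ≠ a) (hy : y ≠ a) :
    chordalKernel l (inversion a r x) (inversion a r y) *
      ENNReal.ofReal (inversionFactor a r x) ^ (l / 2) *
      ENNReal.ofReal (inversionFactor a r y) ^ (l / 2) = chordalKernel l x y := by
  have hl2 : 0 ≤ l / 2 := by linarith
  rw [chordalKernel, inv_ofReal_rpow_mul (inversionFactor_pos hr hx) hl2,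
    inv_ofReal_rpow_mul (inversionFactor_pos hr hy) hl2,
    chordalDistSq_inversion_inversion_div hr hx hy, chordalKernel]

lemma chordalKernel_inversion_le (hl : 0 ≤ l) (hr : 0 < r) (hx : x ≠ a)
    (h : 0 ≤ (r ^ 2 - dist x a ^ 2) * (r ^ 2 - dist y a ^ 2)) :
    chordalKernel l (inversion a r x) y * ENNReal.ofReal (inversionFactor a r x) ^ (l / 2) ≤
      chordalKernel l x y := by
  rw [chordalKernel, inv_ofReal_rpow_mul (inversionFactor_pos hr hx) (by linarith), chordalKernel]
  gcongr
  rw [← sub_nonneg, chordalDistSq_inversion_div_sub hr hx]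
  exact div_nonneg h (mul_pos (pow_pos hr 2) (mul_pos (bracketSq_pos x) (bracketSq_pos y))).le

lemma le_chordalKernel_inversion (hl : 0 ≤ l) (hr : 0 < r) (hx : x ≠ a)
    (h : (r ^ 2 - dist x a ^ 2) * (r ^ 2 - dist y a ^ 2) ≤ 0) :
    chordalKernel l x y ≤
      chordalKernel l (inversion a r x) y * ENNReal.ofReal (inversionFactor a r x) ^ (l / 2) := by
  simp only [chordalKernel]
  rw [inv_ofReal_rpow_mul (inversionFactor_pos hr hx) (by linarith)]
  gcongr
  rw [← sub_nonpos, chordalDistSq_inversion_div_sub hr hx]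
  exact div_nonpos_of_nonpos_of_nonneg h
    (mul_pos (pow_pos hr 2) (mul_pos (bracketSq_pos x) (bracketSq_pos y))).le

lemma mul_nonneg_of_pos_iff_pos {b c : ℝ} (h : 0 < b ↔ 0 < c) : 0 ≤ b * c := by
  by_cases hb : 0 < b
  · exact (mul_pos hb (h.1 hb)).le
  · exact mul_nonneg_of_nonpos_of_nonpos (not_lt.1 hb) (not_lt.1 fun hc => hb (h.2 hc))

lemma mul_nonpos_of_not_pos_iff_pos {b c : ℝ} (h : ¬(0 < b ↔ 0 < c)) : b * c ≤ 0 := by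
  by_contra! hbc
  exact h (pos_iff_pos_of_mul_pos hbc)

lemma chordalKernel_inversion_le_of_iff (hl : 0 ≤ l) (hr : 0 < r) (hra : r ^ 2 ≠ bracketSq a)
    (hx : x ≠ a) (hy : y ≠ a) (h : inversionFactor a r x < 1 ↔ inversionFactor a r y < 1) :
    chordalKernel l (inversion a r x) y * ENNReal.ofReal (inversionFactor a r x) ^ (l / 2) ≤
      chordalKernel l x y := by
  rw [inversionFactor_lt_one_iff hx, inversionFactor_lt_one_iff hy] at h
  refine chordalKernel_inversion_le hl hr hx ?_
  have hc : 0 < (r ^ 2 - bracketSq a) ^ 2 := sq_pos_of_ne_zero (sub_ne_zero.2 hra)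
  refine nonneg_of_mul_nonneg_left (b := (r ^ 2 - bracketSq a) ^ 2) ?_ hc
  linear_combination mul_nonneg_of_pos_iff_pos h

lemma le_chordalKernel_inversion_of_not_iff (hl : 0 ≤ l) (hr : 0 < r)
    (hra : r ^ 2 ≠ bracketSq a) (hx : x ≠ a) (hy : y ≠ a)
    (h : ¬(inversionFactor a r x < 1 ↔ inversionFactor a r y < 1)) :
    chordalKernel l x y ≤
      chordalKernel l (inversion a r x) y * ENNReal.ofReal (inversionFactor a r x) ^ (l / 2) := by
  rw [inversionFactor_lt_one_iff hx, inversionFactor_lt_one_iff hy] at h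
  refine le_chordalKernel_inversion hl hr hx ?_
  have hc : 0 < (r ^ 2 - bracketSq a) ^ 2 := sq_pos_of_ne_zero (sub_ne_zero.2 hra)
  refine nonpos_of_mul_nonpos_left ?_ hc
  linear_combination mul_nonpos_of_not_pos_iff_pos h

end Inversion

section InversionReflection

variable {n : ℕ}

/-- The surface measure of the sphere in stereographic coordinates, up to a factor `2 ^ n`. -/
noncomputable def conformalMeasure (n : ℕ) : Measure (EuclideanSpace ℝ (Fin n)) :=
  volume.withDensity fun x => ENNReal.ofReal (bracketSq x ^ (-(n : ℝ)))

local notation "E" => EuclideanSpace ℝ (Fin n)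

lemma lintegral_conformalMeasure {g : E → ℝ≥0∞} (hg : Measurable g) :
    ∫⁻ x, g x ∂conformalMeasure n = ∫⁻ x, ENNReal.ofReal (bracketSq x ^ (-(n : ℝ))) * g x :=
  lintegral_withDensity_eq_lintegral_mul _ (by fun_prop) hg

lemma abs_det_smul_reflection (c : ℝ) (K : Submodule ℝ E) :
    |(c ^ 2 • (K.reflection : E →L[ℝ] E)).det| = c ^ (2 * n) := by
  have hdet : |LinearMap.det (K.reflection.toLinearMap)| = 1 := by
    rw [Submodule.det_reflection, abs_neg_one_pow]
  change |LinearMap.det (c ^ 2 • K.reflection.toLinearMap)| = _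
  rw [LinearMap.det_smul, abs_mul, hdet, mul_one, finrank_euclideanSpace_fin, ← pow_mul,
    abs_of_nonneg (Even.pow_nonneg (even_two_mul n) c)]

variable {a : EuclideanSpace ℝ (Fin n)} {r : ℝ}

lemma ofReal_inversionFactor_rpow {x : E} (hr : 0 < r) (hx : x ≠ a) :
    ENNReal.ofReal (bracketSq x ^ (-(n : ℝ))) * ENNReal.ofReal (inversionFactor a r x) ^ (n : ℝ) =
      ENNReal.ofReal ((r / dist x a) ^ (2 * n)) *
        ENNReal.ofReal (bracketSq (inversion a r x) ^ (-(n : ℝ))) := by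
  have hbx := bracketSq_pos x
  have hbi := bracketSq_pos (inversion a r x)
  have hd : 0 < dist x a := dist_pos.2 hx
  rw [ENNReal.ofReal_rpow_of_pos (inversionFactor_pos hr hx), ← ENNReal.ofReal_mul (by positivity),
    ← ENNReal.ofReal_mul (by positivity)]
  simp only [rpow_neg hbx.le, rpow_neg hbi.le, rpow_natCast, inversionFactor, pow_mul, ← inv_pow,
    ← mul_pow]
  congr 2
  field_simp

variable [NeZero n]

lemma lintegral_inversion (a : E) (hr : 0 < r) (g : E → ℝ≥0∞) :
    ∫⁻ x, ENNReal.ofReal ((r / dist x a) ^ (2 * n)) * g (inversion a r x) = ∫⁻ x, g x := by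
  have himage : inversion a r '' {a}ᶜ = {a}ᶜ := by
    rw [Set.image_compl_eq (inversion_bijective a hr.ne'), Set.image_singleton, inversion_self]
  have hcov := lintegral_image_eq_lintegral_abs_det_fderiv_mul (volume : Measure E)
    (measurableSet_singleton a).compl
    (fun x hx => (hasFDerivAt_inversion (R := r) hx).hasFDerivWithinAt)
    (inversion_injective a hr.ne').injOn g
  rw [himage, restrict_compl_singleton] at hcov
  simp only [hcov, abs_det_smul_reflection]

lemma lintegral_conformalMeasure_inversion (a : E) (hr : 0 < r) {g : E → ℝ≥0∞}
    (hg : Measurable g) :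
    ∫⁻ x, g (inversion a r x) * ENNReal.ofReal (inversionFactor a r x) ^ (n : ℝ)
      ∂conformalMeasure n = ∫⁻ x, g x ∂conformalMeasure n := by
  rw [lintegral_conformalMeasure (by fun_prop), lintegral_conformalMeasure hg,
    ← lintegral_inversion a hr fun x => _ * g x]
  refine lintegral_congr_ae ?_
  filter_upwards [Measure.ae_ne volume a] with x hx
  rw [← mul_assoc (ENNReal.ofReal (_ ^ (2 * n))), ← ofReal_inversionFactor_rpow hr hx, mul_assoc,
    mul_comm (g _)]

lemma ae_conformalMeasure_mem_inversionDomain (a : E) (r : ℝ) :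
    ∀ᵐ x ∂conformalMeasure n, x ≠ a ∧ dist x a ≠ r := by
  refine (withDensity_absolutelyContinuous volume _).ae_le ?_
  have hsphere : ∀ᵐ x : E, x ∉ Metric.sphere a r :=
    compl_mem_ae_iff.2 (by simpa using Measure.addHaar_sphere volume a r)
  filter_upwards [Measure.ae_ne volume a, hsphere] with x hx hxs using ⟨hx, hxs⟩

/-- The inversion in a sphere of radius `r` about `a`, as a conformal reflection of the sphere
`Sⁿ`. For `r ^ 2 = bracketSq a` it is an isometry, whose factor does not distinguish the two sides
of the fixed hypersphere. -/
noncomputable def inversionReflection {s : ℝ} (hs : |s| < n) (hr : 0 < r)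
    (hra : r ^ 2 ≠ bracketSq a) :
    ConformalReflection (conformalMeasure n) (chordalKernel (n - s)) ((n + s) / 2)
      ((n - s) / 2) where
  map := inversion a r
  factor x := ENNReal.ofReal (inversionFactor a r x)
  domain := {x | x ≠ a ∧ dist x a ≠ r}
  alpha_pos := by linarith [abs_lt.1 hs]
  beta_pos := by linarith [abs_lt.1 hs]
  measurable_map := measurable_inversion a r
  measurable_factor := by fun_prop
  ae_mem_domain := ae_conformalMeasure_mem_inversionDomain a r
  map_mem_domain x hx :=
    ⟨(inversion_eq_center hr.ne').not.2 hx.1, dist_inversion_ne hr hx.1 hx.2⟩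
  involutive_map := inversion_inversion a hr.ne'
  factor_mul_factor_map x hx := by
    rw [← ENNReal.ofReal_mul (inversionFactor_pos hr hx.1).le,
      inversionFactor_mul_inversionFactor_inversion hr hx.1, ENNReal.ofReal_one]
  factor_ne_one x hx := by
    rw [Ne, ENNReal.ofReal_eq_one, inversionFactor_eq_one_iff hx.1, mul_eq_zero, sub_eq_zero,
      sub_eq_zero, sq_eq_sq₀ hr.le dist_nonneg]
    exact not_or.2 ⟨Ne.symm hx.2, hra⟩
  lintegral_comp_map g hg := by
    rw [show ((n : ℝ) + s) / 2 + (n - s) / 2 = n by ring]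
    exact lintegral_conformalMeasure_inversion a hr hg
  kernel_map_map x hx y hy :=
    chordalKernel_inversion_inversion (by linarith [abs_lt.1 hs]) hr hx.1 hy.1
  kernel_map_le x hx y hy hxy :=
    chordalKernel_inversion_le_of_iff (by linarith [abs_lt.1 hs]) hr hra hx.1 hy.1
      (by simpa using hxy)
  le_kernel_map x hx y hy hxy :=
    le_chordalKernel_inversion_of_not_iff (by linarith [abs_lt.1 hs]) hr hra hx.1 hy.1
      (by simpa using hxy)

end InversionReflection

/-! ### Densities dominated by all their reflections are constant -/

lemma exists_ae_eq_of_ae_ae_le {X : Type*} [MeasurableSpace X] {μ : Measure X} [SFinite μ]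
    [NeZero μ] {u : X → ℝ≥0∞} (hu : Measurable u) (h : ∀ᵐ x ∂μ, ∀ᵐ y ∂μ, u y ≤ u x) :
    ∃ x₀, ∀ᵐ x ∂μ, u x = u x₀ := by
  have hle : MeasurableSet {z : X × X | u z.2 ≤ u z.1} :=
    measurableSet_le (by fun_prop) (by fun_prop)
  obtain ⟨x₀, hge, hle⟩ := (h.and ((Measure.ae_ae_comm hle).1 h)).exists
  exact ⟨x₀, hge.mp (hle.mono fun x => ge_antisymm)⟩

lemma ae_smul_add {F : Type*} [NormedAddCommGroup F] [NormedSpace ℝ F] [MeasurableSpace F]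
    [BorelSpace F] [FiniteDimensional ℝ F] (μ : Measure F) [μ.IsAddHaarMeasure] {c : ℝ}
    (hc : c ≠ 0) (b : F) {p : F → Prop} (hp : ∀ᵐ x ∂μ, p x) : ∀ᵐ x ∂μ, p (c • x + b) := by
  have hsmul : Measure.QuasiMeasurePreserving (fun x : F => c • x) μ μ :=
    ⟨measurable_const_smul c, by
      rw [Measure.map_addHaar_smul μ hc]
      exact Measure.smul_absolutelyContinuous⟩
  exact ((measurePreserving_add_right μ b).quasiMeasurePreserving.comp hsmul).ae hp

section Constancy

variable {V : Type*} [NormedAddCommGroup V] {u : V → ℝ≥0∞} {α : ℝ}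

/-- The inequality `u x ≥ reflect u x` at a point `x` that an inversion contracting by the factor
`κ` (in the spherical metric, for the weight `bracketSq`) maps to `y`. -/
def DominatesAt (u : V → ℝ≥0∞) (α : ℝ) (x y : V) (κ : ℝ) : Prop :=
  κ ^ 2 * bracketSq x < bracketSq y →
    u y * ENNReal.ofReal (κ ^ 2 * bracketSq x / bracketSq y) ^ α ≤ u x

lemma measurableSet_dominatesAt [MeasurableSpace V] [BorelSpace V] [SecondCountableTopology V]
    (hu : Measurable u) : MeasurableSet {z : V × V × ℝ | DominatesAt u α z.1 z.2.1 z.2.2} :=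
  measurableSet_setOfPred.2 <| Measurable.imp
    (measurableSet_setOfPred.1 (measurableSet_lt (by fun_prop) (by fun_prop)))
    (measurableSet_setOfPred.1 (measurableSet_le (by fun_prop) (by fun_prop)))

lemma measurableSet_imp_dominatesAt {T : Type*} [MeasurableSpace T] [MeasurableSpace V]
    [BorelSpace V] [SecondCountableTopology V] (hu : Measurable u) {p : T → Prop}
    (hp : MeasurableSet {t | p t}) {f g : T → V} {κ : T → ℝ} (hf : Measurable f)
    (hg : Measurable g) (hκ : Measurable κ) :
    MeasurableSet {t | p t → DominatesAt u α (f t) (g t) (κ t)} :=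
  measurableSet_setOfPred.2 <| (measurableSet_setOfPred.1 hp).imp <| measurableSet_setOfPred.1 <|
    (hf.prodMk (hg.prodMk hκ)) (measurableSet_dominatesAt hu)

/-- The two points are exchanged isometrically for `κ ^ 2 = bracketSq y / bracketSq x`, and the
inequality survives the limit from below. -/
lemma le_of_ae_dominatesAt {x y : V} (hy : u y ≠ ∞)
    (h : ∀ᵐ κ : ℝ, 0 < κ → DominatesAt u α x y κ) : u y ≤ u x := by
  have hJx := bracketSq_pos x
  have hJy := bracketSq_pos y
  set κ₀ := √(bracketSq y / bracketSq x) with hκ₀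
  have hκ₀_pos : 0 < κ₀ := by positivity
  have hfreq : ∃ᶠ κ in 𝓝 κ₀, κ ∈ Set.Iio κ₀ ∩ {κ | 0 < κ → DominatesAt u α x y κ} := by
    rw [← mem_closure_iff_frequently]
    have hsub := (Measure.dense_of_ae h).open_subset_closure_inter (isOpen_Iio (a := κ₀))
    exact closure_minimal hsub isClosed_closure (by simp)
  have hlim : Tendsto (fun κ : ℝ => u y * ENNReal.ofReal (κ ^ 2 * bracketSq x / bracketSq y) ^ α)
      (𝓝 κ₀) (𝓝 (u y)) := by
    have hone : ENNReal.ofReal (κ₀ ^ 2 * bracketSq x / bracketSq y) ^ α = 1 := by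
      rw [hκ₀, sq_sqrt (by positivity), div_mul_cancel₀ _ hJx.ne', div_self hJy.ne',
        ENNReal.ofReal_one, ENNReal.one_rpow]
    have hcont : Continuous fun κ : ℝ =>
        ENNReal.ofReal (κ ^ 2 * bracketSq x / bracketSq y) ^ α :=
      ENNReal.continuous_rpow_const.comp (ENNReal.continuous_ofReal.comp (by fun_prop))
    simpa [hone] using ENNReal.Tendsto.const_mul (hcont.tendsto κ₀) (Or.inr hy)
  refine le_of_tendsto_of_frequently hlim ?_
  refine (hfreq.and_eventually (lt_mem_nhds hκ₀_pos)).mono ?_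
  rintro κ ⟨⟨hlt, hdom⟩, hpos⟩
  refine hdom hpos ?_
  rw [← lt_div_iff₀ hJx]
  exact (lt_sqrt hpos.le).1 hlt

variable [InnerProductSpace ℝ V]

lemma dominatesAt_inversion_iff {a x : V} {r : ℝ} :
    DominatesAt u α x (inversion a r x) (r / dist x a) ↔ (inversionFactor a r x < 1 →
      u (inversion a r x) * ENNReal.ofReal (inversionFactor a r x) ^ α ≤ u x) := by
  have hfactor : inversionFactor a r x =
      (r / dist x a) ^ 2 * bracketSq x / bracketSq (inversion a r x) := by
    rw [inversionFactor, div_pow, div_mul_eq_mul_div, div_div]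
  rw [DominatesAt, hfactor, div_lt_one (bracketSq_pos _)]

variable [MeasurableSpace V] [BorelSpace V] [FiniteDimensional ℝ V]

lemma ae_ae_dominatesAt_inversion (hu : Measurable u)
    (h : ∀ (a : V) (r : ℝ), 0 < r → r ^ 2 ≠ bracketSq a → ∀ᵐ x, inversionFactor a r x < 1 →
      u (inversion a r x) * ENNReal.ofReal (inversionFactor a r x) ^ α ≤ u x) :
    ∀ᵐ x : V, ∀ᵐ z : V × ℝ, 0 < z.2 ∧ z.2 ^ 2 ≠ bracketSq z.1 →
      DominatesAt u α x (inversion z.1 z.2 x) (z.2 / dist x z.1) := by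
  have hpos : MeasurableSet {w : (V × ℝ) × V | 0 < w.1.2} :=
    measurableSet_lt (by fun_prop) (by fun_prop)
  have hne : MeasurableSet {w : (V × ℝ) × V | w.1.2 ^ 2 ≠ bracketSq w.1.1} :=
    (measurableSet_eq_fun (by fun_prop) (by fun_prop)).compl
  have hinv : Measurable fun w : (V × ℝ) × V => inversion w.1.1 w.1.2 w.2 := by
    simp only [inversion, vsub_eq_sub, vadd_eq_add]
    fun_prop
  refine (Measure.ae_ae_comm (measurableSet_imp_dominatesAt hu (hpos.inter hne) measurable_snd hinv
    (by fun_prop))).1 (Eventually.of_forall fun z => ?_)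
  by_cases hz : 0 < z.2 ∧ z.2 ^ 2 ≠ bracketSq z.1
  · filter_upwards [h z.1 z.2 hz.1 hz.2] with x hx _ using dominatesAt_inversion_iff.2 hx
  · exact Eventually.of_forall fun x hz' => absurd hz' hz

lemma ae_ae_ae_dominatesAt_homothety [Nontrivial V]
    (h : ∀ᵐ x : V, ∀ᵐ z : V × ℝ, 0 < z.2 ∧ z.2 ^ 2 ≠ bracketSq z.1 →
      DominatesAt u α x (inversion z.1 z.2 x) (z.2 / dist x z.1)) :
    ∀ᵐ x : V, ∀ᵐ a : V, ∀ᵐ κ : ℝ, 0 < κ → DominatesAt u α x (κ ^ 2 • (x - a) + a) κ := by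
  filter_upwards [h] with x hx
  rw [Measure.volume_eq_prod] at hx
  filter_upwards [Measure.ae_ae_of_ae_prod hx, Measure.ae_ne volume x] with a ha hax
  have hd : 0 < dist x a := dist_pos.2 hax.symm
  filter_upwards [ae_smul_add volume hd.ne' 0 ha,
    Measure.ae_ne volume (√(bracketSq a) / dist x a)] with κ hκ hκ_ne hκ_pos
  have hratio : dist x a * κ / dist x a = κ := mul_div_cancel_left₀ κ hd.ne'
  have hinv : inversion a (dist x a * κ) x = κ ^ 2 • (x - a) + a := by
    simp only [inversion, hratio, vsub_eq_sub, vadd_eq_add]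
  simp only [smul_eq_mul, add_zero, hratio, hinv] at hκ
  refine hκ ⟨by positivity, fun hsq => hκ_ne ?_⟩
  rw [← hsq, sqrt_sq (by positivity), hratio]

lemma ae_ae_ae_dominatesAt (hu : Measurable u)
    (h : ∀ᵐ x : V, ∀ᵐ a : V, ∀ᵐ κ : ℝ, 0 < κ → DominatesAt u α x (κ ^ 2 • (x - a) + a) κ) :
    ∀ᵐ x : V, ∀ᵐ y : V, ∀ᵐ κ : ℝ, 0 < κ → DominatesAt u α x y κ := by
  filter_upwards [h] with x hx
  have hx' := (Measure.ae_ae_comm (measurableSet_imp_dominatesAt hu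
    (measurableSet_lt measurable_const measurable_snd) measurable_const (by fun_prop)
    measurable_snd)).1 hx
  refine (Measure.ae_ae_comm (measurableSet_imp_dominatesAt hu
    (measurableSet_lt measurable_const measurable_fst) measurable_const measurable_snd
    measurable_fst)).1 ?_
  filter_upwards [hx', Measure.ae_ne volume (1 : ℝ)] with κ hκ hκ_ne
  by_cases hκ_pos : 0 < κ
  · have hc : 1 - κ ^ 2 ≠ 0 := fun h0 => hκ_ne <|
      (pow_eq_one_iff_of_nonneg hκ_pos.le two_ne_zero).1 (sub_eq_zero.1 h0).symm
    filter_upwards [ae_smul_add volume (inv_ne_zero hc) (-((1 - κ ^ 2)⁻¹ * κ ^ 2) • x) hκ]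
      with y hy _
    convert hy hκ_pos using 1
    match_scalars <;> field_simp <;> ring
  · exact Eventually.of_forall fun y hκ_pos' => absurd hκ_pos' hκ_pos

/-- Almost every pair of points is exchanged by a one-parameter family of inversions. -/
theorem exists_ae_eq_of_inversion_le [Nontrivial V] (hu : Measurable u)
    (hu_top : ∀ x, u x ≠ ∞)
    (h : ∀ (a : V) (r : ℝ), 0 < r → r ^ 2 ≠ bracketSq a → ∀ᵐ x, inversionFactor a r x < 1 →
      u (inversion a r x) * ENNReal.ofReal (inversionFactor a r x) ^ α ≤ u x) :
    ∃ x₀, ∀ᵐ x, u x = u x₀ := by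
  have hdom := ae_ae_ae_dominatesAt hu
    (ae_ae_ae_dominatesAt_homothety (ae_ae_dominatesAt_inversion hu h))
  exact exists_ae_eq_of_ae_ae_le hu
    (hdom.mono fun x hx => hx.mono fun y hy => le_of_ae_dominatesAt (hu_top y) hy)

end Constancy

/-! ### The sharp inequality for bounded densities on the sphere -/

lemma IsCompetitor.polarize {X : Type*} [MeasurableSpace X] {μ : Measure X} [SFinite μ]
    {k : X → X → ℝ≥0∞} {α β : ℝ} (R : ConformalReflection μ k α β)
    (hk : Measurable (Function.uncurry k)) {C : NNReal} {g u : X → ℝ≥0∞}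
    (hu : IsCompetitor μ k ((α + β) / α) C g u) :
    IsCompetitor μ k ((α + β) / α) C g (R.polarize u) where
  measurable := R.measurable_polarize hu.measurable
  le_bound := R.polarize_le hu.le_bound
  lintegral_rpow_le := (R.lintegral_polarize_rpow hu.measurable).trans_le hu.lintegral_rpow_le
  energy_le := hu.energy_le.trans (R.energy_le_energy_polarize hk hu.measurable)

lemma energy_congr_ae {X : Type*} [MeasurableSpace X] {μ : Measure X} {k : X → X → ℝ≥0∞}
    {u v : X → ℝ≥0∞} (h : u =ᵐ[μ] v) : energy μ k u = energy μ k v :=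
  lintegral_congr_ae <| h.mono fun x hx => lintegral_congr_ae <| h.mono fun y hy => by
    simp only [hx, hy]

lemma energy_const {X : Type*} [MeasurableSpace X] {μ : Measure X} {k : X → X → ℝ≥0∞} {c : ℝ≥0∞}
    (hc : c ≠ ∞) : energy μ k (fun _ => c) = c ^ 2 * ∫⁻ x, ∫⁻ y, k x y ∂μ ∂μ := by
  have hcc : c * c ≠ ∞ := by finiteness
  simp only [energy, lintegral_const_mul' _ _ hcc, sq]

section BoundedHLS

variable {n : ℕ}

lemma ae_conformalMeasure_iff {p : EuclideanSpace ℝ (Fin n) → Prop} :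
    (∀ᵐ x ∂conformalMeasure n, p x) ↔ ∀ᵐ x, p x := by
  refine ⟨fun h => ?_, fun h => (withDensity_absolutelyContinuous volume _).ae_le h⟩
  refine (withDensity_absolutelyContinuous' (by fun_prop) ?_).ae_le h
  exact Eventually.of_forall fun x =>
    (ENNReal.ofReal_pos.2 (rpow_pos_of_pos (bracketSq_pos x) _)).ne'

instance [NeZero n] : IsFiniteMeasure (conformalMeasure n) := by
  have hn : (0 : ℝ) < n := by exact_mod_cast NeZero.pos n
  have hint := integrable_rpow_neg_one_add_norm_sq
    (μ := (volume : Measure (EuclideanSpace ℝ (Fin n)))) (r := 2 * n) (by simpa using by linarith)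
  refine isFiniteMeasure_withDensity_ofReal (Integrable.hasFiniteIntegral ?_)
  simpa only [bracketSq, neg_mul_eq_mul_neg, mul_div_cancel_left₀ _ (two_ne_zero' ℝ)] using hint

lemma ae_inversion_le_of_maximal [NeZero n] {s : ℝ} (hs : |s| < n) {C : NNReal}
    {g u : EuclideanSpace ℝ (Fin n) → ℝ≥0∞}
    (hu : IsCompetitor (conformalMeasure n) (chordalKernel (n - s)) (2 * n / (n + s)) C g u)
    (hmax : ∀ v, IsCompetitor (conformalMeasure n) (chordalKernel (n - s)) (2 * n / (n + s)) C g v →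
      ∫⁻ x, v x ∂conformalMeasure n ≤ ∫⁻ x, u x ∂conformalMeasure n)
    (a : EuclideanSpace ℝ (Fin n)) {r : ℝ} (hr : 0 < r) (hra : r ^ 2 ≠ bracketSq a) :
    ∀ᵐ x, inversionFactor a r x < 1 →
      u (inversion a r x) * ENNReal.ofReal (inversionFactor a r x) ^ ((n + s) / 2) ≤ u x := by
  let R := inversionReflection hs hr hra
  have hp : 2 * n / (n + s) = (((n : ℝ) + s) / 2 + (n - s) / 2) / ((n + s) / 2) := by
    field_simp
    ring
  have hu_top (x) : u x ≠ ∞ := ne_top_of_le_ne_top ENNReal.coe_ne_top (hu.le_bound x)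
  have hu_fin : ∫⁻ x, u x ∂conformalMeasure n ≠ ∞ :=
    ne_top_of_le_ne_top (by rw [lintegral_const]; finiteness) (lintegral_mono hu.le_bound)
  rw [hp] at hu hmax
  have hle := R.ae_reflect_le_of_lintegral_polarize_le hu.measurable hu_top hu_fin
    (hmax _ (hu.polarize R (measurable_chordalKernel _)))
  filter_upwards [ae_conformalMeasure_iff.1 hle] with x hx hlt
  exact hx (ENNReal.ofReal_lt_one.2 hlt)

lemma energy_const_mul_rpow {X : Type*} [MeasurableSpace X] {μ : Measure X} {k : X → X → ℝ≥0∞}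
    {c : ℝ≥0∞} (hc : c ≠ ∞) {p q : ℝ} (hq : 0 ≤ q) (hpq : p * q = 2) :
    energy μ k (fun _ => c) * μ Set.univ ^ q =
      (∫⁻ x, ∫⁻ y, k x y ∂μ ∂μ) * (∫⁻ _, c ^ p ∂μ) ^ q := by
  rw [energy_const hc, lintegral_const, ENNReal.mul_rpow_of_nonneg _ _ hq, ← ENNReal.rpow_mul,
    hpq, ENNReal.rpow_two]
  ring

theorem energy_chordalKernel_le_of_bounded [NeZero n] {s : ℝ} (hs : s ∈ Set.Ioo (0 : ℝ) n)
    (hfin : ∫⁻ x, ∫⁻ y, chordalKernel (n - s) x y ∂conformalMeasure n ∂conformalMeasure n ≠ ∞)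
    {C : NNReal} {g : EuclideanSpace ℝ (Fin n) → ℝ≥0∞} (hg : Measurable g) (hgC : ∀ x, g x ≤ C) :
    energy (conformalMeasure n) (chordalKernel (n - s)) g *
        conformalMeasure n Set.univ ^ ((n + s) / n) ≤
      (∫⁻ x, ∫⁻ y, chordalKernel (n - s) x y ∂conformalMeasure n ∂conformalMeasure n) *
        (∫⁻ x, g x ^ (2 * n / (n + s)) ∂conformalMeasure n) ^ ((n + s) / n) := by
  obtain ⟨hs0, hsn⟩ := hs
  have hn : 0 < (n : ℝ) := hs0.trans hsn
  have hp : 1 < 2 * n / (n + s) := by rw [one_lt_div] <;> linarith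
  obtain ⟨u, hu, hmax⟩ := exists_isCompetitor_maximal_lintegral (measurable_chordalKernel _) hfin
    hp hg hgC
  have hu_top (x) : u x ≠ ∞ := ne_top_of_le_ne_top ENNReal.coe_ne_top (hu.le_bound x)
  obtain ⟨x₀, hconst⟩ := exists_ae_eq_of_inversion_le hu.measurable hu_top fun a r =>
    ae_inversion_le_of_maximal (abs_lt.2 ⟨by linarith, hsn⟩) hu hmax a
  have hconst' : u =ᵐ[conformalMeasure n] fun _ => u x₀ := ae_conformalMeasure_iff.2 hconst
  calc _ ≤ energy (conformalMeasure n) (chordalKernel (n - s)) u *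
          conformalMeasure n Set.univ ^ ((n + s) / n) := by gcongr; exact hu.energy_le
    _ = _ * (∫⁻ x, u x ^ (2 * n / (n + s)) ∂conformalMeasure n) ^ ((n + s) / n) := by
        rw [energy_congr_ae hconst', energy_const_mul_rpow (hu_top x₀) (p := 2 * n / (n + s))
          (by positivity) (by field_simp)]
        congr 2
        exact (lintegral_congr_ae (hconst'.mono fun x hx => by simp only [hx])).symm
    _ ≤ _ := by gcongr _ * ?_ ^ _; exact hu.lintegral_rpow_le

end BoundedHLS

/-! ### The sharp Hardy–Littlewood–Sobolev inequality -/

section BracketIntegral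

variable {V : Type*} [NormedAddCommGroup V] [InnerProductSpace ℝ V] [FiniteDimensional ℝ V]
  [MeasurableSpace V] [BorelSpace V]

lemma ofReal_integral_eq_lintegral_of_ne_zero {X : Type*} [MeasurableSpace X] {μ : Measure X}
    {f : X → ℝ} (hf : 0 ≤ᵐ[μ] f) (h : ∫ x, f x ∂μ ≠ 0) :
    ∫⁻ x, ENNReal.ofReal (f x) ∂μ = ENNReal.ofReal (∫ x, f x ∂μ) :=
  (ofReal_integral_eq_lintegral_ofReal (.of_integral_ne_zero h) hf).symm

lemma lintegral_exp_neg_mul_sq_norm {b : ℝ} (hb : 0 < b) :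
    ∫⁻ x : V, ENNReal.ofReal (exp (-b * ‖x‖ ^ 2)) =
      ENNReal.ofReal ((π / b) ^ (Module.finrank ℝ V / 2 : ℝ)) := by
  rw [← GaussianFourier.integral_rexp_neg_mul_sq_norm hb, ofReal_integral_eq_lintegral_of_ne_zero]
  · exact Eventually.of_forall fun x => (exp_pos _).le
  · rw [GaussianFourier.integral_rexp_neg_mul_sq_norm hb]
    exact (by positivity : 0 < (π / b) ^ (Module.finrank ℝ V / 2 : ℝ)).ne'

lemma lintegral_rpow_mul_exp_neg_mul_Ioi {a b : ℝ} (ha : 0 < a) (hb : 0 < b) :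
    ∫⁻ t in Set.Ioi (0 : ℝ), ENNReal.ofReal (t ^ (a - 1) * exp (-(b * t))) =
      ENNReal.ofReal (Gamma a * b ^ (-a)) := by
  have hint : ∫ t in Set.Ioi (0 : ℝ), t ^ (a - 1) * exp (-(b * t)) = Gamma a * b ^ (-a) := by
    rw [integral_rpow_mul_exp_neg_mul_Ioi ha hb, one_div, inv_rpow hb.le, rpow_neg hb.le, mul_comm]
  rw [← hint, ofReal_integral_eq_lintegral_of_ne_zero]
  · filter_upwards [ae_restrict_mem measurableSet_Ioi] with t ht
    exact mul_nonneg (rpow_nonneg (le_of_lt ht) _) (exp_pos _).le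
  · rw [hint]
    exact (mul_pos (Gamma_pos_of_pos ha) (rpow_pos_of_pos hb _)).ne'

/-- The value of `∫ bracketSq x ^ (-a) dx` in dimension `n`, for `n / 2 < a`. -/
noncomputable def bracketIntegral (n : ℕ) (a : ℝ) : ℝ :=
  π ^ ((n : ℝ) / 2) * Gamma (a - n / 2) / Gamma a

lemma bracketIntegral_pos {n : ℕ} {a : ℝ} (ha : (n : ℝ) / 2 < a) : 0 < bracketIntegral n a := by
  have ha0 : 0 < a := lt_of_le_of_lt (by positivity) ha
  have := Gamma_pos_of_pos ha0
  have := Gamma_pos_of_pos (sub_pos.2 ha)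
  unfold bracketIntegral
  positivity

lemma lintegral_rpow_mul_exp_neg_bracketSq_mul (a : ℝ) {t : ℝ} (ht : 0 < t) :
    ∫⁻ x : V, ENNReal.ofReal (t ^ (a - 1) * exp (-(bracketSq x * t))) =
      ENNReal.ofReal (π ^ (Module.finrank ℝ V / 2 : ℝ)) *
        ENNReal.ofReal (t ^ (a - Module.finrank ℝ V / 2 - 1) * exp (-(1 * t))) := by
  have hsplit (x : V) : ENNReal.ofReal (t ^ (a - 1) * exp (-(bracketSq x * t))) =
      ENNReal.ofReal (t ^ (a - 1) * exp (-t)) * ENNReal.ofReal (exp (-t * ‖x‖ ^ 2)) := by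
    rw [← ENNReal.ofReal_mul (by positivity), mul_assoc, ← exp_add, bracketSq]
    congr 3
    ring
  simp only [hsplit]
  rw [lintegral_const_mul _ (by fun_prop), lintegral_exp_neg_mul_sq_norm ht,
    ← ENNReal.ofReal_mul (by positivity), ← ENNReal.ofReal_mul (by positivity),
    div_rpow pi_pos.le ht.le, sub_right_comm a, rpow_sub ht (a - 1), one_mul]
  ring_nf

/-- Write the power of the bracket as a superposition of Gaussians. -/
theorem lintegral_bracketSq_rpow_neg {a : ℝ} (ha : (Module.finrank ℝ V : ℝ) / 2 < a) :
    ∫⁻ x : V, ENNReal.ofReal (bracketSq x ^ (-a)) =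
      ENNReal.ofReal (bracketIntegral (Module.finrank ℝ V) a) := by
  have ha0 : 0 < a := lt_of_le_of_lt (by positivity) ha
  have hΓ := Gamma_pos_of_pos ha0
  rw [← ENNReal.mul_right_inj (ENNReal.ofReal_pos.2 hΓ).ne' ENNReal.ofReal_ne_top,
    ← lintegral_const_mul _ (by fun_prop)]
  calc _ = ∫⁻ x : V, ∫⁻ t in Set.Ioi (0 : ℝ),
          ENNReal.ofReal (t ^ (a - 1) * exp (-(bracketSq x * t))) := by
        refine lintegral_congr fun x => ?_
        rw [lintegral_rpow_mul_exp_neg_mul_Ioi ha0 (bracketSq_pos x), ENNReal.ofReal_mul hΓ.le]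
    _ = ∫⁻ t in Set.Ioi (0 : ℝ), ∫⁻ x : V,
          ENNReal.ofReal (t ^ (a - 1) * exp (-(bracketSq x * t))) :=
        lintegral_lintegral_swap (Measurable.aemeasurable (by fun_prop))
    _ = ∫⁻ t in Set.Ioi (0 : ℝ), ENNReal.ofReal (π ^ (Module.finrank ℝ V / 2 : ℝ)) *
          ENNReal.ofReal (t ^ (a - Module.finrank ℝ V / 2 - 1) * exp (-(1 * t))) :=
        setLIntegral_congr_fun measurableSet_Ioi fun t ht =>
          lintegral_rpow_mul_exp_neg_bracketSq_mul a ht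
    _ = _ := by
        rw [lintegral_const_mul _ (by fun_prop),
          lintegral_rpow_mul_exp_neg_mul_Ioi (sub_pos.2 ha) one_pos, one_rpow, mul_one,
          ← ENNReal.ofReal_mul (by positivity), ← ENNReal.ofReal_mul hΓ.le, bracketIntegral,
          mul_div_cancel₀ _ hΓ.ne']

end BracketIntegral

section RieszHLS

variable {n : ℕ}

lemma conformalMeasure_univ [NeZero n] :
    conformalMeasure n Set.univ = ENNReal.ofReal (bracketIntegral n n) := by
  have hn : (0 : ℝ) < n := by exact_mod_cast NeZero.pos n
  rw [conformalMeasure, withDensity_apply _ MeasurableSet.univ, Measure.restrict_univ,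
    lintegral_bracketSq_rpow_neg] <;> simp [hn]

lemma chordalDistSq_center_inversion {V : Type*} [NormedAddCommGroup V] [InnerProductSpace ℝ V]
    {a x : V} {r : ℝ} (hr : r ^ 2 = bracketSq a) (hx : x ≠ a) :
    chordalDistSq a (inversion a r x) = (bracketSq x)⁻¹ := by
  have hfactor : inversionFactor a r x = 1 := by
    rw [inversionFactor_eq_one_iff hx, hr, sub_self, mul_zero]
  have hba := bracketSq_pos a
  have hbx := bracketSq_pos x
  have hbi := bracketSq_pos (inversion a r x)
  have hd := dist_ne_zero.2 hx
  calc chordalDistSq a (inversion a r x) = inversionFactor a r x / bracketSq x := by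
        unfold chordalDistSq inversionFactor
        rw [← dist_eq_norm, dist_center_inversion, hr, dist_comm a x]
        field_simp
    _ = (bracketSq x)⁻¹ := by rw [hfactor, one_div]

lemma measurable_chordalKernel_right {V : Type*} [NormedAddCommGroup V] [MeasurableSpace V]
    [BorelSpace V] [SecondCountableTopology V] (l : ℝ) (x : V) : Measurable (chordalKernel l x) :=
  (measurable_chordalKernel l).of_uncurry_left

/-- An isometric inversion of the sphere centred at `x` sends `x` to infinity. -/
lemma lintegral_chordalKernel [NeZero n] {l : ℝ} (hl : l < n) (x : EuclideanSpace ℝ (Fin n)) :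
    ∫⁻ y, chordalKernel l x y ∂conformalMeasure n =
      ENNReal.ofReal (bracketIntegral n (n - l / 2)) := by
  have hr : √(bracketSq x) ^ 2 = bracketSq x := sq_sqrt (bracketSq_pos x).le
  have hk := measurable_chordalKernel_right l x
  have hint := lintegral_bracketSq_rpow_neg (V := EuclideanSpace ℝ (Fin n)) (a := n - l / 2)
    (by rw [finrank_euclideanSpace_fin]; linarith)
  rw [finrank_euclideanSpace_fin] at hint
  rw [← hint, ← lintegral_conformalMeasure_inversion x (sqrt_pos.2 (bracketSq_pos x))
    hk, lintegral_conformalMeasure (by fun_prop)]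
  refine lintegral_congr_ae ?_
  filter_upwards [Measure.ae_ne volume x] with z hz
  have hfactor : inversionFactor x √(bracketSq x) z = 1 := by
    rw [inversionFactor_eq_one_iff hz, hr, sub_self, mul_zero]
  rw [hfactor, chordalKernel, chordalDistSq_center_inversion hr hz,
    ENNReal.ofReal_inv_of_pos (bracketSq_pos z), inv_inv, ENNReal.ofReal_one, ENNReal.one_rpow,
    mul_one, ENNReal.ofReal_rpow_of_pos (bracketSq_pos z),
    ← ENNReal.ofReal_mul (rpow_nonneg (bracketSq_pos z).le _), ← rpow_add (bracketSq_pos z)]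
  ring_nf

/-- The kernel `‖x - y‖ ^ (-l)`, infinite on the diagonal for `0 < l`. -/
noncomputable def rieszKernel {V : Type*} [NormedAddCommGroup V] (l : ℝ) (x y : V) : ℝ≥0∞ :=
  (ENNReal.ofReal (‖x - y‖ ^ 2))⁻¹ ^ (l / 2)

lemma chordalKernel_eq_rieszKernel_mul {V : Type*} [NormedAddCommGroup V] {l : ℝ} (hl : 0 ≤ l)
    (x y : V) : chordalKernel l x y = rieszKernel l x y *
      ENNReal.ofReal (bracketSq x) ^ (l / 2) * ENNReal.ofReal (bracketSq y) ^ (l / 2) := by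
  rw [rieszKernel, inv_ofReal_rpow_mul (bracketSq_pos x) (by positivity),
    inv_ofReal_rpow_mul (bracketSq_pos y) (by positivity), div_div, chordalKernel, chordalDistSq]

lemma ofReal_bracketSq_rpow_mul_rpow {V : Type*} [NormedAddCommGroup V] (x : V) (b c : ℝ) :
    ENNReal.ofReal (bracketSq x) ^ b * ENNReal.ofReal (bracketSq x) ^ c =
      ENNReal.ofReal (bracketSq x) ^ (b + c) :=
  (ENNReal.rpow_add b c (ENNReal.ofReal_pos.2 (bracketSq_pos x)).ne' ENNReal.ofReal_ne_top).symm

lemma energy_conformalMeasure [NeZero n] {l : ℝ} (hl : 0 ≤ l) {f : EuclideanSpace ℝ (Fin n) → ℝ≥0∞}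
    (hf : Measurable f) :
    energy (conformalMeasure n) (chordalKernel l)
        (fun x => f x * ENNReal.ofReal (bracketSq x) ^ (n - l / 2)) =
      energy volume (rieszKernel l) f := by
  let w (z : EuclideanSpace ℝ (Fin n)) := ENNReal.ofReal (bracketSq z ^ (-(n : ℝ))) *
    (ENNReal.ofReal (bracketSq z) ^ (n - l / 2) * ENNReal.ofReal (bracketSq z) ^ (l / 2))
  have hw (z : EuclideanSpace ℝ (Fin n)) : w z = 1 := by
    unfold w
    rw [← ENNReal.ofReal_rpow_of_pos (bracketSq_pos z), ofReal_bracketSq_rpow_mul_rpow,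
      ofReal_bracketSq_rpow_mul_rpow]
    simp
  let g (x : EuclideanSpace ℝ (Fin n)) := f x * ENNReal.ofReal (bracketSq x) ^ (n - l / 2)
  have hg : Measurable g := by fun_prop
  rw [energy, lintegral_conformalMeasure
    (measurable_lintegral_mul_kernel (measurable_chordalKernel l) hg hg)]
  refine lintegral_congr fun x => ?_
  have := measurable_chordalKernel_right l x
  rw [lintegral_conformalMeasure (by fun_prop), ← lintegral_const_mul' _ _ ENNReal.ofReal_ne_top]
  refine lintegral_congr fun y => ?_
  rw [chordalKernel_eq_rieszKernel_mul hl]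
  calc _ = f x * f y * rieszKernel l x y * w x * w y := by unfold g w; ring
    _ = _ := by rw [hw, hw, mul_one, mul_one]

lemma lintegral_conformalMeasure_rpow {b p : ℝ} (hp : 0 ≤ p) (hbp : b * p = n)
    {f : EuclideanSpace ℝ (Fin n) → ℝ≥0∞} (hf : Measurable f) :
    ∫⁻ x, (f x * ENNReal.ofReal (bracketSq x) ^ b) ^ p ∂conformalMeasure n = ∫⁻ x, f x ^ p := by
  rw [lintegral_conformalMeasure (by fun_prop)]
  refine lintegral_congr fun x => ?_
  rw [ENNReal.mul_rpow_of_nonneg _ _ hp, ← ENNReal.rpow_mul, hbp, mul_left_comm,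
    ← ENNReal.ofReal_rpow_of_pos (bracketSq_pos x), ofReal_bracketSq_rpow_mul_rpow]
  simp

theorem energy_rieszKernel_le_of_bracket_bound [NeZero n] {s : ℝ} (hs : s ∈ Set.Ioo (0 : ℝ) n)
    {C : NNReal} {f : EuclideanSpace ℝ (Fin n) → ℝ≥0∞} (hf : Measurable f)
    (hfC : ∀ x, f x * ENNReal.ofReal (bracketSq x) ^ ((n + s) / 2) ≤ C) :
    energy volume (rieszKernel (n - s)) f * ENNReal.ofReal (bracketIntegral n n) ^ ((n + s) / n) ≤
      ENNReal.ofReal (bracketIntegral n ((n + s) / 2)) * ENNReal.ofReal (bracketIntegral n n) *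
        (∫⁻ x, f x ^ (2 * n / (n + s))) ^ ((n + s) / n) := by
  obtain ⟨hs0, hsn⟩ := hs
  have hn : (0 : ℝ) < n := hs0.trans hsn
  have hexp : (n : ℝ) - (n - s) / 2 = (n + s) / 2 := by ring
  have hkernel : ∫⁻ x, ∫⁻ y, chordalKernel (n - s) x y ∂conformalMeasure n ∂conformalMeasure n =
      ENNReal.ofReal (bracketIntegral n ((n + s) / 2)) * ENNReal.ofReal (bracketIntegral n n) := by
    simp only [lintegral_chordalKernel (sub_lt_self _ hs0), lintegral_const, conformalMeasure_univ,
      hexp]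
  have h := energy_chordalKernel_le_of_bounded ⟨hs0, hsn⟩ (by rw [hkernel]; finiteness)
    (by fun_prop) hfC
  rwa [hkernel, conformalMeasure_univ, ← hexp, energy_conformalMeasure (by linarith) hf, hexp,
    lintegral_conformalMeasure_rpow (by positivity) (by field_simp) hf] at h

end RieszHLS

/-! ### The Riesz potential on the Fourier side -/

section GaussianKernel

variable {V : Type*} [NormedAddCommGroup V] [NormedSpace ℝ V]

/-- The convolution kernel of the Fourier multiplier `exp (-b * ‖ξ‖ ^ 2)`. -/
noncomputable def gaussianKernel (b : ℝ) (x y : V) : ℝ :=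
  (π / b) ^ (Module.finrank ℝ V / 2 : ℝ) * exp (-π ^ 2 * ‖x - y‖ ^ 2 / b)

lemma gaussianKernel_nonneg {b : ℝ} (hb : 0 < b) (x y : V) : 0 ≤ gaussianKernel b x y := by
  unfold gaussianKernel
  positivity

lemma rpow_mul_gaussianKernel (s : ℝ) {t : ℝ} (ht : 0 < t) (x y : V) :
    t ^ (s / 2 - 1) * gaussianKernel (4 * π ^ 2 * t) x y =
      (4 * π) ^ (-(Module.finrank ℝ V / 2 : ℝ)) *
        (t ^ (-((Module.finrank ℝ V - s) / 2) - 1) * exp (-((‖x - y‖ ^ 2 / 4) / t))) := by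
  have hscale : π / (4 * π ^ 2 * t) = (4 * π * t)⁻¹ := by field_simp
  have hexp : -π ^ 2 * ‖x - y‖ ^ 2 / (4 * π ^ 2 * t) = -((‖x - y‖ ^ 2 / 4) / t) := by field_simp
  have hpow : -((Module.finrank ℝ V - s) / 2) - 1 =
      (s / 2 - 1) + -(Module.finrank ℝ V / 2 : ℝ) := by ring
  rw [gaussianKernel, hscale, hexp, inv_rpow (by positivity), ← rpow_neg (by positivity),
    mul_rpow (by positivity) ht.le, hpow, rpow_add ht]
  ring

end GaussianKernel

section Gaussian

variable {V : Type*} [NormedAddCommGroup V] [InnerProductSpace ℝ V] [FiniteDimensional ℝ V]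
  [MeasurableSpace V] [BorelSpace V]

lemma integral_fourier_mul_eq {f g : V → ℂ} (hf : Integrable f) (hg : Integrable g) :
    ∫ ξ, 𝓕 f ξ * g ξ = ∫ x, f x * 𝓕 g x := by
  simpa using! VectorFourier.integral_fourierIntegral_smul_eq_flip (L := innerₗ V)
    continuous_fourierChar continuous_inner hf hg

lemma integral_inner_fourier_eq {f g : V → ℂ} (hf : Integrable f) (hg : Integrable g) :
    ∫ ξ, inner ℂ (𝓕 f ξ) (g ξ) = ∫ x, inner ℂ (f x) (𝓕⁻ g x) := by
  simpa using! VectorFourier.integral_sesq_fourierIntegral_eq_neg_flip (innerSL ℂ) (L := innerₗ V)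
    continuous_fourierChar continuous_inner hf hg

lemma continuous_fourier {f : V → ℂ} (hf : Integrable f) : Continuous (𝓕 f) :=
  VectorFourier.fourierIntegral_continuous continuous_fourierChar continuous_inner hf

lemma norm_fourier_le_integral_norm (f : V → ℂ) (ξ : V) : ‖𝓕 f ξ‖ ≤ ∫ x, ‖f x‖ :=
  VectorFourier.norm_fourierIntegral_le_integral_norm _ _ _ _ _

lemma integrable_exp_neg_mul_sq_norm {b : ℝ} (hb : 0 < b) :
    Integrable fun x : V => exp (-b * ‖x‖ ^ 2) := by
  refine .of_integral_ne_zero ?_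
  rw [GaussianFourier.integral_rexp_neg_mul_sq_norm hb]
  exact (by positivity : 0 < (π / b) ^ (Module.finrank ℝ V / 2 : ℝ)).ne'

lemma fourierInv_fourier_mul_exp {g : V → ℂ} (hg : Integrable g) {b : ℝ} (hb : 0 < b) (x : V) :
    𝓕⁻ (fun ξ => 𝓕 g ξ * (exp (-b * ‖ξ‖ ^ 2) : ℂ)) x = ∫ y, g y * (gaussianKernel b x y : ℂ) := by
  have hb' : 0 < (b : ℂ).re := by simpa using hb
  have hflip := integral_fourier_mul_eq hg
    (GaussianFourier.integrable_cexp_neg_mul_sq_norm_add hb' (2 * π * Complex.I) x)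
  simp only [fourier_gaussian_innerProductSpace' hb' x] at hflip
  rw [fourierInv_eq']
  convert hflip using 1
  · refine integral_congr_ae (Eventually.of_forall fun ξ => ?_)
    simp only [smul_eq_mul]
    rw [mul_left_comm]
    congr 1
    push_cast
    rw [← Complex.exp_add, real_inner_comm]
    ring_nf
  · refine integral_congr_ae (Eventually.of_forall fun y => ?_)
    simp only [gaussianKernel]
    push_cast
    rw [Complex.ofReal_cpow (by positivity)]
    push_cast
    rfl

lemma lintegral_enorm_fourier_sq_mul_exp {g : V → ℂ} (hg : Integrable g) {b : ℝ} (hb : 0 < b) :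
    ∫⁻ ξ, ‖𝓕 g ξ‖ₑ ^ 2 * ENNReal.ofReal (exp (-b * ‖ξ‖ ^ 2)) =
      ‖∫ ξ, inner ℂ (𝓕 g ξ) (𝓕 g ξ * (exp (-b * ‖ξ‖ ^ 2) : ℂ))‖ₑ := by
  have hint : Integrable fun ξ => ‖𝓕 g ξ‖ ^ 2 * exp (-b * ‖ξ‖ ^ 2) := by
    refine (integrable_exp_neg_mul_sq_norm hb).bdd_mul (c := (∫ x, ‖g x‖) ^ 2)
      ((continuous_fourier hg).norm.pow 2).aestronglyMeasurable
      (Eventually.of_forall fun ξ => ?_)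
    rw [norm_pow, norm_norm]
    gcongr
    exact norm_fourier_le_integral_norm g ξ
  have hinner (ξ : V) : inner ℂ (𝓕 g ξ) (𝓕 g ξ * (exp (-b * ‖ξ‖ ^ 2) : ℂ)) =
      ((‖𝓕 g ξ‖ ^ 2 * exp (-b * ‖ξ‖ ^ 2) : ℝ) : ℂ) := by
    rw [mul_comm (𝓕 g ξ), ← smul_eq_mul, inner_smul_right, inner_self_eq_norm_sq_to_K, mul_comm]
    push_cast
    rfl
  simp only [hinner]
  rw [integral_complex_ofReal, ← ofReal_norm, Complex.norm_real,
    norm_of_nonneg (integral_nonneg fun ξ => by positivity),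
    ofReal_integral_eq_lintegral_ofReal hint (Eventually.of_forall fun ξ => by positivity)]
  refine lintegral_congr fun ξ => ?_
  rw [ENNReal.ofReal_mul (by positivity), ENNReal.ofReal_pow (by positivity), ofReal_norm]

lemma lintegral_enorm_fourier_sq_mul_exp_le {g : V → ℂ} (hg : Integrable g) {b : ℝ} (hb : 0 < b) :
    ∫⁻ ξ, ‖𝓕 g ξ‖ₑ ^ 2 * ENNReal.ofReal (exp (-b * ‖ξ‖ ^ 2)) ≤
      energy volume (fun x y => ENNReal.ofReal (gaussianKernel b x y)) (‖g ·‖ₑ) := by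
  have hsmooth : Integrable fun ξ => 𝓕 g ξ * (exp (-b * ‖ξ‖ ^ 2) : ℂ) :=
    (integrable_exp_neg_mul_sq_norm hb).ofReal.bdd_mul (continuous_fourier hg).aestronglyMeasurable
      (Eventually.of_forall (norm_fourier_le_integral_norm g))
  rw [lintegral_enorm_fourier_sq_mul_exp hg hb, integral_inner_fourier_eq hg hsmooth]
  refine (enorm_integral_le_lintegral_enorm _).trans (lintegral_mono fun x => ?_)
  calc ‖inner ℂ (g x) (𝓕⁻ (fun ξ => 𝓕 g ξ * (exp (-b * ‖ξ‖ ^ 2) : ℂ)) x)‖ₑ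
      = ‖g x‖ₑ * ‖∫ y, g y * (gaussianKernel b x y : ℂ)‖ₑ := by
        rw [RCLike.inner_apply, enorm_mul, RCLike.enorm_conj, mul_comm,
          fourierInv_fourier_mul_exp hg hb]
    _ ≤ ‖g x‖ₑ * ∫⁻ y, ‖g y * (gaussianKernel b x y : ℂ)‖ₑ := by
        gcongr
        exact enorm_integral_le_lintegral_enorm _
    _ = ∫⁻ y, ‖g x‖ₑ * ‖g y‖ₑ * ENNReal.ofReal (gaussianKernel b x y) := by
        rw [← lintegral_const_mul' _ _ (by simp)]
        refine lintegral_congr fun y => ?_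
        rw [enorm_mul, mul_assoc, ← ofReal_norm (gaussianKernel b x y : ℂ), Complex.norm_real,
          norm_of_nonneg (gaussianKernel_nonneg hb x y)]

end Gaussian

section Subordination

lemma lintegral_rpow_mul_exp_neg_div_Ioi {a b : ℝ} (ha : 0 < a) (hb : 0 < b) :
    ∫⁻ t in Set.Ioi (0 : ℝ), ENNReal.ofReal (t ^ (-a - 1) * exp (-(b / t))) =
      ENNReal.ofReal (Gamma a * b ^ (-a)) := by
  have himage : (fun t : ℝ => t⁻¹) '' Set.Ioi 0 = Set.Ioi 0 := by
    ext t
    simp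
  have hsubst := lintegral_image_eq_lintegral_abs_deriv_mul (s := Set.Ioi 0) measurableSet_Ioi
    (fun t (ht : 0 < t) => (hasDerivAt_inv ht.ne').hasDerivWithinAt) inv_injective.injOn
    (fun t => ENNReal.ofReal (t ^ (-a - 1) * exp (-(b / t))))
  rw [himage] at hsubst
  rw [hsubst, ← lintegral_rpow_mul_exp_neg_mul_Ioi ha hb]
  refine setLIntegral_congr_fun measurableSet_Ioi fun t (ht : 0 < t) => ?_
  have hpow : (t ^ 2)⁻¹ * t⁻¹ ^ (-a - 1) = t ^ (a - 1) := by
    rw [inv_rpow ht.le, ← rpow_neg ht.le, ← rpow_natCast, ← rpow_neg ht.le, ← rpow_add ht]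
    congr 1
    push_cast
    ring
  rw [← ENNReal.ofReal_mul (by positivity), abs_neg, abs_of_pos (by positivity), div_inv_eq_mul,
    ← mul_assoc, hpow]

lemma lintegral_rpow_mul_exp_neg_mul_sq {s r : ℝ} (hs : 0 < s) (hr : 0 < r) :
    ∫⁻ t in Set.Ioi (0 : ℝ),
        ENNReal.ofReal (t ^ (s / 2 - 1)) * ENNReal.ofReal (exp (-(4 * π ^ 2 * t) * r ^ 2)) =
      ENNReal.ofReal (Gamma (s / 2)) * ENNReal.ofReal ((2 * π * r) ^ (-s)) := by
  have hpow : ((2 * π * r) ^ 2) ^ (-(s / 2)) = (2 * π * r) ^ (-s) := by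
    rw [← rpow_natCast, ← rpow_mul (by positivity)]
    congr 1
    push_cast
    ring
  rw [← ENNReal.ofReal_mul (Gamma_nonneg_of_nonneg (by positivity)), ← hpow,
    ← lintegral_rpow_mul_exp_neg_mul_Ioi (half_pos hs) (by positivity)]
  refine setLIntegral_congr_fun measurableSet_Ioi fun t (ht : 0 < t) => ?_
  rw [← ENNReal.ofReal_mul (by positivity)]
  ring_nf

lemma energy_const_mul_kernel {X : Type*} [MeasurableSpace X] {μ : Measure X} {c : ℝ≥0∞}
    (hc : c ≠ ∞) (k : X → X → ℝ≥0∞) (u : X → ℝ≥0∞) :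
    energy μ (fun x y => c * k x y) u = c * energy μ k u := by
  simp only [energy, mul_left_comm _ c]
  rw [← lintegral_const_mul' _ _ hc]
  exact lintegral_congr fun x => lintegral_const_mul' _ _ hc

lemma energy_lintegral_kernel {T X : Type*} [MeasurableSpace T] [MeasurableSpace X] {ν : Measure T}
    {μ : Measure X} [SFinite ν] [SFinite μ] {k : T → X → X → ℝ≥0∞} {u : X → ℝ≥0∞}
    (hk : Measurable fun p : (T × X) × X => k p.1.1 p.1.2 p.2) (hu : Measurable u) :
    ∫⁻ t, energy μ (k t) u ∂ν = energy μ (fun x y => ∫⁻ t, k t x y ∂ν) u := by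
  have hku : Measurable fun p : (T × X) × X => u p.1.2 * u p.2 * k p.1.1 p.1.2 p.2 :=
    ((hu.comp (by fun_prop)).mul (hu.comp (by fun_prop))).mul hk
  simp only [energy]
  rw [lintegral_lintegral_swap hku.lintegral_prod_right'.aemeasurable]
  refine lintegral_congr fun x => ?_
  rw [lintegral_lintegral_swap]
  · exact lintegral_congr fun y => lintegral_const_mul _
      (hk.comp (by fun_prop : Measurable fun t => ((t, x), y)))
  · exact (hku.comp (by fun_prop : Measurable fun p : T × X => ((p.1, x), p.2))).aemeasurable

/-- The constant of the Riesz potential `|2πξ| ^ (-s)`, up to the factor `Gamma (s / 2)`; the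
convolution kernel of that multiplier is `rieszConst n s / Gamma (s / 2) * ‖x - y‖ ^ (s - n)`. -/
noncomputable def rieszConst (n : ℕ) (s : ℝ) : ℝ :=
  (4 * π) ^ (-((n : ℝ) / 2)) * (4 ^ ((n - s) / 2) * Gamma ((n - s) / 2))

lemma rieszConst_pos {n : ℕ} {s : ℝ} (hsn : s < n) : 0 < rieszConst n s := by
  have := Gamma_pos_of_pos (half_pos (sub_pos.2 hsn))
  unfold rieszConst
  positivity

variable {V : Type*} [NormedAddCommGroup V] [InnerProductSpace ℝ V]

lemma lintegral_rpow_mul_gaussianKernel {s : ℝ} (hs : s < Module.finrank ℝ V) {x y : V}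
    (hxy : x ≠ y) :
    ∫⁻ t in Set.Ioi (0 : ℝ),
        ENNReal.ofReal (t ^ (s / 2 - 1)) * ENNReal.ofReal (gaussianKernel (4 * π ^ 2 * t) x y) =
      ENNReal.ofReal (rieszConst (Module.finrank ℝ V) s) *
        rieszKernel (Module.finrank ℝ V - s) x y := by
  have hd : 0 < ‖x - y‖ := norm_pos_iff.2 (sub_ne_zero.2 hxy)
  have hpow (a : ℝ) : (‖x - y‖ ^ 2 / 4) ^ (-a) = (‖x - y‖ ^ 2)⁻¹ ^ a * 4 ^ a := by
    rw [rpow_neg (by positivity), ← inv_rpow (by positivity), inv_div, div_eq_inv_mul,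
      mul_rpow (by positivity) (by positivity)]
  have hterm : ∀ t ∈ Set.Ioi (0 : ℝ),
      ENNReal.ofReal (t ^ (s / 2 - 1)) * ENNReal.ofReal (gaussianKernel (4 * π ^ 2 * t) x y) =
        ENNReal.ofReal ((4 * π) ^ (-(Module.finrank ℝ V / 2 : ℝ))) *
          ENNReal.ofReal (t ^ (-((Module.finrank ℝ V - s) / 2) - 1) *
            exp (-((‖x - y‖ ^ 2 / 4) / t))) := fun t (ht : 0 < t) => by
    rw [← ENNReal.ofReal_mul (by positivity), ← ENNReal.ofReal_mul (by positivity),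
      rpow_mul_gaussianKernel s ht]
  rw [setLIntegral_congr_fun measurableSet_Ioi hterm, lintegral_const_mul _ (by fun_prop),
    lintegral_rpow_mul_exp_neg_div_Ioi (half_pos (sub_pos.2 hs)) (by positivity), rieszKernel,
    ← ENNReal.ofReal_inv_of_pos (by positivity), ENNReal.ofReal_rpow_of_pos (by positivity),
    ← ENNReal.ofReal_mul (by positivity), ← ENNReal.ofReal_mul (rieszConst_pos hs).le, rieszConst,
    hpow]
  congr 1
  ring

variable [FiniteDimensional ℝ V] [MeasurableSpace V] [BorelSpace V]

/-- The square of the `L²` norm of `φ` with weight `(2π‖ξ‖) ^ s`; for `φ = 𝓕 f` it is the square of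
the homogeneous Sobolev seminorm of `f`. For `s < 0` the weight takes the junk value `0` at `0`. -/
noncomputable def weightedNormSq (s : ℝ) (φ : V → ℂ) : ℝ≥0∞ :=
  ∫⁻ ξ, ENNReal.ofReal ((2 * π * ‖ξ‖) ^ s) * ‖φ ξ‖ₑ ^ 2

/-- Both kernels are superpositions of Gaussians with the same weight `t ^ (s / 2 - 1)`. -/
theorem weightedNormSq_neg_fourier_le {s : ℝ} (hs0 : 0 < s)
    (hs : s < Module.finrank ℝ V) {g : V → ℂ} (hg : Integrable g) (hgm : Measurable g) :
    ENNReal.ofReal (Gamma (s / 2)) * weightedNormSq (-s) (𝓕 g) ≤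
      ENNReal.ofReal (rieszConst (Module.finrank ℝ V) s) *
        energy volume (rieszKernel (Module.finrank ℝ V - s)) (‖g ·‖ₑ) := by
  have : Nontrivial V := Module.nontrivial_of_finrank_pos (R := ℝ) (by exact_mod_cast hs0.trans hs)
  have hg' := (continuous_fourier hg).measurable
  let k (t : ℝ) (x y : V) := ENNReal.ofReal (t ^ (s / 2 - 1)) *
    ENNReal.ofReal (gaussianKernel (4 * π ^ 2 * t) x y)
  have hk : Measurable fun p : (ℝ × V) × V => k p.1.1 p.1.2 p.2 := by
    unfold k gaussianKernel
    fun_prop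
  calc _ = ∫⁻ ξ, ∫⁻ t in Set.Ioi (0 : ℝ), ENNReal.ofReal (t ^ (s / 2 - 1)) *
          (‖𝓕 g ξ‖ₑ ^ 2 * ENNReal.ofReal (exp (-(4 * π ^ 2 * t) * ‖ξ‖ ^ 2))) := by
        rw [weightedNormSq, ← lintegral_const_mul _ (by fun_prop)]
        refine lintegral_congr_ae ?_
        filter_upwards [Measure.ae_ne volume 0] with ξ hξ
        rw [← mul_assoc, ← lintegral_rpow_mul_exp_neg_mul_sq hs0 (norm_pos_iff.2 hξ),
          ← lintegral_mul_const _ (by fun_prop)]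
        exact lintegral_congr fun t => by ring
    _ = ∫⁻ t in Set.Ioi (0 : ℝ), ∫⁻ ξ, ENNReal.ofReal (t ^ (s / 2 - 1)) *
          (‖𝓕 g ξ‖ₑ ^ 2 * ENNReal.ofReal (exp (-(4 * π ^ 2 * t) * ‖ξ‖ ^ 2))) :=
        lintegral_lintegral_swap (Measurable.aemeasurable (by fun_prop))
    _ ≤ ∫⁻ t in Set.Ioi (0 : ℝ), energy volume (k t) (‖g ·‖ₑ) := by
        refine setLIntegral_mono' measurableSet_Ioi fun t (ht : 0 < t) => ?_
        rw [lintegral_const_mul _ (by fun_prop), energy_const_mul_kernel ENNReal.ofReal_ne_top]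
        gcongr
        exact lintegral_enorm_fourier_sq_mul_exp_le hg (by positivity)
    _ = energy volume (fun x y => ∫⁻ t in Set.Ioi (0 : ℝ), k t x y) (‖g ·‖ₑ) :=
        energy_lintegral_kernel hk hgm.enorm
    _ = _ := by
        rw [← energy_const_mul_kernel ENNReal.ofReal_ne_top]
        refine lintegral_congr fun x => lintegral_congr_ae ?_
        filter_upwards [Measure.ae_ne volume x] with y hy
        rw [lintegral_rpow_mul_gaussianKernel hs hy.symm]

end Subordination

/-! ### The sharp Sobolev inequality -/

section SchwartzDecay

variable {V F : Type*} [NormedAddCommGroup V] [NormedSpace ℝ V] [NormedAddCommGroup F]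
  [NormedSpace ℝ F]

lemma exists_norm_le_mul_bracketSq_rpow_neg (a : ℝ) (f : 𝓢(V, F)) :
    ∃ C : NNReal, ∀ x, ‖f x‖ ≤ C * bracketSq x ^ (-a) := by
  let k := ⌈2 * a⌉₊
  let p := (Finset.Iic (k, 0)).sup fun m => SchwartzMap.seminorm ℝ (E := V) (F := F) m.1 m.2
  refine ⟨⟨2 ^ k * p f, by positivity⟩, fun x => ?_⟩
  have hdecay := SchwartzMap.one_add_le_sup_seminorm_apply (𝕜 := ℝ) (m := (k, 0)) le_rfl le_rfl f x
  rw [norm_iteratedFDeriv_zero] at hdecay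
  have hx := bracketSq_pos x
  have hbracket : bracketSq x ^ a ≤ (1 + ‖x‖) ^ k := by
    rcases le_total 0 a with ha | ha
    · calc bracketSq x ^ a ≤ ((1 + ‖x‖) ^ 2) ^ a := by
            gcongr
            unfold bracketSq
            nlinarith [norm_nonneg x]
        _ = (1 + ‖x‖) ^ (2 * a) := by rw [← rpow_natCast, ← rpow_mul (by positivity)]; simp
        _ ≤ (1 + ‖x‖) ^ (k : ℝ) :=
          rpow_le_rpow_of_exponent_le (by linarith [norm_nonneg x]) (Nat.le_ceil _)
        _ = (1 + ‖x‖) ^ k := rpow_natCast _ _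
    · exact (rpow_le_one_of_one_le_of_nonpos (one_le_bracketSq x) ha).trans
        (one_le_pow₀ (by linarith [norm_nonneg x]))
  rw [rpow_neg hx.le, ← div_eq_mul_inv, le_div_iff₀ (by positivity), mul_comm]
  exact (mul_le_mul_of_nonneg_right hbracket (norm_nonneg _)).trans hdecay

end SchwartzDecay

section Duality

variable {V : Type*} [NormedAddCommGroup V] [InnerProductSpace ℝ V] [FiniteDimensional ℝ V]
  [MeasurableSpace V] [BorelSpace V]

lemma integrable_bracketSq_rpow_neg {a : ℝ} (ha : (Module.finrank ℝ V : ℝ) / 2 < a) :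
    Integrable fun x : V => bracketSq x ^ (-a) := by
  refine ⟨(measurable_bracketSq.pow_const _).aestronglyMeasurable, ?_⟩
  rw [hasFiniteIntegral_iff_ofReal (Eventually.of_forall fun x => by
    have := bracketSq_pos x; positivity), lintegral_bracketSq_rpow_neg ha]
  exact ENNReal.ofReal_lt_top

lemma integrable_rpow_mul_norm_sq {s : ℝ} (hs : 0 < s) (Ψ : 𝓢(V, ℂ)) :
    Integrable fun ξ => (2 * π * ‖ξ‖) ^ s * ‖Ψ ξ‖ ^ 2 := by
  obtain ⟨C, hC⟩ := exists_norm_le_mul_bracketSq_rpow_neg ((Module.finrank ℝ V + s) / 2) Ψ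
  refine ((integrable_bracketSq_rpow_neg (V := V)
    (by linarith : (Module.finrank ℝ V : ℝ) / 2 < Module.finrank ℝ V + s / 2)).const_mul
    ((2 * π) ^ s * C ^ 2)).mono' ?_ (Eventually.of_forall fun ξ => ?_)
  · have := Ψ.continuous.measurable
    exact Measurable.aestronglyMeasurable (by fun_prop)
  have hξ := bracketSq_pos ξ
  have hweight : ‖ξ‖ ^ s ≤ bracketSq ξ ^ (s / 2) := by
    calc ‖ξ‖ ^ s = (‖ξ‖ ^ 2) ^ (s / 2) := by
          rw [← rpow_natCast, ← rpow_mul (norm_nonneg ξ)]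
          congr 1
          push_cast
          ring
      _ ≤ bracketSq ξ ^ (s / 2) := by
          gcongr
          exact le_add_of_nonneg_left zero_le_one
  rw [norm_of_nonneg (by positivity), mul_rpow (by positivity) (norm_nonneg ξ)]
  calc _ ≤ (2 * π) ^ s * bracketSq ξ ^ (s / 2) *
          (C * bracketSq ξ ^ (-((Module.finrank ℝ V + s) / 2))) ^ 2 := by
        gcongr
        exact hC ξ
    _ = (2 * π) ^ s * C ^ 2 * (bracketSq ξ ^ (s / 2) *
          bracketSq ξ ^ (-((Module.finrank ℝ V + s) / 2)) *
          bracketSq ξ ^ (-((Module.finrank ℝ V + s) / 2))) := by ring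
    _ = _ := by
        rw [← rpow_add hξ, ← rpow_add hξ]
        ring_nf

lemma weightedNormSq_schwartz {s : ℝ} (hs : 0 < s) (Ψ : 𝓢(V, ℂ)) :
    weightedNormSq s Ψ = ENNReal.ofReal (∫ ξ, (2 * π * ‖ξ‖) ^ s * ‖Ψ ξ‖ ^ 2) := by
  rw [ofReal_integral_eq_lintegral_ofReal (integrable_rpow_mul_norm_sq hs Ψ)
    (Eventually.of_forall fun ξ => by positivity)]
  refine lintegral_congr fun ξ => ?_
  rw [ENNReal.ofReal_mul (by positivity), ENNReal.ofReal_pow (norm_nonneg _), ofReal_norm]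

lemma weightedNormSq_fourierInv (s : ℝ) (φ : V → ℂ) :
    weightedNormSq s (𝓕⁻ φ) = weightedNormSq s (𝓕 φ) := by
  rw [weightedNormSq, ← lintegral_neg_eq_self]
  simp only [norm_neg, fourierInv_eq_fourier_neg, neg_neg, weightedNormSq]

lemma weightedNormSq_eq_lintegral_rpow (s : ℝ) (φ : V → ℂ) :
    weightedNormSq s φ =
      ∫⁻ ξ, (ENNReal.ofReal ((2 * π * ‖ξ‖) ^ (s / 2)) * ‖φ ξ‖ₑ) ^ (2 : ℝ) := by
  refine lintegral_congr fun ξ => ?_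
  rw [ENNReal.rpow_ofNat, mul_pow, ← ENNReal.ofReal_pow (by positivity), ← rpow_natCast,
    ← rpow_mul (by positivity)]
  simp

lemma enorm_integral_mul_sq_le_weightedNormSq_mul [Nontrivial V] (s : ℝ) {φ ψ : V → ℂ}
    (hφ : Measurable φ) (hψ : Measurable ψ) :
    ‖∫ ξ, φ ξ * ψ ξ‖ₑ ^ 2 ≤ weightedNormSq s φ * weightedNormSq (-s) ψ := by
  let w (t : ℝ) (φ : V → ℂ) (ξ : V) := ENNReal.ofReal ((2 * π * ‖ξ‖) ^ (t / 2)) * ‖φ ξ‖ₑ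
  have hprod : ∫⁻ ξ, ‖φ ξ * ψ ξ‖ₑ = ∫⁻ ξ, (w s φ * w (-s) ψ) ξ := by
    refine lintegral_congr_ae ?_
    filter_upwards [Measure.ae_ne volume 0] with ξ hξ
    have := norm_pos_iff.2 hξ
    rw [enorm_mul, Pi.mul_apply, mul_mul_mul_comm, ← ENNReal.ofReal_mul (by positivity),
      ← rpow_add (by positivity)]
    simp [neg_div]
  have hCS := (enorm_integral_le_lintegral_enorm _).trans (hprod.trans_le
    (ENNReal.lintegral_mul_le_Lp_mul_Lq volume HolderConjugate.two_two (by fun_prop)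
      (by fun_prop)))
  rw [← weightedNormSq_eq_lintegral_rpow, ← weightedNormSq_eq_lintegral_rpow] at hCS
  calc _ ≤ _ := pow_le_pow_left' hCS 2
    _ = _ := by
      rw [mul_pow, ← ENNReal.rpow_mul_natCast, ← ENNReal.rpow_mul_natCast]
      norm_num

theorem enorm_integral_mul_sq_le {s : ℝ} (hs0 : 0 < s) (hs : s < Module.finrank ℝ V) (Φ : 𝓢(V, ℂ))
    {g : V → ℂ} (hg : Integrable g) (hgm : Measurable g) :
    ENNReal.ofReal (Gamma (s / 2)) * ‖∫ x, Φ x * g x‖ₑ ^ 2 ≤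
      weightedNormSq s (𝓕 (Φ : V → ℂ)) * (ENNReal.ofReal (rieszConst (Module.finrank ℝ V) s) *
        energy volume (rieszKernel (Module.finrank ℝ V - s)) (‖g ·‖ₑ)) := by
  have : Nontrivial V := Module.nontrivial_of_finrank_pos (R := ℝ) (by exact_mod_cast hs0.trans hs)
  have hflip : ∫ x, Φ x * g x = ∫ ξ, (𝓕⁻ Φ) ξ * 𝓕 g ξ := by
    rw [← integral_fourier_mul_eq (𝓕⁻ Φ).integrable hg, ← SchwartzMap.fourier_coe,
      FourierTransform.fourier_fourierInv_eq]
  have hΨ := (𝓕⁻ Φ).continuous.measurable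
  calc _ ≤ ENNReal.ofReal (Gamma (s / 2)) *
          (weightedNormSq s (𝓕⁻ Φ : 𝓢(V, ℂ)) * weightedNormSq (-s) (𝓕 g)) := by
        rw [hflip]
        gcongr
        exact enorm_integral_mul_sq_le_weightedNormSq_mul s hΨ (continuous_fourier hg).measurable
    _ = weightedNormSq s (𝓕 (Φ : V → ℂ)) *
          (ENNReal.ofReal (Gamma (s / 2)) * weightedNormSq (-s) (𝓕 g)) := by
        rw [SchwartzMap.fourierInv_coe, weightedNormSq_fourierInv, mul_left_comm]
    _ ≤ _ := mul_le_mul_right (weightedNormSq_neg_fourier_le hs0 hs hg hgm) _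

end Duality

section SharpConstant

variable {n : ℕ} {s : ℝ}

/-- The surface measure `|Sⁿ|` of the unit sphere in `ℝⁿ⁺¹`. -/
noncomputable def sphereArea (n : ℕ) : ℝ :=
  2 * π ^ (((n : ℝ) + 1) / 2) / Gamma (((n : ℝ) + 1) / 2)

/-- The constant `S_{n,s}` of the sharp Sobolev inequality. -/
noncomputable def sharpConst (n : ℕ) (s : ℝ) : ℝ :=
  Gamma ((n - s) / 2) / Gamma ((n + s) / 2) * sphereArea n ^ (-(s / n))

lemma sphereArea_pos (n : ℕ) : 0 < sphereArea n := by
  have := Gamma_pos_of_pos (by positivity : 0 < ((n : ℝ) + 1) / 2)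
  unfold sphereArea
  positivity

/-- The stereographic projection has Jacobian `(2 / bracketSq x) ^ n`. -/
lemma bracketIntegral_self (hn : n ≠ 0) : bracketIntegral n n = 2 ^ (-(n : ℝ)) * sphereArea n := by
  have hn0 : (0 : ℝ) < n := by positivity
  have hΓ := Gamma_pos_of_pos hn0
  have := Gamma_pos_of_pos (by positivity : 0 < ((n : ℝ) + 1) / 2)
  have hdup : Gamma (n / 2) * Gamma ((n + 1) / 2) = Gamma n * (2 * 2 ^ (-(n : ℝ))) * √π := by
    have h := Gamma_mul_Gamma_add_half ((n : ℝ) / 2)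
    rwa [← add_div, mul_div_cancel₀ _ two_ne_zero, sub_eq_add_neg, rpow_add two_pos, rpow_one] at h
  have hπ : π ^ (((n : ℝ) + 1) / 2) = π ^ ((n : ℝ) / 2) * √π := by
    rw [sqrt_eq_rpow, ← rpow_add pi_pos, ← add_div]
  rw [bracketIntegral, sphereArea, hπ, sub_half, div_eq_iff hΓ.ne']
  field_simp
  linear_combination hdup

lemma sharpConst_eq (hs : s ∈ Set.Ioo (0 : ℝ) n) :
    rieszConst n s * bracketIntegral n ((n + s) / 2) / Gamma (s / 2) *
      bracketIntegral n n ^ (-(s / n)) = sharpConst n s := by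
  obtain ⟨hs0, hsn⟩ := hs
  have hn : (0 : ℝ) < n := hs0.trans hsn
  have := Gamma_pos_of_pos (half_pos hs0)
  have hπ : π ^ (-((n : ℝ) / 2)) * π ^ ((n : ℝ) / 2) = 1 := by
    rw [← rpow_add pi_pos, neg_add_cancel, rpow_zero]
  have hfour : (4 : ℝ) ^ (-((n : ℝ) / 2)) * 4 ^ ((n - s) / 2) * 2 ^ s = 1 := by
    have hfour_eq : (4 : ℝ) = 2 ^ (2 : ℝ) := by norm_num
    rw [hfour_eq, ← rpow_mul zero_le_two, ← rpow_mul zero_le_two, ← rpow_add two_pos,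
      ← rpow_add two_pos]
    ring_nf
    exact rpow_zero 2
  have hexp : ((n : ℝ) + s) / 2 - n / 2 = s / 2 := by ring
  have hsphere : bracketIntegral n n ^ (-(s / n)) = 2 ^ s * sphereArea n ^ (-(s / n)) := by
    rw [bracketIntegral_self (Nat.cast_pos.1 hn).ne',
      mul_rpow (by positivity) (sphereArea_pos n).le, ← rpow_mul zero_le_two]
    congr 2
    field_simp
  rw [hsphere, sharpConst, rieszConst, bracketIntegral, hexp, mul_rpow zero_le_four pi_pos.le]
  calc _ = (4 : ℝ) ^ (-((n : ℝ) / 2)) * 4 ^ ((n - s) / 2) * 2 ^ s *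
          (π ^ (-((n : ℝ) / 2)) * π ^ ((n : ℝ) / 2)) *
          (Gamma ((n - s) / 2) / Gamma ((n + s) / 2) * sphereArea n ^ (-(s / n))) := by
        field_simp
    _ = _ := by rw [hfour, hπ, one_mul, one_mul]

end SharpConstant

section Sobolev

/-- The function `t ↦ |t| ^ (q - 2) * t`, which maps an `L^q` function to its dual function. -/
noncomputable def dualPower (q t : ℝ) : ℝ := |t| ^ (q - 2) * t

@[fun_prop]
lemma measurable_dualPower (q : ℝ) : Measurable (dualPower q) :=
  (measurable_abs.pow_const _).mul measurable_id

lemma abs_dualPower {q : ℝ} (hq : q ≠ 1) (t : ℝ) : |dualPower q t| = |t| ^ (q - 1) := by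
  rcases eq_or_ne t 0 with rfl | ht
  · simp [dualPower, zero_rpow (sub_ne_zero.2 hq)]
  · rw [dualPower, abs_mul, abs_of_nonneg (by positivity), ← rpow_add_one (abs_ne_zero.2 ht)]
    ring_nf

lemma mul_dualPower {q : ℝ} (hq : q ≠ 0) (t : ℝ) : t * dualPower q t = |t| ^ q := by
  rcases eq_or_ne t 0 with rfl | ht
  · simp [zero_rpow hq]
  · calc t * dualPower q t = |t| ^ (q - 2) * |t| ^ (2 : ℝ) := by
          rw [dualPower, rpow_two, sq_abs]
          ring
      _ = |t| ^ q := by rw [← rpow_add (abs_pos.2 ht), sub_add_cancel]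

lemma rpow_two_sub_le {Q V A p : ℝ} (hQ : 0 ≤ Q) (hV : 0 < V) (hA : 0 ≤ A) (hp : p < 2)
    (h : Q ^ 2 * V ^ p ≤ A * (V * Q ^ p)) : Q ^ (2 - p) ≤ A * V ^ (1 - p) := by
  rcases hQ.eq_or_lt with rfl | hQ
  · rw [zero_rpow (sub_pos.2 hp).ne']
    positivity
  · rw [rpow_sub hQ, rpow_sub hV, rpow_one, rpow_two, div_le_iff₀ (by positivity)]
    calc Q ^ 2 ≤ A * (V * Q ^ p) / V ^ p := (le_div_iff₀ (by positivity)).2 h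
      _ = _ := by ring

lemma abs_rpow_le_mul_bracketSq_rpow {V : Type*} [NormedAddCommGroup V] {f : V → ℝ} {C a p : ℝ}
    (hp : 0 ≤ p) (hfC : ∀ x, |f x| ≤ C * bracketSq x ^ (-a)) (x : V) :
    |f x| ^ p ≤ C ^ p * bracketSq x ^ (-(a * p)) := by
  have hC : 0 ≤ C := by simpa [bracketSq] using (abs_nonneg _).trans (hfC 0)
  have hx := bracketSq_pos x
  rw [← neg_mul, rpow_mul hx.le, ← mul_rpow hC (by positivity)]
  gcongr
  exact hfC x

section

variable {V : Type*} [NormedAddCommGroup V] [InnerProductSpace ℝ V] [FiniteDimensional ℝ V]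
  [MeasurableSpace V] [BorelSpace V]

lemma integrable_of_abs_le_mul_bracketSq_rpow {g : V → ℝ} (hg : Measurable g) {C a : ℝ}
    (ha : (Module.finrank ℝ V : ℝ) / 2 < a) (hgC : ∀ x, |g x| ≤ C * bracketSq x ^ (-a)) :
    Integrable g :=
  ((integrable_bracketSq_rpow_neg ha).const_mul C).mono' hg.aestronglyMeasurable
    (Eventually.of_forall hgC)

lemma integrable_abs_rpow_of_abs_le_mul_bracketSq_rpow {f : V → ℝ} (hf : Measurable f) {C a p : ℝ}
    (hp : 0 ≤ p) (hap : (Module.finrank ℝ V : ℝ) / 2 < a * p)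
    (hfC : ∀ x, |f x| ≤ C * bracketSq x ^ (-a)) : Integrable fun x => |f x| ^ p :=
  integrable_of_abs_le_mul_bracketSq_rpow (hf.abs.pow_const _) hap fun x => by
    rw [abs_of_nonneg (by positivity)]
    exact abs_rpow_le_mul_bracketSq_rpow hp hfC x

end

variable {n : ℕ} {s : ℝ}

lemma homogSobolevNormSq_nonneg (n : ℕ) (s : ℝ) (f : 𝓢(EuclideanSpace ℝ (Fin n), ℝ)) :
    0 ≤ homogSobolevNormSq n s f :=
  integral_nonneg fun ξ => by positivity

lemma weightedNormSq_fourier_ofReal (hs : 0 < s) (f : 𝓢(EuclideanSpace ℝ (Fin n), ℝ)) :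
    weightedNormSq s (𝓕 fun x => (f x : ℂ)) = ENNReal.ofReal (homogSobolevNormSq n s f) :=
  weightedNormSq_schwartz hs (𝓕 (SchwartzMap.postcompCLM (𝕜 := ℝ) Complex.ofRealCLM f))

lemma energy_rieszKernel_enorm_le (hs : s ∈ Set.Ioo (0 : ℝ) n)
    {g : EuclideanSpace ℝ (Fin n) → ℝ} (hg : Measurable g) {C : NNReal}
    (hgC : ∀ x, |g x| ≤ C * bracketSq x ^ (-(((n : ℝ) + s) / 2))) :
    energy volume (rieszKernel (n - s)) (‖g ·‖ₑ) *
        ENNReal.ofReal (bracketIntegral n n ^ (((n : ℝ) + s) / n)) ≤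
      ENNReal.ofReal (bracketIntegral n ((n + s) / 2) *
        (bracketIntegral n n * (∫ x, |g x| ^ (2 * n / (n + s))) ^ (((n : ℝ) + s) / n))) := by
  obtain ⟨hs0, hsn⟩ := hs
  have hn : (0 : ℝ) < n := hs0.trans hsn
  have : NeZero n := ⟨(Nat.cast_pos.1 hn).ne'⟩
  have hV : 0 < bracketIntegral n n := bracketIntegral_pos (half_lt_self hn)
  have hI : 0 < bracketIntegral n ((n + s) / 2) := bracketIntegral_pos (by linarith)
  have hbound (x : EuclideanSpace ℝ (Fin n)) :
      ‖g x‖ₑ * ENNReal.ofReal (bracketSq x) ^ (((n : ℝ) + s) / 2) ≤ C := by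
    have hx := bracketSq_pos x
    have hgx := hgC x
    rw [rpow_neg hx.le, ← div_eq_mul_inv, le_div_iff₀ (by positivity)] at hgx
    rw [enorm_eq_ofReal_abs, ENNReal.ofReal_rpow_of_pos hx, ← ENNReal.ofReal_mul (abs_nonneg _),
      ← ENNReal.ofReal_coe_nnreal]
    exact ENNReal.ofReal_le_ofReal hgx
  have hnorm : ∫⁻ x, ‖g x‖ₑ ^ (2 * (n : ℝ) / (n + s)) =
      ENNReal.ofReal (∫ x, |g x| ^ (2 * (n : ℝ) / (n + s))) := by
    rw [ofReal_integral_eq_lintegral_ofReal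
      (integrable_abs_rpow_of_abs_le_mul_bracketSq_rpow hg (by positivity) ?_ hgC)
      (Eventually.of_forall fun x => by positivity)]
    · refine lintegral_congr fun x => ?_
      rw [enorm_eq_ofReal_abs, ENNReal.ofReal_rpow_of_nonneg (abs_nonneg _) (by positivity)]
    · rw [finrank_euclideanSpace_fin]
      field_simp
      linarith
  have h := energy_rieszKernel_le_of_bracket_bound ⟨hs0, hsn⟩ hg.enorm hbound
  rwa [hnorm, ENNReal.ofReal_rpow_of_pos hV, ENNReal.ofReal_rpow_of_nonneg (by positivity)
    (by positivity), mul_assoc, ← ENNReal.ofReal_mul hV.le, ← ENNReal.ofReal_mul hI.le] at h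

lemma ofReal_integral_mul_sq_le (hs : s ∈ Set.Ioo (0 : ℝ) n)
    (f : 𝓢(EuclideanSpace ℝ (Fin n), ℝ)) {g : EuclideanSpace ℝ (Fin n) → ℝ} (hg : Integrable g)
    (hgm : Measurable g) :
    ENNReal.ofReal (Gamma (s / 2) * (∫ x, f x * g x) ^ 2) ≤
      ENNReal.ofReal (homogSobolevNormSq n s f * rieszConst n s) *
        energy volume (rieszKernel (n - s)) (‖g ·‖ₑ) := by
  have h := enorm_integral_mul_sq_le hs.1 (by simpa using hs.2)
    (SchwartzMap.postcompCLM (𝕜 := ℝ) Complex.ofRealCLM f) (g := fun x => (g x : ℂ)) hg.ofReal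
    (by fun_prop)
  have hnorm (t : ℝ) : ‖(t : ℂ)‖ₑ = ‖t‖ₑ := by simp [← ofReal_norm]
  have hfg : ∫ x, (f x : ℂ) * g x = ((∫ x, f x * g x : ℝ) : ℂ) := by
    rw [← integral_complex_ofReal]
    simp only [Complex.ofReal_mul]
  have hsq : ENNReal.ofReal ((∫ x, f x * g x) ^ 2) = ‖∫ x, (f x : ℂ) * g x‖ₑ ^ 2 := by
    rw [hfg, hnorm, enorm_eq_ofReal_abs, ← ENNReal.ofReal_pow (abs_nonneg _), sq_abs]
  rw [ENNReal.ofReal_mul (Gamma_pos_of_pos (half_pos hs.1)).le, hsq,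
    ENNReal.ofReal_mul (homogSobolevNormSq_nonneg n s f), ← weightedNormSq_fourier_ofReal hs.1,
    mul_assoc]
  simp only [hnorm, finrank_euclideanSpace_fin] at h
  exact h

lemma integral_mul_sq_le (hs : s ∈ Set.Ioo (0 : ℝ) n) (f : 𝓢(EuclideanSpace ℝ (Fin n), ℝ))
    {g : EuclideanSpace ℝ (Fin n) → ℝ} (hg : Measurable g) {C : NNReal}
    (hgC : ∀ x, |g x| ≤ C * bracketSq x ^ (-(((n : ℝ) + s) / 2))) :
    (∫ x, f x * g x) ^ 2 * bracketIntegral n n ^ (((n : ℝ) + s) / n) ≤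
      rieszConst n s * bracketIntegral n ((n + s) / 2) / Gamma (s / 2) *
        homogSobolevNormSq n s f *
        (bracketIntegral n n * (∫ x, |g x| ^ (2 * n / (n + s))) ^ (((n : ℝ) + s) / n)) := by
  obtain ⟨hs0, hsn⟩ := hs
  have hn : (0 : ℝ) < n := hs0.trans hsn
  have := Gamma_pos_of_pos (half_pos hs0)
  have hc := rieszConst_pos hsn
  have hV : 0 < bracketIntegral n n := bracketIntegral_pos (half_lt_self hn)
  have hI : 0 < bracketIntegral n ((n + s) / 2) := bracketIntegral_pos (by linarith)
  have hN := homogSobolevNormSq_nonneg n s f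
  have hgi : Integrable g := integrable_of_abs_le_mul_bracketSq_rpow hg
    (by rw [finrank_euclideanSpace_fin]; linarith) hgC
  set E := energy volume (rieszKernel (n - s)) (‖g ·‖ₑ)
  set U := bracketIntegral n n * (∫ x, |g x| ^ (2 * n / (n + s))) ^ (((n : ℝ) + s) / n)
  have : 0 ≤ U := by positivity
  have h : ENNReal.ofReal (Gamma (s / 2) * (∫ x, f x * g x) ^ 2 *
        bracketIntegral n n ^ (((n : ℝ) + s) / n)) ≤
      ENNReal.ofReal (homogSobolevNormSq n s f * rieszConst n s *
        (bracketIntegral n ((n + s) / 2) * U)) :=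
    calc _ ≤ ENNReal.ofReal (homogSobolevNormSq n s f * rieszConst n s) * E *
            ENNReal.ofReal (bracketIntegral n n ^ (((n : ℝ) + s) / n)) := by
          rw [ENNReal.ofReal_mul (by positivity)]
          gcongr
          exact ofReal_integral_mul_sq_le ⟨hs0, hsn⟩ f hgi hg
      _ ≤ _ := by
          rw [mul_assoc, ENNReal.ofReal_mul (p := _ * rieszConst n s) (by positivity)]
          gcongr
          exact energy_rieszKernel_enorm_le ⟨hs0, hsn⟩ hg hgC
  rw [ENNReal.ofReal_le_ofReal_iff (by positivity)] at h
  calc _ = Gamma (s / 2) * (∫ x, f x * g x) ^ 2 *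
          bracketIntegral n n ^ (((n : ℝ) + s) / n) / Gamma (s / 2) := by field_simp
    _ ≤ homogSobolevNormSq n s f * rieszConst n s *
          (bracketIntegral n ((n + s) / 2) * U) / Gamma (s / 2) := by gcongr
    _ = _ := by ring

lemma exists_abs_dualPower_le_mul_bracketSq_rpow {V : Type*} [NormedAddCommGroup V]
    [NormedSpace ℝ V] {a q : ℝ} (hq : 1 < q) (f : 𝓢(V, ℝ)) :
    ∃ C : NNReal, ∀ x, |dualPower q (f x)| ≤ C * bracketSq x ^ (-(a * (q - 1))) := by
  obtain ⟨C, hC⟩ := exists_norm_le_mul_bracketSq_rpow_neg a f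
  refine ⟨C ^ (q - 1), fun x => ?_⟩
  rw [abs_dualPower hq.ne', NNReal.coe_rpow]
  exact abs_rpow_le_mul_bracketSq_rpow (sub_nonneg.2 hq.le) hC x

theorem rpow_integral_le_sharpConst_mul (hs : s ∈ Set.Ioo (0 : ℝ) n)
    (f : 𝓢(EuclideanSpace ℝ (Fin n), ℝ)) {q : ℝ} (hq : q = 2 * n / (n - s)) :
    (∫ x, |f x| ^ q) ^ (2 / q) ≤ sharpConst n s * homogSobolevNormSq n s f := by
  obtain ⟨hs0, hsn⟩ := hs
  have hn : (0 : ℝ) < n := hs0.trans hsn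
  have : 0 < (n : ℝ) - s := sub_pos.2 hsn
  have := Gamma_pos_of_pos (half_pos hs0)
  have := rieszConst_pos hsn
  have hV : 0 < bracketIntegral n n := bracketIntegral_pos (half_lt_self hn)
  have hI : 0 < bracketIntegral n ((n + s) / 2) := bracketIntegral_pos (by linarith)
  have hN := homogSobolevNormSq_nonneg n s f
  have hq1 : q - 1 = (n + s) / (n - s) := by
    rw [hq]
    field_simp
    ring
  have hq1_pos : 0 < q - 1 := hq1 ▸ by positivity
  have hdecay : ((n : ℝ) - s) / 2 * (q - 1) = (n + s) / 2 := by
    rw [hq1]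
    field_simp
  have hdual : (q - 1) * (2 * n / (n + s)) = q := by
    rw [hq1, hq]
    field_simp
  have htwo : 2 / q = 2 - (n + s) / n := by
    rw [hq]
    field_simp
    ring
  have hone : -(s / n) = 1 - (n + s) / n := by
    field_simp
    ring
  obtain ⟨C, hC⟩ :=
    exists_abs_dualPower_le_mul_bracketSq_rpow (a := ((n : ℝ) - s) / 2) (q := q) (by linarith) f
  rw [hdecay] at hC
  have h := integral_mul_sq_le ⟨hs0, hsn⟩ f (by fun_prop) hC
  simp only [mul_dualPower (by linarith : q ≠ 0), abs_dualPower (by linarith : q ≠ 1),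
    ← rpow_mul (abs_nonneg _), hdual] at h
  rw [htwo, ← sharpConst_eq ⟨hs0, hsn⟩, hone, mul_right_comm]
  exact rpow_two_sub_le (by positivity) hV (by positivity)
    ((div_lt_iff₀ hn).2 (by linarith)) h

end Sobolev

/-! ### Optimality of the constant -/

section SchwartzGaussian

open scoped ContDiff

lemma exists_norm_iteratedFDeriv_exp_le {E : Type*} [NormedAddCommGroup E] [NormedSpace ℝ E]
    {h : E → ℝ} (hh : h.HasTemperateGrowth) (m : ℕ) :
    ∃ (l : ℕ) (C : ℝ), ∀ x,
      ‖iteratedFDeriv ℝ m (fun x => exp (h x)) x‖ ≤ C * (1 + ‖x‖) ^ l * exp (h x) := by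
  obtain ⟨l, C, hC, hb⟩ := hh.norm_iteratedFDeriv_le_uniform m
  refine ⟨l * m, m.factorial * (1 + C) ^ m, fun x => ?_⟩
  have hpow : 1 ≤ (1 + ‖x‖) ^ l := one_le_pow₀ (by linarith [norm_nonneg x])
  have hD : 1 ≤ (1 + C) * (1 + ‖x‖) ^ l := one_le_mul_of_one_le_of_one_le (by linarith) hpow
  have hexp (i : ℕ) : ‖iteratedFDeriv ℝ i exp (h x)‖ ≤ exp (h x) := by
    rw [norm_iteratedFDeriv_eq_norm_iteratedDeriv, iteratedDeriv_eq_iterate, iter_deriv_exp,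
      norm_of_nonneg (exp_pos _).le]
  have hderiv (i : ℕ) (hi : 1 ≤ i) (him : i ≤ m) :
      ‖iteratedFDeriv ℝ i h x‖ ≤ ((1 + C) * (1 + ‖x‖) ^ l) ^ i :=
    calc _ ≤ C * (1 + ‖x‖) ^ l := hb i him x
      _ ≤ (1 + C) * (1 + ‖x‖) ^ l := by gcongr; linarith
      _ ≤ _ := le_self_pow₀ hD (by lia)
  refine (norm_iteratedFDeriv_comp_le (N := ∞) contDiff_exp hh.1 (by exact_mod_cast le_top) x
    (fun i _ => hexp i) hderiv).trans_eq ?_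
  rw [mul_pow, ← pow_mul]
  ring

lemma exists_one_add_pow_mul_exp_neg_le {e : ℝ} (he : 0 < e) (m : ℕ) :
    ∃ K, ∀ r : ℝ, 0 ≤ r → (1 + r) ^ m * exp (-e * r ^ 2) ≤ K := by
  refine ⟨m.factorial * exp (1 + 1 / (4 * e)), fun r hr => ?_⟩
  have hpow : (1 + r) ^ m ≤ exp (1 + r) * m.factorial :=
    (div_le_iff₀ (by positivity)).1 (pow_div_factorial_le_exp (1 + r) (by linarith) m)
  have hsquare : 1 + r + -e * r ^ 2 = 1 + 1 / (4 * e) - (2 * e * r - 1) ^ 2 / (4 * e) := by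
    field_simp
    ring
  calc _ ≤ exp (1 + r) * m.factorial * exp (-e * r ^ 2) := by gcongr
    _ = m.factorial * exp (1 + r + -e * r ^ 2) := by rw [exp_add (1 + r)]; ring
    _ ≤ _ := by
        rw [hsquare]
        have := sub_le_self (1 + 1 / (4 * e))
          (by positivity : 0 ≤ (2 * e * r - 1) ^ 2 / (4 * e))
        gcongr

lemma exists_schwartzMap_eq_exp_neg_mul_sq_norm {V : Type*} [NormedAddCommGroup V]
    [InnerProductSpace ℝ V] {e : ℝ} (he : 0 < e) :
    ∃ g : 𝓢(V, ℝ), ∀ x, g x = exp (-e * ‖x‖ ^ 2) := by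
  have hgrowth : (fun x : V => -e * ‖x‖ ^ 2).HasTemperateGrowth :=
    (Function.HasTemperateGrowth.const (-e)).mul (Function.hasTemperateGrowth_norm_sq V)
  refine ⟨⟨fun x => exp (-e * ‖x‖ ^ 2), contDiff_exp.comp hgrowth.1, fun k m => ?_⟩, fun x => rfl⟩
  obtain ⟨l, C, hC⟩ := exists_norm_iteratedFDeriv_exp_le hgrowth m
  obtain ⟨K, hK⟩ := exists_one_add_pow_mul_exp_neg_le he (k + l)
  have hC0 : 0 ≤ C := by simpa using (norm_nonneg _).trans (hC 0)
  refine ⟨C * K, fun x => ?_⟩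
  calc _ ≤ (1 + ‖x‖) ^ k * (C * (1 + ‖x‖) ^ l * exp (-e * ‖x‖ ^ 2)) := by
        gcongr
        · linarith
        · exact hC x
    _ = C * ((1 + ‖x‖) ^ (k + l) * exp (-e * ‖x‖ ^ 2)) := by ring
    _ ≤ C * K := by
        gcongr
        exact hK _ (norm_nonneg x)

end SchwartzGaussian

section DampedBubble

variable {V : Type*} [NormedAddCommGroup V]

/-- The approximate extremizers: `bracketSq x ^ (-a)` is extremal for `a = (n - s) / 2`, and the
Gaussian factor turns it into a Schwartz function. -/
noncomputable def dampedBubble (a e : ℝ) (x : V) : ℝ :=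
  bracketSq x ^ (-a) * exp (-e * ‖x‖ ^ 2)

lemma dampedBubble_nonneg (a e : ℝ) (x : V) : 0 ≤ dampedBubble a e x :=
  mul_nonneg (rpow_nonneg (bracketSq_pos x).le _) (exp_pos _).le

lemma exists_schwartzMap_eq_dampedBubble [InnerProductSpace ℝ V] (a : ℝ) {e : ℝ} (he : 0 < e) :
    ∃ f : 𝓢(V, ℝ), ∀ x, f x = dampedBubble a e x := by
  obtain ⟨g, hg⟩ := exists_schwartzMap_eq_exp_neg_mul_sq_norm (V := V) he
  refine ⟨smulLeftCLM ℝ (fun x : V => (1 + ‖x‖ ^ 2) ^ (-a)) g, fun x => ?_⟩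
  rw [smulLeftCLM_apply_apply (Function.hasTemperateGrowth_one_add_norm_sq_rpow V (-a)), hg]
  rfl

lemma dampedBubble_eq_integral {a : ℝ} (ha : 0 < a) (e : ℝ) (x : V) :
    dampedBubble a e x = (Gamma a)⁻¹ *
      ∫ t in Set.Ioi (0 : ℝ), t ^ (a - 1) * exp (-t) * exp (-(t + e) * ‖x‖ ^ 2) := by
  have hJ := bracketSq_pos x
  have := Gamma_pos_of_pos ha
  have hsplit (t : ℝ) : t ^ (a - 1) * exp (-t) * exp (-(t + e) * ‖x‖ ^ 2) =
      exp (-e * ‖x‖ ^ 2) * (t ^ (a - 1) * exp (-(bracketSq x * t))) := by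
    have hexp : exp (-t) * exp (-(t + e) * ‖x‖ ^ 2) =
        exp (-e * ‖x‖ ^ 2) * exp (-(bracketSq x * t)) := by
      rw [← exp_add, ← exp_add, bracketSq]
      ring_nf
    rw [mul_assoc, hexp, mul_left_comm]
  simp only [hsplit]
  rw [integral_const_mul, integral_rpow_mul_exp_neg_mul_Ioi ha hJ, one_div, inv_rpow hJ.le,
    dampedBubble, rpow_neg hJ.le]
  field_simp

end DampedBubble

section RadialIntegral

variable {V : Type*} [NormedAddCommGroup V] [InnerProductSpace ℝ V] [FiniteDimensional ℝ V]
  [MeasurableSpace V] [BorelSpace V] [Nontrivial V]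

lemma volume_real_unit_ball : volume.real (Metric.ball (0 : V) 1) =
    π ^ (Module.finrank ℝ V / 2 : ℝ) / Gamma (Module.finrank ℝ V / 2 + 1) := by
  have := Gamma_pos_of_pos (by positivity : (0 : ℝ) < Module.finrank ℝ V / 2 + 1)
  have hπ : √π ^ Module.finrank ℝ V = π ^ (Module.finrank ℝ V / 2 : ℝ) := by
    rw [sqrt_eq_rpow, ← rpow_mul_natCast pi_pos.le]
    ring_nf
  rw [Measure.real, InnerProductSpace.volume_ball, ENNReal.ofReal_one, one_pow, one_mul,
    ENNReal.toReal_ofReal (by positivity), hπ]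

lemma integral_norm_rpow_mul_exp_neg_mul_sq_norm {s b : ℝ} (hs : -Module.finrank ℝ V < s)
    (hb : 0 < b) :
    ∫ ξ : V, ‖ξ‖ ^ s * exp (-b * ‖ξ‖ ^ 2) =
      π ^ (Module.finrank ℝ V / 2 : ℝ) * Gamma ((Module.finrank ℝ V + s) / 2) /
        Gamma (Module.finrank ℝ V / 2) * b ^ (-((Module.finrank ℝ V + s) / 2)) := by
  have hd : 0 < Module.finrank ℝ V := Module.finrank_pos
  have := Gamma_pos_of_pos (by positivity : (0 : ℝ) < Module.finrank ℝ V / 2)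
  have hradial : ∫ r in Set.Ioi (0 : ℝ), r ^ (Module.finrank ℝ V - 1) • (r ^ s * exp (-b * r ^ 2)) =
      ∫ r in Set.Ioi (0 : ℝ), r ^ (Module.finrank ℝ V - 1 + s) * exp (-b * r ^ (2 : ℝ)) := by
    refine setIntegral_congr_fun measurableSet_Ioi fun r (hr : 0 < r) => ?_
    rw [smul_eq_mul, ← mul_assoc, rpow_ofNat, rpow_add hr, ← Nat.cast_pred hd, rpow_natCast]
  rw [integral_fun_norm_addHaar volume fun r => r ^ s * exp (-b * r ^ 2), hradial,
    integral_rpow_mul_exp_neg_mul_rpow two_pos (by linarith) hb, volume_real_unit_ball,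
    Gamma_add_one (by positivity), add_right_comm, sub_add_cancel, neg_div, nsmul_eq_mul,
    smul_eq_mul]
  field_simp

lemma lintegral_rpow_mul_exp_neg_mul_sq_norm {s b : ℝ} (hs : -Module.finrank ℝ V < s)
    (hb : 0 < b) :
    ∫⁻ ξ : V, ENNReal.ofReal ((2 * π * ‖ξ‖) ^ s) * ENNReal.ofReal (exp (-b * ‖ξ‖ ^ 2)) =
      ENNReal.ofReal ((2 * π) ^ s * (π ^ (Module.finrank ℝ V / 2 : ℝ) *
        Gamma ((Module.finrank ℝ V + s) / 2) / Gamma (Module.finrank ℝ V / 2) *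
          b ^ (-((Module.finrank ℝ V + s) / 2)))) := by
  have hd : 0 < Module.finrank ℝ V := Module.finrank_pos
  have := Gamma_pos_of_pos (by positivity : (0 : ℝ) < Module.finrank ℝ V / 2)
  have := Gamma_pos_of_pos (by linarith : 0 < (Module.finrank ℝ V + s) / 2)
  rw [← integral_norm_rpow_mul_exp_neg_mul_sq_norm hs hb, ← integral_const_mul,
    ← ofReal_integral_eq_lintegral_of_ne_zero]
  · refine lintegral_congr fun ξ => ?_
    rw [← ENNReal.ofReal_mul (by positivity), mul_rpow (by positivity) (by positivity), mul_assoc]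
  · exact Eventually.of_forall fun ξ => by positivity
  · rw [integral_const_mul, integral_norm_rpow_mul_exp_neg_mul_sq_norm hs hb]
    positivity

end RadialIntegral

section GaussianPairing

/-- The constant factor of `gaussianPairing`. -/
noncomputable def gaussianPairingConst (n : ℕ) (s : ℝ) : ℝ :=
  2 ^ s * (π ^ ((n : ℝ) / 2) * Gamma ((n + s) / 2) / Gamma (n / 2))

lemma gaussianPairingConst_nonneg {n : ℕ} {s : ℝ} (hs : -(n : ℝ) ≤ s) :
    0 ≤ gaussianPairingConst n s := by
  have := Gamma_nonneg_of_nonneg (by linarith : 0 ≤ ((n : ℝ) + s) / 2)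
  have := Gamma_nonneg_of_nonneg (by positivity : 0 ≤ (n : ℝ) / 2)
  unfold gaussianPairingConst
  positivity

/-- The pairing of the Gaussians `exp (-x * ‖·‖ ^ 2)` and `exp (-y * ‖·‖ ^ 2)` in the homogeneous
Sobolev space of order `s / 2` in dimension `n`. -/
noncomputable def gaussianPairing (n : ℕ) (s x y : ℝ) : ℝ :=
  gaussianPairingConst n s * ((x * y) ^ (s / 2) * (x + y) ^ (-((n + s) / 2)))

lemma gaussianPairing_eq (n : ℕ) (s : ℝ) {x y : ℝ} (hx : 0 < x) (hy : 0 < y) :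
    gaussianPairing n s x y = (π / x) ^ ((n : ℝ) / 2) * (π / y) ^ ((n : ℝ) / 2) *
      ((2 * π) ^ s * (π ^ ((n : ℝ) / 2) * Gamma ((n + s) / 2) / Gamma (n / 2) *
        (π ^ 2 * (x + y) / (x * y)) ^ (-((n + s) / 2)))) := by
  have hπ := pi_pos
  have hprod : (π / x) ^ ((n : ℝ) / 2) * (π / y) ^ ((n : ℝ) / 2) =
      π ^ (n : ℝ) * (x * y) ^ (-((n : ℝ) / 2)) := by
    rw [← mul_rpow (by positivity) (by positivity), div_mul_div_comm,
      div_rpow (by positivity) (by positivity), ← sq, ← rpow_ofNat, ← rpow_mul hπ.le,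
      rpow_neg (by positivity), div_eq_mul_inv]
    ring_nf
  have hquot : (π ^ 2 * (x + y) / (x * y)) ^ (-((n + s) / 2)) =
      π ^ (-((n : ℝ) + s)) * (x + y) ^ (-((n + s) / 2)) * (x * y) ^ ((n + s) / 2) := by
    rw [div_rpow (by positivity) (by positivity), mul_rpow (by positivity) (by positivity),
      rpow_neg (by positivity : 0 ≤ x * y), div_inv_eq_mul, ← rpow_ofNat, ← rpow_mul hπ.le]
    ring_nf
  have hcancel : π ^ (n : ℝ) * π ^ s * π ^ (-((n : ℝ) + s)) = 1 := by
    rw [← rpow_add hπ, ← rpow_add hπ, add_neg_cancel, rpow_zero]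
  have hxy : (x * y) ^ (s / 2) = (x * y) ^ (-((n : ℝ) / 2)) * (x * y) ^ ((n + s) / 2) := by
    rw [← rpow_add (by positivity)]
    ring_nf
  rw [hprod, hquot, mul_rpow zero_le_two hπ.le, gaussianPairing, gaussianPairingConst, hxy]
  linear_combination (-(2 ^ s * (π ^ ((n : ℝ) / 2) * Gamma ((n + s) / 2) / Gamma (n / 2)) *
    ((x * y) ^ (-((n : ℝ) / 2)) * (x * y) ^ ((n + s) / 2) * (x + y) ^ (-((n + s) / 2))))) * hcancel

lemma lintegral_gaussianKernel_mul {V : Type*} [NormedAddCommGroup V] [InnerProductSpace ℝ V]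
    [FiniteDimensional ℝ V] [MeasurableSpace V] [BorelSpace V] [Nontrivial V] {s : ℝ}
    (hs : -Module.finrank ℝ V < s) {x y : ℝ} (hx : 0 < x) (hy : 0 < y) :
    ∫⁻ ξ : V, ENNReal.ofReal ((2 * π * ‖ξ‖) ^ s) *
        (ENNReal.ofReal (gaussianKernel x ξ 0) * ENNReal.ofReal (gaussianKernel y ξ 0)) =
      ENNReal.ofReal (gaussianPairing (Module.finrank ℝ V) s x y) := by
  have hmul (ξ : V) : gaussianKernel x ξ 0 * gaussianKernel y ξ 0 =
      (π / x) ^ (Module.finrank ℝ V / 2 : ℝ) * (π / y) ^ (Module.finrank ℝ V / 2 : ℝ) *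
        exp (-(π ^ 2 * (x + y) / (x * y)) * ‖ξ‖ ^ 2) := by
    rw [gaussianKernel, gaussianKernel, mul_mul_mul_comm, ← exp_add, sub_zero]
    congr 2
    field_simp
    ring
  rw [gaussianPairing_eq _ _ hx hy, ENNReal.ofReal_mul (by positivity),
    ← lintegral_rpow_mul_exp_neg_mul_sq_norm hs (by positivity),
    ← lintegral_const_mul' _ _ ENNReal.ofReal_ne_top]
  refine lintegral_congr fun ξ => ?_
  rw [← ENNReal.ofReal_mul (gaussianKernel_nonneg hx ξ 0), hmul,
    ENNReal.ofReal_mul (by positivity), mul_left_comm]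

end GaussianPairing

section FourierBubble

/-- The density of the Gamma distribution of shape `a` and rate `1`, multiplied by `Gamma a`. -/
noncomputable def gammaDensity (a t : ℝ) : ℝ≥0∞ :=
  ENNReal.ofReal (t ^ (a - 1) * exp (-t))

@[fun_prop]
lemma measurable_gammaDensity (a : ℝ) : Measurable (gammaDensity a) := by
  unfold gammaDensity
  fun_prop

lemma energy_restrict_congr {X : Type*} [MeasurableSpace X] {μ : Measure X} {s : Set X}
    (hs : MeasurableSet s) {k k' : X → X → ℝ≥0∞} {u u' : X → ℝ≥0∞}
    (h : ∀ x ∈ s, ∀ y ∈ s, u x * u y * k x y = u' x * u' y * k' x y) :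
    energy (μ.restrict s) k u = energy (μ.restrict s) k' u' :=
  setLIntegral_congr_fun hs fun x hx => setLIntegral_congr_fun hs (h x hx)

lemma energy_mul_kernel {X : Type*} [MeasurableSpace X] {μ : Measure X} {u v : X → ℝ≥0∞}
    (hu : Measurable u) (hv : Measurable v) :
    energy μ (fun x y => v x * v y) u = (∫⁻ x, u x * v x ∂μ) ^ 2 := by
  have huv : Measurable fun x => u x * v x := hu.mul hv
  simp only [energy, mul_mul_mul_comm (u _) (u _), lintegral_const_mul _ huv,
    lintegral_mul_const _ huv, sq]

variable {V : Type*} [NormedAddCommGroup V] [InnerProductSpace ℝ V] [FiniteDimensional ℝ V]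
  [MeasurableSpace V] [BorelSpace V]

lemma fourier_exp_neg_mul_sq_norm {b : ℝ} (hb : 0 < b) (ξ : V) :
    𝓕 (fun x : V => (exp (-b * ‖x‖ ^ 2) : ℂ)) ξ = (gaussianKernel b ξ 0 : ℂ) := by
  have h := fourier_gaussian_innerProductSpace (V := V) (b := b) (by simpa using hb) ξ
  rw [gaussianKernel, sub_zero]
  push_cast [Complex.ofReal_cpow (by positivity : 0 ≤ π / b)] at h ⊢
  exact h

lemma fourier_const_mul (c : ℂ) (f : V → ℂ) (ξ : V) : 𝓕 (fun x => c * f x) ξ = c * 𝓕 f ξ :=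
  congrFun (VectorFourier.fourierIntegral_const_smul _ _ _ f c) ξ

lemma fourier_integral_eq {T : Type*} [MeasurableSpace T] {ν : Measure T} [SFinite ν]
    {g : V → T → ℂ} (hg : Integrable (fun p : V × T => g p.1 p.2) (volume.prod ν)) (ξ : V) :
    𝓕 (fun x => ∫ t, g x t ∂ν) ξ = ∫ t, 𝓕 (fun x => g x t) ξ ∂ν := by
  simp only [fourier_eq, Circle.smul_def, ← integral_smul]
  exact integral_integral_swap (hg.bdd_smul 1 (Measurable.aestronglyMeasurable (by fun_prop))
    (Eventually.of_forall fun p => (Circle.norm_coe _).le))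

lemma integrable_gaussian_superposition {a e : ℝ} (ha : 0 < a) (he : 0 < e) :
    Integrable (fun p : V × ℝ => p.2 ^ (a - 1) * exp (-p.2) * exp (-(p.2 + e) * ‖p.1‖ ^ 2))
      (volume.prod (volume.restrict (Set.Ioi 0))) := by
  refine ((integrable_exp_neg_mul_sq_norm he).mul_prod (GammaIntegral_convergent ha)).mono'
    (Measurable.aestronglyMeasurable (by fun_prop)) ?_
  have hpos : ∀ᵐ p : V × ℝ ∂volume.prod (volume.restrict (Set.Ioi 0)), 0 < p.2 :=
    Measure.quasiMeasurePreserving_snd.ae (ae_restrict_mem measurableSet_Ioi)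
  filter_upwards [hpos] with p hp
  rw [norm_of_nonneg (by positivity), mul_comm (exp (-p.2)), mul_comm]
  gcongr
  linarith

lemma fourier_dampedBubble {a e : ℝ} (ha : 0 < a) (he : 0 < e) (ξ : V) :
    𝓕 (fun x : V => (dampedBubble a e x : ℂ)) ξ = ((Gamma a)⁻¹ : ℝ) *
      ∫ t in Set.Ioi (0 : ℝ), ((t ^ (a - 1) * exp (-t) * gaussianKernel (t + e) ξ 0 : ℝ) : ℂ) := by
  simp only [dampedBubble_eq_integral ha, Complex.ofReal_mul _ (integral _ _),
    ← integral_complex_ofReal]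
  rw [fourier_const_mul, fourier_integral_eq (integrable_gaussian_superposition ha he).ofReal]
  congr 1
  refine setIntegral_congr_fun measurableSet_Ioi fun t (ht : 0 < t) => ?_
  simp only [Complex.ofReal_mul _ (exp _), Complex.ofReal_mul _ (gaussianKernel _ _ _)]
  rw [fourier_const_mul, fourier_exp_neg_mul_sq_norm (add_pos ht he)]

lemma enorm_fourier_dampedBubble_le {a e : ℝ} (ha : 0 < a) (he : 0 < e) (ξ : V) :
    ‖𝓕 (fun x : V => (dampedBubble a e x : ℂ)) ξ‖ₑ ≤ ENNReal.ofReal (Gamma a)⁻¹ *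
      ∫⁻ t in Set.Ioi (0 : ℝ), gammaDensity a t * ENNReal.ofReal (gaussianKernel (t + e) ξ 0) := by
  have := Gamma_pos_of_pos ha
  rw [fourier_dampedBubble ha he, enorm_mul, ← ofReal_norm, Complex.norm_real,
    norm_of_nonneg (by positivity)]
  gcongr
  refine (enorm_integral_le_lintegral_enorm _).trans_eq ?_
  refine setLIntegral_congr_fun measurableSet_Ioi fun t (ht : 0 < t) => ?_
  have := gaussianKernel_nonneg (add_pos ht he) ξ 0
  rw [← ofReal_norm, Complex.norm_real, norm_of_nonneg (by positivity),
    ENNReal.ofReal_mul (by positivity), gammaDensity]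

lemma weightedNormSq_fourier_dampedBubble_le [Nontrivial V] {a e s : ℝ} (ha : 0 < a) (he : 0 < e)
    (hs : -Module.finrank ℝ V < s) :
    weightedNormSq s (𝓕 fun x : V => (dampedBubble a e x : ℂ)) ≤ ENNReal.ofReal (Gamma a)⁻¹ ^ 2 *
      energy (volume.restrict (Set.Ioi 0))
        (fun t t' => ENNReal.ofReal (gaussianPairing (Module.finrank ℝ V) s (t + e) (t' + e)))
        (gammaDensity a) := by
  let g (ξ : V) (t : ℝ) : ℝ≥0∞ := ENNReal.ofReal (gaussianKernel (t + e) ξ 0)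
  have hg : Measurable (Function.uncurry g) := by
    simp only [g, gaussianKernel, Function.uncurry_def]
    fun_prop
  let w (ξ : V) : ℝ≥0∞ := ENNReal.ofReal ((2 * π * ‖ξ‖) ^ s)
  have hk : Measurable fun p : (V × ℝ) × ℝ => w p.1.1 * (g p.1.1 p.1.2 * g p.1.1 p.2) := by
    simp only [w, g, gaussianKernel]
    fun_prop
  calc weightedNormSq s (𝓕 fun x : V => (dampedBubble a e x : ℂ))
      ≤ ∫⁻ ξ, ENNReal.ofReal (Gamma a)⁻¹ ^ 2 * energy (volume.restrict (Set.Ioi 0))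
          (fun t t' => w ξ * (g ξ t * g ξ t')) (gammaDensity a) := by
        refine lintegral_mono fun ξ => ?_
        rw [energy_const_mul_kernel ENNReal.ofReal_ne_top, energy_mul_kernel (by fun_prop)
          hg.of_uncurry_left, mul_left_comm, ← mul_pow]
        gcongr
        exact enorm_fourier_dampedBubble_le ha he ξ
    _ = ENNReal.ofReal (Gamma a)⁻¹ ^ 2 * energy (volume.restrict (Set.Ioi 0))
          (fun t t' => ∫⁻ ξ, w ξ * (g ξ t * g ξ t')) (gammaDensity a) := by
        rw [lintegral_const_mul' _ _ (by finiteness), energy_lintegral_kernel hk (by fun_prop)]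
    _ = _ := by
        congr 1
        refine energy_restrict_congr measurableSet_Ioi fun t (ht : 0 < t) t' (ht' : 0 < t') => ?_
        exact congrArg (_ * ·) (lintegral_gaussianKernel_mul hs (add_pos ht he) (add_pos ht' he))

end FourierBubble

section GammaDensity

lemma gammaDensity_mul_rpow (a b : ℝ) {t : ℝ} (ht : 0 < t) :
    gammaDensity a t * ENNReal.ofReal (t ^ b) = gammaDensity (a + b) t := by
  rw [gammaDensity, gammaDensity, ← ENNReal.ofReal_mul (by positivity), mul_right_comm,
    ← rpow_add ht, sub_add_eq_add_sub]

lemma lintegral_gammaDensity_mul_exp {a u : ℝ} (ha : 0 < a) (hu : 0 ≤ u) :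
    ∫⁻ t in Set.Ioi (0 : ℝ), gammaDensity a t * ENNReal.ofReal (exp (-(u * t))) =
      ENNReal.ofReal (Gamma a * (1 + u) ^ (-a)) := by
  rw [← lintegral_rpow_mul_exp_neg_mul_Ioi ha (by positivity)]
  refine setLIntegral_congr_fun measurableSet_Ioi fun t (ht : 0 < t) => ?_
  rw [gammaDensity, ← ENNReal.ofReal_mul (by positivity), mul_assoc, ← exp_add]
  ring_nf

lemma lintegral_gammaDensity {a : ℝ} (ha : 0 < a) :
    ∫⁻ t in Set.Ioi (0 : ℝ), gammaDensity a t = ENNReal.ofReal (Gamma a) := by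
  simpa using lintegral_gammaDensity_mul_exp ha le_rfl

lemma lintegral_rpow_mul_one_add_rpow_neg {c m : ℝ} (hc : 0 < c) (hm : c < m) :
    ∫⁻ u in Set.Ioi (0 : ℝ), ENNReal.ofReal (u ^ (c - 1) * (1 + u) ^ (-m)) =
      ENNReal.ofReal (Gamma c * Gamma (m - c) / Gamma m) := by
  have hΓm := Gamma_pos_of_pos (hc.trans hm)
  have hΓc := Gamma_pos_of_pos hc
  have hmul : ENNReal.ofReal (Gamma m) *
      ∫⁻ u in Set.Ioi (0 : ℝ), ENNReal.ofReal (u ^ (c - 1) * (1 + u) ^ (-m)) =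
        ENNReal.ofReal (Gamma c * Gamma (m - c)) :=
    calc _ = ∫⁻ u in Set.Ioi (0 : ℝ), ∫⁻ t in Set.Ioi (0 : ℝ),
            ENNReal.ofReal (u ^ (c - 1)) *
              (gammaDensity m t * ENNReal.ofReal (exp (-(u * t)))) := by
          rw [← lintegral_const_mul' _ _ ENNReal.ofReal_ne_top]
          refine setLIntegral_congr_fun measurableSet_Ioi fun u (hu : 0 < u) => ?_
          rw [lintegral_const_mul' _ _ ENNReal.ofReal_ne_top,
            lintegral_gammaDensity_mul_exp (hc.trans hm) hu.le, ← ENNReal.ofReal_mul hΓm.le,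
            ← ENNReal.ofReal_mul (by positivity), mul_left_comm]
      _ = ∫⁻ t in Set.Ioi (0 : ℝ), ∫⁻ u in Set.Ioi (0 : ℝ),
            gammaDensity m t * ENNReal.ofReal (u ^ (c - 1) * exp (-(t * u))) := by
          rw [lintegral_lintegral_swap (Measurable.aemeasurable (by fun_prop))]
          refine lintegral_congr fun t => setLIntegral_congr_fun measurableSet_Ioi
            fun u (hu : 0 < u) => ?_
          rw [ENNReal.ofReal_mul (by positivity), mul_left_comm, mul_comm u]
      _ = ∫⁻ t in Set.Ioi (0 : ℝ), ENNReal.ofReal (Gamma c) * gammaDensity (m - c) t := by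
          refine setLIntegral_congr_fun measurableSet_Ioi fun t (ht : 0 < t) => ?_
          rw [lintegral_const_mul' _ _ (by simp [gammaDensity]),
            lintegral_rpow_mul_exp_neg_mul_Ioi hc ht, ENNReal.ofReal_mul hΓc.le, mul_left_comm,
            gammaDensity_mul_rpow m (-c) ht, sub_eq_add_neg]
      _ = _ := by
          rw [lintegral_const_mul' _ _ ENNReal.ofReal_ne_top, lintegral_gammaDensity (sub_pos.2 hm),
            ENNReal.ofReal_mul hΓc.le]
  rw [ENNReal.ofReal_div_of_pos hΓm, ← hmul,
    ENNReal.eq_div_iff (by simpa using hΓm) ENNReal.ofReal_ne_top]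

/-- Write the kernel as the Laplace transform of a power. -/
lemma ofReal_Gamma_mul_energy_add_rpow_neg {c : ℝ} (hc : 0 < c) {g : ℝ → ℝ≥0∞}
    (hg : Measurable g) :
    ENNReal.ofReal (Gamma c) * energy (volume.restrict (Set.Ioi 0))
        (fun t t' => ENNReal.ofReal ((t + t') ^ (-c))) g =
      ∫⁻ u in Set.Ioi (0 : ℝ), ENNReal.ofReal (u ^ (c - 1)) *
        (∫⁻ t in Set.Ioi (0 : ℝ), g t * ENNReal.ofReal (exp (-(u * t)))) ^ 2 := by
  have hΓ := Gamma_pos_of_pos hc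
  let w (u t : ℝ) : ℝ≥0∞ := ENNReal.ofReal (exp (-(u * t)))
  calc _ = energy (volume.restrict (Set.Ioi 0)) (fun t t' => ∫⁻ u in Set.Ioi (0 : ℝ),
          ENNReal.ofReal (u ^ (c - 1)) * (w u t * w u t')) g := by
        rw [← energy_const_mul_kernel ENNReal.ofReal_ne_top]
        refine energy_restrict_congr measurableSet_Ioi
          fun t (ht : 0 < t) t' (ht' : 0 < t') => congrArg (HMul.hMul _) ?_
        rw [← ENNReal.ofReal_mul hΓ.le, ← lintegral_rpow_mul_exp_neg_mul_Ioi hc (add_pos ht ht')]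
        refine setLIntegral_congr_fun measurableSet_Ioi fun u (hu : 0 < u) => ?_
        rw [← ENNReal.ofReal_mul (by positivity), ← exp_add, ← ENNReal.ofReal_mul (by positivity)]
        ring_nf
    _ = _ := by
        rw [← energy_lintegral_kernel (by fun_prop) hg]
        refine lintegral_congr fun u => ?_
        rw [energy_const_mul_kernel ENNReal.ofReal_ne_top, energy_mul_kernel hg (by fun_prop)]

lemma energy_add_rpow_neg_gammaDensity {c h : ℝ} (hc : 0 < c) (hh : c < 2 * h) :
    energy (volume.restrict (Set.Ioi 0)) (fun t t' => ENNReal.ofReal ((t + t') ^ (-c)))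
        (gammaDensity h) =
      ENNReal.ofReal (Gamma h ^ 2 * Gamma (2 * h - c) / Gamma (2 * h)) := by
  have hΓc := Gamma_pos_of_pos hc
  have hΓh := Gamma_pos_of_pos (by linarith : 0 < h)
  have hinner (u : ℝ) (hu : 0 < u) : ENNReal.ofReal (u ^ (c - 1)) *
      (∫⁻ t in Set.Ioi (0 : ℝ), gammaDensity h t * ENNReal.ofReal (exp (-(u * t)))) ^ 2 =
        ENNReal.ofReal (Gamma h ^ 2) * ENNReal.ofReal (u ^ (c - 1) * (1 + u) ^ (-(2 * h))) := by
    have hsq : (1 + u) ^ (-(2 * h)) = ((1 + u) ^ (-h)) ^ 2 := by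
      rw [← rpow_mul_natCast (by positivity)]
      ring_nf
    rw [lintegral_gammaDensity_mul_exp (by linarith) hu.le, ← ENNReal.ofReal_pow (by positivity),
      ← ENNReal.ofReal_mul (by positivity), ← ENNReal.ofReal_mul (by positivity), hsq]
    ring_nf
  rw [← ENNReal.mul_right_inj (by simpa using hΓc) ENNReal.ofReal_ne_top,
    ofReal_Gamma_mul_energy_add_rpow_neg hc (by fun_prop),
    setLIntegral_congr_fun measurableSet_Ioi hinner,
    lintegral_const_mul' _ _ ENNReal.ofReal_ne_top, lintegral_rpow_mul_one_add_rpow_neg hc hh,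
    ← ENNReal.ofReal_mul (by positivity), ← ENNReal.ofReal_mul hΓc.le]
  ring_nf

end GammaDensity

section PairingLimit

lemma mul_rpow_mul_add_rpow_neg_le {x y r : ℝ} (p : ℝ) (hx : 0 < x) (hy : 0 < y) (hr : 0 ≤ r) :
    (x * y) ^ p * (x + y) ^ (-r) ≤ (x * y) ^ (p - r / 2) := by
  have hsqrt : √(x * y) ≤ x + y := by
    rw [sqrt_le_left (by positivity)]
    nlinarith
  calc _ ≤ (x * y) ^ p * √(x * y) ^ (-r) := by
        gcongr ?_ * ?_
        exact rpow_le_rpow_of_nonpos (by positivity) hsqrt (by linarith)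
    _ = _ := by
        rw [sqrt_eq_rpow, ← rpow_mul (by positivity), ← rpow_add (by positivity)]
        ring_nf

lemma gaussianPairing_add_le {n : ℕ} {s e t t' : ℝ} (hs : |s| ≤ n) (he : 0 ≤ e) (ht : 0 < t)
    (ht' : 0 < t') :
    gaussianPairing n s (t + e) (t' + e) ≤
      gaussianPairingConst n s * (t ^ (-((n - s) / 4)) * t' ^ (-((n - s) / 4))) := by
  obtain ⟨hsn, hns⟩ := abs_le.1 hs
  refine mul_le_mul_of_nonneg_left ?_ (gaussianPairingConst_nonneg hsn)
  calc _ ≤ ((t + e) * (t' + e)) ^ (s / 2 - ((n : ℝ) + s) / 2 / 2) :=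
        mul_rpow_mul_add_rpow_neg_le _ (by positivity) (by positivity) (by linarith)
    _ = ((t + e) * (t' + e)) ^ (-(((n : ℝ) - s) / 4)) := by ring_nf
    _ ≤ (t * t') ^ (-(((n : ℝ) - s) / 4)) := by
        refine rpow_le_rpow_of_nonpos (by positivity) ?_ (by linarith)
        gcongr <;> linarith
    _ = _ := mul_rpow ht.le ht'.le

lemma tendsto_energy_of_dominated {X ι : Type*} [MeasurableSpace X] {μ : Measure X} [SFinite μ]
    {l : Filter ι} [l.IsCountablyGenerated] {k : ι → X → X → ℝ≥0∞} {k₀ K : X → X → ℝ≥0∞}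
    {u : X → ℝ≥0∞} (hk : ∀ i, Measurable (Function.uncurry (k i)))
    (hk₀ : Measurable (Function.uncurry k₀)) (hK : Measurable (Function.uncurry K))
    (hu : Measurable u) (hu_top : ∀ x, u x ≠ ∞)
    (hkK : ∀ᶠ i in l, ∀ᵐ p ∂μ.prod μ, k i p.1 p.2 ≤ K p.1 p.2) (hK_top : energy μ K u ≠ ∞)
    (hlim : ∀ᵐ p ∂μ.prod μ, Tendsto (fun i => k i p.1 p.2) l (𝓝 (k₀ p.1 p.2))) :
    Tendsto (fun i => energy μ (k i) u) l (𝓝 (energy μ k₀ u)) := by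
  have hmeas {κ : X → X → ℝ≥0∞} (hκ : Measurable (Function.uncurry κ)) :
      Measurable fun p : X × X => u p.1 * u p.2 * κ p.1 p.2 :=
    ((hu.comp measurable_fst).mul (hu.comp measurable_snd)).mul hκ
  have henergy {κ : X → X → ℝ≥0∞} (hκ : Measurable (Function.uncurry κ)) :
      energy μ κ u = ∫⁻ p, u p.1 * u p.2 * κ p.1 p.2 ∂μ.prod μ :=
    (lintegral_prod _ (hmeas hκ).aemeasurable).symm
  simp only [henergy (hk _), henergy hk₀]
  refine tendsto_lintegral_filter_of_dominated_convergence
    (fun p => u p.1 * u p.2 * K p.1 p.2) (Eventually.of_forall fun i => hmeas (hk i)) ?_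
    (henergy hK ▸ hK_top) ?_
  · filter_upwards [hkK] with i hi
    filter_upwards [hi] with p hp
    gcongr
  · filter_upwards [hlim] with p hp
    exact ENNReal.Tendsto.const_mul hp (Or.inr (ENNReal.mul_ne_top (hu_top _) (hu_top _)))

lemma measurable_gaussianPairing (n : ℕ) (s e : ℝ) : Measurable
    (Function.uncurry fun t t' => ENNReal.ofReal (gaussianPairing n s (t + e) (t' + e))) := by
  simp only [gaussianPairing, Function.uncurry_def]
  fun_prop

theorem tendsto_energy_gaussianPairing {n : ℕ} {s a : ℝ} (hs : |s| ≤ n)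
    (ha : ((n : ℝ) - s) / 4 < a) :
    Tendsto (fun e => energy (volume.restrict (Set.Ioi 0))
        (fun t t' => ENNReal.ofReal (gaussianPairing n s (t + e) (t' + e))) (gammaDensity a))
      (𝓝[>] 0) (𝓝 (energy (volume.restrict (Set.Ioi 0))
        (fun t t' => ENNReal.ofReal (gaussianPairing n s t t')) (gammaDensity a))) := by
  have hpos : ∀ᵐ p : ℝ × ℝ ∂(volume.restrict (Set.Ioi 0)).prod (volume.restrict (Set.Ioi 0)),
      0 < p.1 ∧ 0 < p.2 := by
    rw [Measure.prod_restrict]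
    exact ae_restrict_mem (measurableSet_Ioi.prod measurableSet_Ioi)
  let v (t : ℝ) : ℝ≥0∞ := ENNReal.ofReal (t ^ (-(((n : ℝ) - s) / 4)))
  have hv : ∫⁻ t in Set.Ioi (0 : ℝ), gammaDensity a t * v t ≠ ∞ := by
    rw [setLIntegral_congr_fun measurableSet_Ioi fun t ht => gammaDensity_mul_rpow a _ ht,
      lintegral_gammaDensity (by linarith)]
    exact ENNReal.ofReal_ne_top
  refine tendsto_energy_of_dominated
    (K := fun t t' => ENNReal.ofReal (gaussianPairingConst n s) * (v t * v t'))
    (measurable_gaussianPairing n s) (by simpa using measurable_gaussianPairing n s 0)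
    (by fun_prop) (by fun_prop) (fun t => ENNReal.ofReal_ne_top) ?_ ?_ ?_
  · filter_upwards [self_mem_nhdsWithin] with e (he : 0 < e)
    filter_upwards [hpos] with p ⟨hp1, hp2⟩
    rw [← ENNReal.ofReal_mul (by positivity),
      ← ENNReal.ofReal_mul (gaussianPairingConst_nonneg (abs_le.1 hs).1)]
    exact ENNReal.ofReal_le_ofReal (gaussianPairing_add_le hs he.le hp1 hp2)
  · rw [energy_const_mul_kernel ENNReal.ofReal_ne_top,
      energy_mul_kernel (by fun_prop) (by fun_prop)]
    finiteness
  · filter_upwards [hpos] with p ⟨hp1, hp2⟩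
    have hcont : ContinuousAt (fun e => gaussianPairing n s (p.1 + e) (p.2 + e)) 0 := by
      unfold gaussianPairing
      refine continuousAt_const.mul (.mul (.rpow_const (by fun_prop) (Or.inl ?_))
        (.rpow_const (by fun_prop) (Or.inl ?_))) <;> rw [add_zero, add_zero] <;> positivity
    have hlim := (ENNReal.continuous_ofReal.continuousAt.comp hcont).tendsto
    simp only [Function.comp_def, add_zero] at hlim
    exact hlim.mono_left nhdsWithin_le_nhds

end PairingLimit

section Bubble

lemma integral_bracketSq_rpow_neg {V : Type*} [NormedAddCommGroup V] [InnerProductSpace ℝ V]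
    [FiniteDimensional ℝ V] [MeasurableSpace V] [BorelSpace V] {a : ℝ}
    (ha : (Module.finrank ℝ V : ℝ) / 2 < a) :
    ∫ x : V, bracketSq x ^ (-a) = bracketIntegral (Module.finrank ℝ V) a := by
  rw [integral_eq_lintegral_of_nonneg_ae
    (Eventually.of_forall fun x => rpow_nonneg (bracketSq_pos x).le _)
    (integrable_bracketSq_rpow_neg ha).aestronglyMeasurable, lintegral_bracketSq_rpow_neg ha,
    ENNReal.toReal_ofReal (bracketIntegral_pos ha).le]

lemma dampedBubble_rpow {V : Type*} [NormedAddCommGroup V] (a e q : ℝ) (x : V) :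
    dampedBubble a e x ^ q = bracketSq x ^ (-(a * q)) * exp (-e * ‖x‖ ^ 2) ^ q := by
  rw [dampedBubble, mul_rpow (rpow_nonneg (bracketSq_pos x).le _) (exp_pos _).le,
    ← rpow_mul (bracketSq_pos x).le, neg_mul]

theorem tendsto_integral_dampedBubble_rpow {V : Type*} [NormedAddCommGroup V]
    [InnerProductSpace ℝ V] [FiniteDimensional ℝ V] [MeasurableSpace V] [BorelSpace V] {a q : ℝ}
    (hq : 0 ≤ q) (ha : (Module.finrank ℝ V : ℝ) / 2 < a * q) :
    Tendsto (fun e => ∫ x : V, dampedBubble a e x ^ q) (𝓝[>] 0)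
      (𝓝 (bracketIntegral (Module.finrank ℝ V) (a * q))) := by
  simp only [← integral_bracketSq_rpow_neg ha, dampedBubble_rpow]
  refine tendsto_integral_filter_of_dominated_convergence _
    (Eventually.of_forall fun e => Measurable.aestronglyMeasurable (by fun_prop)) ?_
    (integrable_bracketSq_rpow_neg ha) (Eventually.of_forall fun x => ?_)
  · filter_upwards [self_mem_nhdsWithin] with e (he : 0 < e)
    refine Eventually.of_forall fun x => ?_
    have hx := bracketSq_pos x
    rw [norm_of_nonneg (by positivity)]
    refine mul_le_of_le_one_right (by positivity) (rpow_le_one (by positivity) ?_ hq)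
    rw [exp_le_one_iff, neg_mul, neg_nonpos]
    positivity
  · have hcont : Continuous fun e : ℝ => bracketSq x ^ (-(a * q)) * exp (-e * ‖x‖ ^ 2) ^ q :=
      continuous_const.mul (Continuous.rpow_const (by fun_prop) fun e => Or.inr hq)
    simpa using (hcont.tendsto 0).mono_left nhdsWithin_le_nhds

variable {n : ℕ} {s : ℝ}

/-- The squared homogeneous Sobolev norm of order `s / 2` of the extremal function
`bracketSq x ^ (-((n - s) / 2))`. -/
noncomputable def bubbleNormSq (n : ℕ) (s : ℝ) : ℝ :=
  2 ^ s * bracketIntegral n n * Gamma ((n + s) / 2) / Gamma ((n - s) / 2)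

lemma bubbleNormSq_pos (hs : |s| < n) : 0 < bubbleNormSq n s := by
  obtain ⟨hsn, hns⟩ := abs_lt.1 hs
  have := Gamma_pos_of_pos (by linarith : 0 < ((n : ℝ) + s) / 2)
  have := Gamma_pos_of_pos (by linarith : 0 < ((n : ℝ) - s) / 2)
  have := bracketIntegral_pos (half_lt_self (by linarith : 0 < (n : ℝ)))
  unfold bubbleNormSq
  positivity

lemma energy_gaussianPairing (hs : |s| < n) :
    ENNReal.ofReal (Gamma ((n - s) / 2))⁻¹ ^ 2 * energy (volume.restrict (Set.Ioi 0))
        (fun t t' => ENNReal.ofReal (gaussianPairing n s t t')) (gammaDensity ((n - s) / 2)) =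
      ENNReal.ofReal (bubbleNormSq n s) := by
  obtain ⟨hsn, hns⟩ := abs_lt.1 hs
  have hn : 0 < (n : ℝ) := by linarith
  have := Gamma_pos_of_pos (by linarith : 0 < ((n : ℝ) - s) / 2)
  have := Gamma_pos_of_pos (half_pos hn)
  have := Gamma_pos_of_pos hn
  have hC := gaussianPairingConst_nonneg hsn.le
  have hdensity {t : ℝ} (ht : 0 < t) :
      gammaDensity ((n - s) / 2) t * ENNReal.ofReal (t ^ (s / 2)) = gammaDensity (n / 2) t := by
    rw [gammaDensity_mul_rpow _ _ ht]
    ring_nf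
  have henergy : energy (volume.restrict (Set.Ioi 0))
      (fun t t' => ENNReal.ofReal (gaussianPairing n s t t')) (gammaDensity ((n - s) / 2)) =
        ENNReal.ofReal (gaussianPairingConst n s) * energy (volume.restrict (Set.Ioi 0))
          (fun t t' => ENNReal.ofReal ((t + t') ^ (-(((n : ℝ) + s) / 2))))
          (gammaDensity (n / 2)) := by
    rw [← energy_const_mul_kernel ENNReal.ofReal_ne_top]
    refine energy_restrict_congr measurableSet_Ioi fun t (ht : 0 < t) t' (ht' : 0 < t') => ?_
    rw [← hdensity ht, ← hdensity ht', gaussianPairing, ENNReal.ofReal_mul hC,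
      ENNReal.ofReal_mul (by positivity), mul_rpow ht.le ht'.le, ENNReal.ofReal_mul (by positivity)]
    ring
  have hgamma : 2 * ((n : ℝ) / 2) - (n + s) / 2 = (n - s) / 2 := by ring
  rw [henergy, energy_add_rpow_neg_gammaDensity (by linarith) (by linarith), hgamma,
    mul_div_cancel₀ (n : ℝ) two_ne_zero, ← ENNReal.ofReal_pow (by positivity),
    ← ENNReal.ofReal_mul hC, ← ENNReal.ofReal_mul (by positivity), bubbleNormSq, bracketIntegral,
    gaussianPairingConst, sub_half]
  field_simp

lemma sharpConst_mul_bubbleNormSq (hs : |s| < n) :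
    sharpConst n s * bubbleNormSq n s = bracketIntegral n n ^ (2 / (2 * n / (n - s))) := by
  obtain ⟨hsn, hns⟩ := abs_lt.1 hs
  have hn : 0 < (n : ℝ) := by linarith
  have : 0 < (n : ℝ) - s := sub_pos.2 hns
  have := Gamma_pos_of_pos (by linarith : 0 < ((n : ℝ) + s) / 2)
  have := Gamma_pos_of_pos (by linarith : 0 < ((n : ℝ) - s) / 2)
  have hexp : 2 / (2 * n / (n - s)) = 1 + -(s / n) := by
    field_simp
    ring
  have htwo : -(n : ℝ) * -(s / n) = s := by field_simp
  have harea : bracketIntegral n n ^ (-(s / n)) = 2 ^ s * sphereArea n ^ (-(s / n)) := by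
    rw [bracketIntegral_self (Nat.cast_pos.1 hn).ne',
      mul_rpow (by positivity) (sphereArea_pos n).le, ← rpow_mul zero_le_two, htwo]
  rw [hexp, rpow_add (bracketIntegral_pos (half_lt_self hn)), rpow_one, harea, sharpConst,
    bubbleNormSq]
  field_simp

end Bubble

section Sharpness

variable {n : ℕ} {s : ℝ}

lemma sharpConst_pos (hs : |s| < n) : 0 < sharpConst n s := by
  obtain ⟨hsn, hns⟩ := abs_lt.1 hs
  have := Gamma_pos_of_pos (by linarith : 0 < ((n : ℝ) + s) / 2)
  have := Gamma_pos_of_pos (by linarith : 0 < ((n : ℝ) - s) / 2)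
  have := sphereArea_pos n
  unfold sharpConst
  positivity

lemma ofReal_rpow_integral_dampedBubble_le (hs : s ∈ Set.Ioo (0 : ℝ) n) {S p q : ℝ} (hS : 0 ≤ S)
    (h : ∀ f : 𝓢(EuclideanSpace ℝ (Fin n), ℝ),
      (∫ x, |f x| ^ q) ^ p ≤ S * homogSobolevNormSq n s f)
    {a e : ℝ} (ha : 0 < a) (he : 0 < e) :
    ENNReal.ofReal ((∫ x : EuclideanSpace ℝ (Fin n), dampedBubble a e x ^ q) ^ p) ≤
      ENNReal.ofReal S * (ENNReal.ofReal (Gamma a)⁻¹ ^ 2 * energy (volume.restrict (Set.Ioi 0))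
        (fun t t' => ENNReal.ofReal (gaussianPairing n s (t + e) (t' + e))) (gammaDensity a)) := by
  have : NeZero n := ⟨(Nat.cast_pos.1 (hs.1.trans hs.2)).ne'⟩
  obtain ⟨f, hf⟩ := exists_schwartzMap_eq_dampedBubble (V := EuclideanSpace ℝ (Fin n)) a he
  have hn : (0 : ℝ) < n := hs.1.trans hs.2
  have hnorm := weightedNormSq_fourier_dampedBubble_le (V := EuclideanSpace ℝ (Fin n)) ha he
    (s := s) (by rw [finrank_euclideanSpace_fin]; linarith [hs.1])
  have hfS := h f
  simp only [hf, abs_of_nonneg (dampedBubble_nonneg _ _ _)] at hfS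
  simp only [← hf, weightedNormSq_fourier_ofReal hs.1, finrank_euclideanSpace_fin] at hnorm
  calc _ ≤ ENNReal.ofReal (S * homogSobolevNormSq n s f) := ENNReal.ofReal_le_ofReal hfS
    _ = ENNReal.ofReal S * ENNReal.ofReal (homogSobolevNormSq n s f) := ENNReal.ofReal_mul hS
    _ ≤ _ := by gcongr

theorem sharpConst_le_of_forall_rpow_integral_le (hs : s ∈ Set.Ioo (0 : ℝ) n) {S : ℝ} (hS : 0 ≤ S)
    (h : ∀ f : 𝓢(EuclideanSpace ℝ (Fin n), ℝ), (∫ x, |f x| ^ (2 * n / (n - s))) ^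
      (2 / (2 * n / (n - s))) ≤ S * homogSobolevNormSq n s f) :
    sharpConst n s ≤ S := by
  have habs : |s| < n := by rw [abs_of_pos hs.1]; exact hs.2
  obtain ⟨hs0, hsn⟩ := hs
  have hn : (0 : ℝ) < n := hs0.trans hsn
  have hns : 0 < (n : ℝ) - s := sub_pos.2 hsn
  have haq : ((n : ℝ) - s) / 2 * (2 * n / (n - s)) = n := by field_simp
  have hleft := (ENNReal.continuous_ofReal.tendsto _).comp
    ((tendsto_integral_dampedBubble_rpow (V := EuclideanSpace ℝ (Fin n)) (a := ((n : ℝ) - s) / 2)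
      (q := 2 * n / (n - s)) (by positivity)
      (by rw [haq, finrank_euclideanSpace_fin]; exact half_lt_self hn)).rpow_const
        (p := 2 / (2 * n / (n - s))) (Or.inr (by positivity)))
  have hright := ENNReal.Tendsto.const_mul (a := ENNReal.ofReal S) (ENNReal.Tendsto.const_mul
    (a := ENNReal.ofReal (Gamma (((n : ℝ) - s) / 2))⁻¹ ^ 2)
    (tendsto_energy_gaussianPairing habs.le (by linarith : ((n : ℝ) - s) / 4 < (n - s) / 2))
    (Or.inr (by finiteness))) (Or.inr (by finiteness))
  have hle := le_of_tendsto_of_tendsto hleft hright <| by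
    filter_upwards [self_mem_nhdsWithin] with e he
    exact ofReal_rpow_integral_dampedBubble_le ⟨hs0, hsn⟩ hS h (half_pos hns) he
  have hB := bubbleNormSq_pos habs
  rw [haq, finrank_euclideanSpace_fin, energy_gaussianPairing habs, ← ENNReal.ofReal_mul hS,
    ENNReal.ofReal_le_ofReal_iff (by positivity), ← sharpConst_mul_bubbleNormSq habs] at hle
  exact le_of_mul_le_mul_right hle hB

theorem exists_not_rpow_integral_le (hs : s ∈ Set.Ioo (0 : ℝ) n) {S : ℝ}
    (hS : S < sharpConst n s) :
    ∃ f : 𝓢(EuclideanSpace ℝ (Fin n), ℝ), ¬((∫ x, |f x| ^ (2 * n / (n - s))) ^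
      (2 / (2 * n / (n - s))) ≤ S * homogSobolevNormSq n s f) := by
  have habs : |s| < n := by rw [abs_of_pos hs.1]; exact hs.2
  by_contra! h
  refine (max_lt hS (sharpConst_pos habs)).not_ge <|
    sharpConst_le_of_forall_rpow_integral_le hs (le_max_right _ _) fun f => (h f).trans ?_
  have := homogSobolevNormSq_nonneg n s f
  gcongr
  exact le_max_left _ _

end Sharpness

end SharpSobolev

/-- Sharp fractional Sobolev inequality on `ℝⁿ`, with optimality of the
constant `S_{n,s}`. -/
theorem sharp_fractional_sobolev (n : ℕ) (hn : 1 ≤ n) (s qstar Sns : ℝ)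
    (hs : s ∈ Set.Ioo (0 : ℝ) (n : ℝ))
    (hqstar : qstar = 2 * n / (n - s))
    (hSns : Sns = Gamma ((n - s) / 2) / Gamma ((n + s) / 2) *
      (2 * π ^ (((n : ℝ) + 1) / 2) / Gamma (((n : ℝ) + 1) / 2)) ^ (-(s / n))) :
    (∀ f : SchwartzMap (EuclideanSpace ℝ (Fin n)) ℝ,
      (∫ x : EuclideanSpace ℝ (Fin n), |f x| ^ qstar) ^ (2 / qstar)
        ≤ Sns * homogSobolevNormSq n s f) ∧
    (∀ S : ℝ, S < Sns →
      ∃ f : SchwartzMap (EuclideanSpace ℝ (Fin n)) ℝ,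
        ¬ ((∫ x : EuclideanSpace ℝ (Fin n), |f x| ^ qstar) ^ (2 / qstar)
            ≤ S * homogSobolevNormSq n s f)) := by
  subst hqstar hSns
  exact ⟨fun f => SharpSobolev.rpow_integral_le_sharpConst_mul hs f rfl,
    fun S hS => SharpSobolev.exists_not_rpow_integral_le hs hS⟩
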